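/- arXiv:1506.00143 — 3 statements merged into one kernel-verified Lean document; each statement's English description precedes it below -/
import Mathlib

section
/- Let d be a positive integer and let S = {S_k ≤ Sym({1,…,m_k})}_{k∈ℕ} be a sequence of finite transitive permutation groups such that each S_k is perfect and can be generated by at most d elements as an abstract group. Suppose that for every k ∈ ℕ there exist points i, j ∈ {1,…,m_k} whose stabilizers in S_k are distinct, i.e. St_{S_k}(i) ≠ St_{S_k}(j). Then the infinitely iterated exponentiation lim← S̃_k of the sequence is topologically finitely generated; more precisely, it is topologically generated by d + d(S_1) elements. -/
open Equiv

/-- The product-action permutation of `β → α` induced by `a : β → Perm α` and `b : Perm β`. -/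
def prodPerm {α β : Type} (a : β → Perm α) (b : Perm β) : Perm (β → α) where
  toFun x := fun i => a i (x (b⁻¹ i))
  invFun x := fun i => (a (b i))⁻¹ (x (b i))
  left_inv x := by funext i; simp
  right_inv x := by funext i; simp

@[simp] theorem prodPerm_apply {α β : Type} (a : β → Perm α) (b : Perm β) (x : β → α) (i : β) :
    prodPerm a b x i = a i (x (b⁻¹ i)) := rfl

theorem prodPerm_one {α β : Type} :
    prodPerm (fun _ : β => (1 : Perm α)) 1 = 1 := by
  apply Equiv.ext; intro x; funext i; simp

theorem prodPerm_mul {α β : Type} (a a' : β → Perm α) (b b' : Perm β) :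
    prodPerm a b * prodPerm a' b' = prodPerm (fun i => a i * a' (b⁻¹ i)) (b * b') := by
  apply Equiv.ext; intro x; funext i
  simp [Perm.mul_apply, mul_inv_rev]

theorem prodPerm_inv {α β : Type} (a : β → Perm α) (b : Perm β) :
    (prodPerm a b)⁻¹ = prodPerm (fun i => (a (b i))⁻¹) b⁻¹ := by
  apply Equiv.ext; intro x; funext i
  simp [prodPerm, Perm.inv_def]

/-- The exponentiation `A ⟨≀⟩ B` of permutation groups, as a subgroup of `Perm (β → α)`
acting by the product action. -/
def expWr {α β : Type} (A : Subgroup (Perm α)) (B : Subgroup (Perm β)) :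
    Subgroup (Perm (β → α)) where
  carrier := {π | ∃ (a : β → Perm α) (b : Perm β),
    (∀ i, a i ∈ A) ∧ b ∈ B ∧ π = prodPerm a b}
  one_mem' := ⟨fun _ => 1, 1, fun _ => A.one_mem, B.one_mem, prodPerm_one.symm⟩
  mul_mem' := by
    rintro π π' ⟨a, b, ha, hb, rfl⟩ ⟨a', b', ha', hb', rfl⟩
    exact ⟨fun i => a i * a' (b⁻¹ i), b * b',
      fun i => A.mul_mem (ha i) (ha' _), B.mul_mem hb hb', prodPerm_mul a a' b b'⟩
  inv_mem' := by
    rintro π ⟨a, b, ha, hb, rfl⟩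
    exact ⟨fun i => (a (b i))⁻¹, b⁻¹,
      fun i => A.inv_mem (ha _), B.inv_mem hb, prodPerm_inv a b⟩

/-- A bundled permutation group: a set together with a subgroup of its permutation group. -/
structure PermGroup where
  carrier : Type
  grp : Subgroup (Perm carrier)

/-- Exponentiation of bundled permutation groups. -/
def ExpP (A B : PermGroup) : PermGroup :=
  ⟨B.carrier → A.carrier, expWr A.grp B.grp⟩

/-- Iterated exponentiation of a sequence of permutation groups:
`S̃ 0 = S 0` and `S̃ (k+1) = S (k+1) ⟨≀⟩ S̃ k`. -/
def iterExpP (S : ℕ → PermGroup) : ℕ → PermGroup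
  | 0 => S 0
  | k + 1 => ExpP (S (k + 1)) (iterExpP S k)

/-- `π'` in `A ⟨≀⟩ P` projects to `π` in `P`. -/
def IsLift {A P : PermGroup} (π' : (ExpP A P).grp) (π : P.grp) : Prop :=
  ∃ a : P.carrier → Perm A.carrier, (∀ i, a i ∈ A.grp) ∧
    (π' : Perm (ExpP A P).carrier) = prodPerm a (π : Perm P.carrier)

theorem IsLift.one {A P : PermGroup} : IsLift (A := A) (P := P) 1 1 :=
  ⟨fun _ => 1, fun _ => A.grp.one_mem, by
    simp only [OneMemClass.coe_one]
    exact prodPerm_one.symm⟩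

theorem IsLift.mul {A P : PermGroup} {π₁ π₂ : (ExpP A P).grp} {ρ₁ ρ₂ : P.grp}
    (h₁ : IsLift π₁ ρ₁) (h₂ : IsLift π₂ ρ₂) : IsLift (π₁ * π₂) (ρ₁ * ρ₂) := by
  obtain ⟨a, ha, hEq⟩ := h₁
  obtain ⟨a', ha', hEq'⟩ := h₂
  exact ⟨fun i => a i * a' ((ρ₁ : Perm P.carrier)⁻¹ i),
    fun i => A.grp.mul_mem (ha i) (ha' _), by
      push_cast [hEq, hEq']
      exact prodPerm_mul a a' _ _⟩

theorem IsLift.inv {A P : PermGroup} {π₁ : (ExpP A P).grp} {ρ₁ : P.grp}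
    (h₁ : IsLift π₁ ρ₁) : IsLift π₁⁻¹ ρ₁⁻¹ := by
  obtain ⟨a, ha, hEq⟩ := h₁
  exact ⟨fun i => (a ((ρ₁ : Perm P.carrier) i))⁻¹,
    fun i => A.grp.inv_mem (ha _), by
      push_cast [hEq]
      exact prodPerm_inv a _⟩

/-- The inverse limit of the iterated exponentiations, realised as the subgroup of
compatible sequences in the product of all the finite levels. -/
def iterLimit (S : ℕ → PermGroup) : Subgroup (∀ k, (iterExpP S k).grp) where
  carrier := {f | ∀ k, IsLift (A := S (k + 1)) (P := iterExpP S k) (f (k + 1)) (f k)}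
  one_mem' := fun _ => IsLift.one
  mul_mem' := fun hf hg k => IsLift.mul (hf k) (hg k)
  inv_mem' := fun hf k => IsLift.inv (hf k)

/-- Each finite level carries the discrete topology; the limit then carries the subspace
topology of the product topology, i.e. the usual profinite topology. -/
instance (S : ℕ → PermGroup) (k : ℕ) : TopologicalSpace ((iterExpP S k).grp) := ⊥

/-- The minimal number of generators of a group. -/
noncomputable def minGens (G : Type*) [Group G] : ℕ :=
  sInf {r | ∃ T : Finset G, T.card = r ∧ Subgroup.closure (T : Set G) = ⊤}

namespace TA
variable {S : ℕ → PermGroup}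

abbrev Om (S : ℕ → PermGroup) (k : ℕ) : Type := (iterExpP S k).carrier

def lev (γ : iterLimit S) (k : ℕ) : Perm (Om S k) := (γ.1 k).1

theorem lev_mem (γ : iterLimit S) (k : ℕ) : lev γ k ∈ (iterExpP S k).grp := (γ.1 k).2

noncomputable def pt (γ : iterLimit S) (k : ℕ) : Om S k → (S (k + 1)).grp :=
  fun p => ⟨Classical.choose (γ.2 k) p, (Classical.choose_spec (γ.2 k)).1 p⟩

theorem lev_succ (γ : iterLimit S) (k : ℕ) :
    lev γ (k + 1) = prodPerm (fun p => (pt γ k p).1) (lev γ k) :=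
  (Classical.choose_spec (γ.2 k)).2

theorem lev_succ_apply (γ : iterLimit S) (k : ℕ) (f : Om S k → (S (k + 1)).carrier) (p : Om S k) :
    (show Om S k → (S (k + 1)).carrier from lev γ (k + 1) f) p
      = (pt γ k p).1 (f ((lev γ k)⁻¹ p)) := by
  rw [lev_succ]; rfl

theorem prodPerm_inj {α β : Type} {a a' : β → Perm α} {b : Perm β}
    (h : prodPerm a b = prodPerm a' b) : a = a' := by
  funext i
  ext t
  have := congrFun (congrArg (fun π : Perm (β → α) => π (fun _ => t)) h) i
  simpa using this

theorem pt_eq_of {γ : iterLimit S} {k : ℕ} {a : Om S k → (S (k + 1)).grp}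
    (h : lev γ (k + 1) = prodPerm (fun p => (a p).1) (lev γ k)) : pt γ k = a := by
  rw [lev_succ] at h
  have := prodPerm_inj h
  funext p
  exact Subtype.ext (congrFun this p)

@[simp] theorem lev_one (k : ℕ) : lev (1 : iterLimit S) k = 1 := rfl
@[simp] theorem lev_mul (γ δ : iterLimit S) (k : ℕ) : lev (γ * δ) k = lev γ k * lev δ k := rfl
@[simp] theorem lev_inv (γ : iterLimit S) (k : ℕ) : lev γ⁻¹ k = (lev γ k)⁻¹ := rfl

theorem pt_mul (γ δ : iterLimit S) (k : ℕ) (p : Om S k) :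
    pt (γ * δ) k p = pt γ k p * pt δ k ((lev γ k)⁻¹ p) := by
  have : pt (γ * δ) k = fun p => pt γ k p * pt δ k ((lev γ k)⁻¹ p) := by
    apply pt_eq_of
    rw [lev_mul, lev_succ, lev_succ, lev_mul]
    exact prodPerm_mul _ _ _ _
  rw [this]

theorem pt_inv (γ : iterLimit S) (k : ℕ) (p : Om S k) :
    pt γ⁻¹ k p = (pt γ k (lev γ k p))⁻¹ := by
  have : pt γ⁻¹ k = fun p => (pt γ k (lev γ k p))⁻¹ := by
    apply pt_eq_of
    rw [lev_inv, lev_succ, lev_inv]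
    exact prodPerm_inv _ _
  rw [this]

@[simp] theorem pt_one (k : ℕ) (p : Om S k) : pt (1 : iterLimit S) k p = 1 := by
  have : pt (1 : iterLimit S) k = fun _ => 1 := by
    apply pt_eq_of
    exact prodPerm_one.symm
  rw [this]

theorem lev_ext_upto {γ δ : iterLimit S} (h0 : lev γ 0 = lev δ 0) (n : ℕ)
    (h : ∀ k < n, ∀ p, pt γ k p = pt δ k p) : ∀ k ≤ n, lev γ k = lev δ k := by
  intro k
  induction k with
  | zero => intro _; exact h0
  | succ k ih =>
    intro hk
    rw [lev_succ, lev_succ, ih (by omega)]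
    congr 1
    funext p
    rw [h k (by omega)]

theorem lim_ext {γ δ : iterLimit S} (h0 : lev γ 0 = lev δ 0)
    (h : ∀ k p, pt γ k p = pt δ k p) : γ = δ := by
  apply Subtype.ext
  funext k
  exact Subtype.ext (lev_ext_upto h0 k (fun k _ p => h k p) k le_rfl)

def mkLev (s : (S 0).grp) (a : ∀ k, Om S k → (S (k + 1)).grp) : ∀ k, (iterExpP S k).grp
  | 0 => s
  | k + 1 => ⟨prodPerm (fun p => (a k p).1) (mkLev s a k).1,
      ⟨_, _, fun p => (a k p).2, (mkLev s a k).2, rfl⟩⟩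

def mk (s : (S 0).grp) (a : ∀ k, Om S k → (S (k + 1)).grp) : iterLimit S :=
  ⟨mkLev s a, fun k => ⟨fun p => (a k p).1, fun p => (a k p).2, rfl⟩⟩

@[simp] theorem pt_mk (s : (S 0).grp) (a : ∀ k, Om S k → (S (k + 1)).grp) (k : ℕ) :
    pt (mk s a) k = a k := pt_eq_of rfl

@[simp] theorem lev_mk_zero (s : (S 0).grp) (a : ∀ k, Om S k → (S (k + 1)).grp) :
    lev (mk s a) 0 = s.1 := rfl

def Low (k : ℕ) (γ : iterLimit S) : Prop := ∀ j ≤ k, lev γ j = 1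
def Tr (k : ℕ) (γ : iterLimit S) : Prop := ∀ j, k ≤ j → ∀ p, pt γ j p = 1

theorem Low.pt {k : ℕ} {γ : iterLimit S} (h : Low k γ) {j : ℕ} (hj : j < k) (p : Om S j) :
    pt γ j p = 1 := by
  have : TA.pt γ j = fun _ => 1 := by
    apply pt_eq_of
    rw [h (j+1) hj, h j hj.le]
    exact prodPerm_one.symm
  rw [this]

theorem Low.mul {k : ℕ} {γ δ : iterLimit S} (h : Low k γ) (h' : Low k δ) : Low k (γ * δ) := by
  intro j hj; rw [lev_mul, h j hj, h' j hj, mul_one]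

theorem Low.inv {k : ℕ} {γ : iterLimit S} (h : Low k γ) : Low k γ⁻¹ := by
  intro j hj; rw [lev_inv, h j hj, inv_one]

theorem Low.conj {k : ℕ} {γ : iterLimit S} (h : Low k γ) (g : iterLimit S) :
    Low k (g * γ * g⁻¹) := by
  intro j hj; simp [h j hj]

theorem Low.mk {k : ℕ} (a : ∀ k, Om S k → (S (k + 1)).grp)
    (h : ∀ j < k, ∀ p, a j p = 1) : Low k (mk 1 a) := by
  intro j hj
  exact lev_ext_upto (γ := TA.mk 1 a) (δ := 1) rfl k (fun j hj p => by simp [h j hj]) j hj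

theorem low_ext {k : ℕ} {γ δ : iterLimit S} (h : Low k γ) (h' : Low k δ)
    (H : ∀ j, k ≤ j → ∀ p, pt γ j p = pt δ j p) : γ = δ := by
  apply lim_ext
  · rw [h 0 (by omega), h' 0 (by omega)]
  · intro j p
    rcases lt_or_ge j k with hj | hj
    · rw [h.pt hj, h'.pt hj]
    · exact H j hj p

theorem Tr.inv {k : ℕ} {γ : iterLimit S} (h : Tr k γ) : Tr k γ⁻¹ := by
  intro j hj p; rw [pt_inv, h j hj, inv_one]

theorem pt_conj {k : ℕ} {g : iterLimit S} (h : Tr k g) (γ : iterLimit S) {j : ℕ} (hj : k ≤ j)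
    (p : Om S j) : pt (g * γ * g⁻¹) j p = pt γ j ((lev g j)⁻¹ p) := by
  rw [pt_mul, pt_mul, h j hj, h.inv j hj, one_mul, mul_one]

/-- data -/
structure Dat (S : ℕ → PermGroup) where
  c : ∀ k, (S k).carrier
  x : ∀ k, (S k).carrier
  σ : ∀ k, (S k).grp
  hc : ∀ k, (σ k).1 (c k) = c k
  hx : ∀ k, (σ k).1 (x k) ≠ x k

def Dat.y (D : Dat S) (k : ℕ) : (S k).carrier := (D.σ k).1 (D.x k)

theorem Dat.x_ne_c (D : Dat S) (k : ℕ) : D.x k ≠ D.c k := by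
  intro h; apply D.hx k; rw [h, D.hc]
theorem Dat.y_ne_c (D : Dat S) (k : ℕ) : D.y k ≠ D.c k := by
  intro h
  unfold Dat.y at h
  rw [← D.hc k] at h
  exact D.x_ne_c k ((D.σ k).1.injective (h.trans (D.hc k ▸ rfl)))

structure Lv (Ω : Type) where
  Z : Set Ω
  U : Set Ω
  C : Set Ω
  V : Set Ω
  R : Ω → Ω → Prop

open Classical in
def lv (D : Dat S) : ∀ k, Lv (Om S k)
  | 0 => { Z := {p | p ≠ D.c 0}, U := {D.x 0}, C := {D.c 0}, V := Set.univ, R := Eq }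
  | k + 1 =>
    { Z := {f : Om S k → (S (k + 1)).carrier |
        (∀ p ∈ (lv D k).Z, ∀ q ∈ (lv D k).Z, (lv D k).R p q → f p = f q) ∧
        ∀ p ∈ (lv D k).Z, f p ≠ D.c (k+1)}
      U := {f : Om S k → (S (k + 1)).carrier |
        ∀ p ∈ (lv D k).Z, f p = if p ∈ (lv D k).U then D.x (k+1) else D.y (k+1)}
      C := {f : Om S k → (S (k + 1)).carrier |
        ∀ p ∈ (lv D k).Z, f p = if p ∈ (lv D k).U then D.c (k+1) else D.y (k+1)}
      V := {f : Om S k → (S (k + 1)).carrier |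
        ∀ p ∈ (lv D k).Z, ∀ q ∈ (lv D k).Z, (lv D k).R p q → f p = f q}
      R := fun (f f' : Om S k → (S (k + 1)).carrier) => ∀ p ∈ (lv D k).Z, f p = f' p }

structure Basic {Ω : Type} (L : Lv Ω) : Prop where
  refl : ∀ p, L.R p p
  satZ : ∀ p q, L.R p q → (p ∈ L.Z ↔ q ∈ L.Z)
  satU : ∀ p q, L.R p q → (p ∈ L.U ↔ q ∈ L.U)
  satC : ∀ p q, L.R p q → (p ∈ L.C ↔ q ∈ L.C)
  ZV : ∀ p ∈ L.Z, p ∈ L.V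
  CV : ∀ p ∈ L.C, p ∈ L.V
  UZ : ∀ p ∈ L.U, p ∈ L.Z
  ZC : ∀ p ∈ L.Z, p ∉ L.C
  neU : ∃ p, p ∈ L.U

theorem basic (D : Dat S) : ∀ k, Basic (lv D k) := by
  intro k
  induction k with
  | zero =>
    refine ⟨fun p => rfl, ?_, ?_, ?_, fun _ _ => trivial, fun _ _ => trivial, ?_, ?_, ⟨D.x 0, rfl⟩⟩
    · rintro p q h; cases h; rfl
    · rintro p q h; cases h; rfl
    · rintro p q h; cases h; rfl
    · rintro p rfl; exact D.x_ne_c 0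
    · intro p hp; exact hp
  | succ k ih =>
    have hUC : ∀ (t : (S (k+1)).carrier) (f : Om S k → (S (k + 1)).carrier),
        (∀ p ∈ (lv D k).Z, f p = open Classical in
          if p ∈ (lv D k).U then t else D.y (k+1)) →
        (∀ p ∈ (lv D k).Z, ∀ q ∈ (lv D k).Z, (lv D k).R p q → f p = f q) := by
      intro t f hf p hp q hq hpq
      rw [hf p hp, hf q hq]
      have := ih.satU p q hpq
      by_cases hu : p ∈ (lv D k).U
      · rw [if_pos hu, if_pos (this.1 hu)]
      · rw [if_neg hu, if_neg (fun h => hu (this.2 h))]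
    refine ⟨fun p _ _ => rfl, ?_, ?_, ?_, ?_, ?_, ?_, ?_, ?_⟩
    · intro f f' h
      have h : ∀ p ∈ (lv D k).Z, f p = f' p := h
      constructor
      · rintro ⟨h1, h2⟩
        refine ⟨fun p hp q hq hpq => ?_, fun p hp => ?_⟩
        · rw [← h p hp, ← h q hq]; exact h1 p hp q hq hpq
        · rw [← h p hp]; exact h2 p hp
      · rintro ⟨h1, h2⟩
        refine ⟨fun p hp q hq hpq => ?_, fun p hp => ?_⟩
        · rw [h p hp, h q hq]; exact h1 p hp q hq hpq
        · rw [h p hp]; exact h2 p hp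
    · intro f f' h
      exact forall₂_congr fun p hp => by rw [h p hp]
    · intro f f' h
      exact forall₂_congr fun p hp => by rw [h p hp]
    · intro f hf; exact hf.1
    · intro f hf; exact hUC _ f hf
    · intro f hf
      refine ⟨hUC _ f hf, fun p hp => ?_⟩
      rw [hf p hp]
      split_ifs
      · exact D.x_ne_c _
      · exact D.y_ne_c _
    · intro f hf hf'
      obtain ⟨u, hu⟩ := ih.neU
      have := hf' u (ih.UZ u hu)
      rw [if_pos hu] at this
      exact hf.2 u (ih.UZ u hu) this
    · classical
      exact ⟨fun p => if p ∈ (lv D k).U then D.x (k+1) else D.y (k+1), fun p _ => rfl⟩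

def Good (D : Dat S) (k : ℕ) (γ : iterLimit S) : Prop :=
  Low k γ ∧ ∀ j, k ≤ j → ∀ p ∈ (lv D j).Z, pt γ j p = 1

theorem good_aux {D : Dat S} {k : ℕ} {γ : iterLimit S} (h : Good D k γ) :
    ∀ j, k ≤ j → ∀ p ∈ (lv D j).V, (lv D j).R p (lev γ j p) ∧ (lv D j).R p (lev γ⁻¹ j p) := by
  intro j hj
  induction j, hj using Nat.le_induction with
  | base =>
    intro p _
    rw [lev_inv, h.1 k le_rfl]
    exact ⟨(basic D k).refl p, (basic D k).refl p⟩
  | succ j hj ih =>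
    intro f hf
    have B := basic D j
    refine ⟨fun p hp => ?_, fun p hp => ?_⟩
    · have e := lev_succ_apply γ j f p
      have hr := (ih p (B.ZV p hp)).2
      rw [h.2 j hj p hp] at e
      exact (hf p hp _ ((B.satZ _ _ hr).1 hp) hr).trans e.symm
    · have e := lev_succ_apply γ⁻¹ j f p
      have hr := (ih p (B.ZV p hp)).1
      have hz := (B.satZ _ _ hr).1 hp
      rw [pt_inv, h.2 j hj _ hz, inv_one] at e
      exact (hf p hp _ hz hr).trans e.symm

theorem Good.inv {D : Dat S} {k : ℕ} {γ : iterLimit S} (h : Good D k γ) : Good D k γ⁻¹ := by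
  refine ⟨h.1.inv, fun j hj p hp => ?_⟩
  have hr := (good_aux h j hj p ((basic D j).ZV p hp)).1
  rw [pt_inv, h.2 j hj _ (((basic D j).satZ _ _ hr).1 hp), inv_one]

theorem Good.C {D : Dat S} {k : ℕ} {γ : iterLimit S} (h : Good D k γ) {j : ℕ} (hj : k ≤ j)
    (p : Om S j) : lev γ j p ∈ (lv D j).C ↔ p ∈ (lv D j).C := by
  have B := basic D j
  constructor
  · intro hp
    have := (good_aux h j hj _ (B.CV _ hp)).2
    have := (B.satC _ _ this).1 hp
    simpa using this
  · intro hp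
    exact (B.satC _ _ (good_aux h j hj _ (B.CV _ hp)).1).1 hp

theorem Good.Cinv {D : Dat S} {k : ℕ} {γ : iterLimit S} (h : Good D k γ) {j : ℕ} (hj : k ≤ j)
    (p : Om S j) : (lev γ j)⁻¹ p ∈ (lv D j).C ↔ p ∈ (lv D j).C := h.inv.C hj p

/-- The shifting element. -/
structure Shift (D : Dat S) (k : ℕ) (g : iterLimit S) : Prop where
  tr : Tr k g
  Z : ∀ j, k ≤ j → ∀ p, lev g j p ∈ (lv D j).Z ↔ p ∈ (lv D j).Z
  R : ∀ j, k ≤ j → ∀ p q, (lv D j).R (lev g j p) (lev g j q) ↔ (lv D j).R p q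
  C : ∀ p, lev g k p ∈ (lv D k).C ↔ p ∈ (lv D k).C
  U : ∀ j, k ≤ j → ∀ p ∈ (lv D j).U, lev g j p ∉ (lv D j).U

theorem Tr.lev_succ {k : ℕ} {g : iterLimit S} (h : Tr k g) {j : ℕ} (hj : k ≤ j)
    (f : Om S j → (S (j + 1)).carrier) (p : Om S j) :
    (show Om S j → (S (j + 1)).carrier from lev g (j + 1) f) (lev g j p) = f p := by
  have := lev_succ_apply g j f (lev g j p)
  rw [h j hj] at this
  simpa using this

theorem shift_of {D : Dat S} {k : ℕ} {g : iterLimit S} (tr : Tr k g)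
    (Z : ∀ p, lev g k p ∈ (lv D k).Z ↔ p ∈ (lv D k).Z)
    (R : ∀ p q, (lv D k).R (lev g k p) (lev g k q) ↔ (lv D k).R p q)
    (C : ∀ p, lev g k p ∈ (lv D k).C ↔ p ∈ (lv D k).C)
    (U : ∀ p ∈ (lv D k).U, lev g k p ∉ (lv D k).U) : Shift D k g := by
  have key : ∀ j, k ≤ j → (∀ p, lev g j p ∈ (lv D j).Z ↔ p ∈ (lv D j).Z) ∧
      (∀ p q, (lv D j).R (lev g j p) (lev g j q) ↔ (lv D j).R p q) ∧
      (∀ p ∈ (lv D j).U, lev g j p ∉ (lv D j).U) := by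
    intro j hj
    induction j, hj using Nat.le_induction with
    | base => exact ⟨Z, R, U⟩
    | succ j hj ih =>
      obtain ⟨iZ, iR, iU⟩ := ih
      have B := basic D j
      refine ⟨fun f => ?_, fun f f' => ?_, fun f hf hf' => ?_⟩
      · have e := tr.lev_succ hj f
        set f' : Om S j → (S (j + 1)).carrier := lev g (j + 1) f
        change f' ∈ (lv D (j+1)).Z ↔ _
        refine and_congr ?_ ?_
        · rw [← (lev g j).forall_congr_right]
          refine forall_congr' fun p => ?_
          rw [iZ p]
          refine forall_congr' fun hp => ?_
          rw [← (lev g j).forall_congr_right]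
          refine forall_congr' fun q => ?_
          rw [iZ q, iR, e, e]
        · rw [← (lev g j).forall_congr_right]
          refine forall_congr' fun p => ?_
          rw [iZ p, e]
      · have e := tr.lev_succ hj f
        have e' := tr.lev_succ hj f'
        change (∀ p ∈ (lv D j).Z, (show Om S j → (S (j + 1)).carrier from lev g (j + 1) f) p =
          (show Om S j → (S (j + 1)).carrier from lev g (j + 1) f') p) ↔
          ∀ p ∈ (lv D j).Z, f p = f' p
        rw [← (lev g j).forall_congr_right]
        refine forall_congr' fun p => ?_
        rw [iZ p, e, e']
      · obtain ⟨u, hu⟩ := B.neU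
        have h1 := hf u (B.UZ u hu)
        have h2 := hf' _ ((iZ u).2 (B.UZ u hu))
        rw [if_pos hu] at h1
        rw [if_neg (iU u hu)] at h2
        have e := tr.lev_succ hj f u
        exact D.hx (j+1) (h2.symm.trans (e.trans h1))
  exact ⟨tr, fun j hj => (key j hj).1, fun j hj => (key j hj).2.1, C, fun j hj => (key j hj).2.2⟩

theorem Shift.disj {D : Dat S} {k : ℕ} {g : iterLimit S} (h : Shift D k g) {j : ℕ} (hj : k < j)
    (p : Om S j) (hp : p ∈ (lv D j).C) : lev g j p ∉ (lv D j).C := by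
  obtain ⟨j, rfl⟩ : ∃ i, j = i + 1 := ⟨j - 1, by omega⟩
  have hj : k ≤ j := by omega
  intro hp'
  have B := basic D j
  obtain ⟨u, hu⟩ := B.neU
  have h1 := hp u (B.UZ u hu)
  have h2 := hp' _ ((h.Z j hj u).2 (B.UZ u hu))
  rw [if_pos hu] at h1
  rw [if_neg (h.U j hj u hu)] at h2
  have e := h.tr.lev_succ hj p u
  exact D.y_ne_c (j+1) (h2.symm.trans (e.trans h1))

open Classical in
theorem exists_shift (D : Dat S) (k : ℕ) : ∃ g, Shift D k g := by
  cases k with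
  | zero =>
    refine ⟨mk (D.σ 0) 1, shift_of (fun j _ p => by simp) ?_ ?_ ?_ ?_⟩
    · intro p
      change (D.σ 0).1 p ≠ D.c 0 ↔ p ≠ D.c 0
      nth_rw 1 [← D.hc 0]
      exact (D.σ 0).1.injective.ne_iff
    · intro p q
      exact (D.σ 0).1.injective.eq_iff
    · intro p
      change (D.σ 0).1 p = D.c 0 ↔ p = D.c 0
      nth_rw 1 [← D.hc 0]
      exact (D.σ 0).1.injective.eq_iff
    · intro p hp
      have hp : p = D.x 0 := hp
      subst hp
      exact D.hx 0
  | succ k =>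
    have B := basic D k
    let b : Om S k → (S (k+1)).grp := fun p => if p ∈ (lv D k).U then D.σ (k+1) else 1
    let a : ∀ k, Om S k → (S (k + 1)).grp := Pi.mulSingle k b
    have hl : Low k (mk 1 a) := Low.mk a (fun j hj p => by
      simp [a, Pi.mulSingle_eq_of_ne hj.ne])
    have e : ∀ (f : Om S k → (S (k + 1)).carrier) p,
        (show Om S k → (S (k + 1)).carrier from lev (mk 1 a) (k + 1) f) p = (b p).1 (f p) := by
      intro f p
      rw [lev_succ_apply, hl k le_rfl]
      simp [a]
    have bc : ∀ p, (b p).1 (D.c (k+1)) = D.c (k+1) := by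
      intro p
      by_cases hp : p ∈ (lv D k).U
      · simp [b, hp, D.hc]
      · simp [b, hp]
    have bR : ∀ p q, (lv D k).R p q → b p = b q := by
      intro p q h
      have := B.satU p q h
      simp only [b, this]
    have e' : ∀ (f : Om S (k+1)), lev (mk 1 a) (k + 1) f =
        (fun p => (b p).1 ((show Om S k → (S (k + 1)).carrier from f) p) :
          Om S k → (S (k + 1)).carrier) := by
      intro f; funext p; exact e f p
    refine ⟨mk 1 a, shift_of (fun j hj p => ?_) ?_ ?_ ?_ ?_⟩
    · simp [a, Pi.mulSingle_eq_of_ne (show j ≠ k by omega)]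
    · intro f
      rw [e' f]
      refine and_congr ?_ ?_
      · refine forall₂_congr fun p hp => forall₂_congr fun q hq => forall_congr' fun h => ?_
        dsimp only
        rw [bR p q h]
        exact (b q).1.injective.eq_iff
      · refine forall₂_congr fun p hp => ?_
        have := (b p).1.injective.ne_iff
          (x := (show Om S k → (S (k + 1)).carrier from f) p) (y := D.c (k+1))
        rw [bc] at this
        exact this
    · intro f f'
      rw [e' f, e' f']
      exact forall₂_congr fun p hp => (b p).1.injective.eq_iff
    · intro f
      rw [e' f]
      refine forall₂_congr fun p hp => ?_
      by_cases hu : p ∈ (lv D k).U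
      · rw [if_pos hu]
        have := (b p).1.injective.eq_iff
          (a := (show Om S k → (S (k + 1)).carrier from f) p) (b := D.c (k+1))
        rw [bc] at this
        exact this
      · rw [if_neg hu]; simp only [b, if_neg hu]; exact Iff.rfl
    · intro f hf hf'
      rw [e' f] at hf'
      obtain ⟨u, hu⟩ := B.neU
      have h1 := hf u (B.UZ u hu)
      have h2 : (b u).1 ((show Om S k → (S (k + 1)).carrier from f) u) = _ := hf' u (B.UZ u hu)
      rw [if_pos hu] at h1 h2
      have h3 := (congrArg (b u).1 h1).symm.trans h2
      simp only [b, if_pos hu] at h3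
      exact D.hx _ h3
end TA

namespace TA
open scoped commutatorElement
variable {S : ℕ → PermGroup}

open Classical in
noncomputable def al (D : Dat S) (k : ℕ) (X : ∀ j, (S (j + 1)).grp) : iterLimit S :=
  mk 1 (fun j p => if k ≤ j ∧ p ∈ (lv D j).C then X j else 1)

open Classical in
theorem pt_al (D : Dat S) {k : ℕ} (X : ∀ j, (S (j + 1)).grp) {j : ℕ} (hj : k ≤ j) (p : Om S j) :
    pt (al D k X) j p = if p ∈ (lv D j).C then X j else 1 := by
  simp [al, hj]

theorem low_al (D : Dat S) (k : ℕ) (X : ∀ j, (S (j + 1)).grp) : Low k (al D k X) :=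
  Low.mk _ fun j hj p => by rw [if_neg (by omega)]

theorem good_al (D : Dat S) (k : ℕ) (X : ∀ j, (S (j + 1)).grp) : Good D k (al D k X) :=
  ⟨low_al D k X, fun j hj p hp => by rw [pt_al D X hj, if_neg ((basic D j).ZC p hp)]⟩

noncomputable def ee (k : ℕ) (b : Om S k → (S (k + 1)).grp) : iterLimit S :=
  mk 1 (Pi.mulSingle k b)

theorem pt_ee (k : ℕ) (b : Om S k → (S (k + 1)).grp) (p : Om S k) : pt (ee k b) k p = b p := by
  simp [ee]

theorem pt_ee_ne {k : ℕ} (b : Om S k → (S (k + 1)).grp) {j : ℕ} (hj : j ≠ k) (p : Om S j) :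
    pt (ee k b) j p = 1 := by
  simp [ee, Pi.mulSingle_eq_of_ne hj]

theorem low_ee (k : ℕ) (b : Om S k → (S (k + 1)).grp) : Low k (ee k b) :=
  Low.mk _ fun j hj p => by simp [Pi.mulSingle_eq_of_ne hj.ne]

theorem tr_ee (k : ℕ) (b : Om S k → (S (k + 1)).grp) : Tr (k+1) (ee k b) :=
  fun j hj p => pt_ee_ne b (by omega) p

noncomputable def eeH (k : ℕ) : (Om S k → (S (k + 1)).grp) →* iterLimit S :=
  MonoidHom.mk' (ee k) (by
    intro b b'
    refine low_ext (k := k) (low_ee _ _) ((low_ee _ _).mul (low_ee _ _)) fun j hj p => ?_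
    rw [pt_mul]
    rcases eq_or_ne j k with rfl | h
    · rw [pt_ee, pt_ee, pt_ee, low_ee j b j le_rfl]; rfl
    · rw [pt_ee_ne _ h, pt_ee_ne _ h, pt_ee_ne _ h, mul_one])

open Classical in
/-- indicator -/
noncomputable def ind {k : ℕ} (E : Set (Om S k)) : (S (k + 1)).grp →* (Om S k → (S (k + 1)).grp) where
  toFun s := fun p => if p ∈ E then s else 1
  map_one' := by funext p; simp
  map_mul' s t := by funext p; by_cases h : p ∈ E <;> simp [h]

noncomputable def ev (k : ℕ) (E : Set (Om S k)) : (S (k + 1)).grp →* iterLimit S :=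
  (eeH k).comp (ind E)

theorem ev_eq (k : ℕ) (E : Set (Om S k)) (s) : ev k E s = ee k (ind E s) := rfl
open Classical in
theorem ind_apply {k : ℕ} (E : Set (Om S k)) (s) (p) :
    ind E s p = if p ∈ E then s else 1 := rfl

theorem good_ev (D : Dat S) (k : ℕ) (s : (S (k + 1)).grp) : Good D k (ev k (lv D k).C s) := by
  refine ⟨low_ee k _, fun j hj p hp => ?_⟩
  rw [ev_eq]
  rcases eq_or_ne j k with rfl | h
  · rw [pt_ee, ind_apply, if_neg ((basic D j).ZC p hp)]
  · exact pt_ee_ne _ h p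

theorem comm_lemma (D : Dat S) {k : ℕ} {g : iterLimit S} (hg : Shift D k g)
    (X X' : ∀ j, (S (j + 1)).grp) :
    al D k X * (g * al D k X' * g⁻¹) =
      ev k (lv D k).C ⁅X k, X' k⁆ * (g * al D k X' * g⁻¹) * al D k X := by
  have ga := good_al D k X
  have ga' := good_al D k X'
  have ge := good_ev D k ⁅X k, X' k⁆
  have hZ : ∀ j, k ≤ j → ∀ p ∈ (lv D j).Z, (lev g j)⁻¹ p ∈ (lv D j).Z := by
    intro j hj p hp
    rw [← hg.Z j hj]; simpa using hp
  have gb : Good D k (g * al D k X' * g⁻¹) := by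
    refine ⟨ga'.1.conj g, fun j hj p hp => ?_⟩
    rw [pt_conj hg.tr _ hj]
    exact ga'.2 j hj _ (hZ j hj p hp)
  have gC : ∀ γ, Good D k γ → ∀ j, k ≤ j → ∀ p,
      ((lev g j)⁻¹ ((lev γ j)⁻¹ p) ∈ (lv D j).C ↔ (lev g j)⁻¹ p ∈ (lv D j).C) := by
    intro γ hγ j hj p
    have : Good D k (g⁻¹ * γ * g⁻¹⁻¹) := by
      refine ⟨hγ.1.conj g⁻¹, fun j hj p hp => ?_⟩
      rw [pt_conj hg.tr.inv _ hj]
      apply hγ.2 j hj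
      rw [lev_inv, inv_inv]
      exact (hg.Z j hj p).2 hp
    have := this.Cinv hj ((lev g j)⁻¹ p)
    simpa using this
  refine low_ext (k := k) (ga.1.mul gb.1) ((ge.1.mul gb.1).mul ga.1) fun j hj p => ?_
  rw [pt_mul (al D k X), pt_mul (ev _ _ _ * _), pt_mul (ev _ _ _), pt_conj hg.tr _ hj, pt_conj hg.tr _ hj, pt_al D X hj,
    pt_al D X hj, pt_al D X' hj, pt_al D X' hj]
  have hC1 : (lev (ev k (lv D k).C ⁅X k, X' k⁆ * (g * al D k X' * g⁻¹)) j)⁻¹ p ∈ (lv D j).C ↔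
      p ∈ (lv D j).C := by
    rw [lev_mul, mul_inv_rev, Perm.mul_apply, gb.Cinv hj, ge.Cinv hj]
  rw [gC _ ga j hj p, gC _ ge j hj p, hC1]
  rcases eq_or_ne j k with rfl | h
  · have : (lev g j)⁻¹ p ∈ (lv D j).C ↔ p ∈ (lv D j).C := by
      rw [← hg.C]; simp
    rw [ev_eq, pt_ee, ind_apply, this]
    by_cases hp : p ∈ (lv D j).C
    · simp only [if_pos hp, commutatorElement_def]; group
    · simp only [if_neg hp]; group
  · rw [ev_eq, pt_ee_ne _ h]
    by_cases hp : p ∈ (lv D j).C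
    · have : (lev g j)⁻¹ p ∉ (lv D j).C := fun h' =>
        hg.disj (lt_of_le_of_ne hj h.symm) _ h' (by simpa using hp)
      rw [if_neg this, if_pos hp]; simp
    · simp [hp]

theorem conj_lemma (D : Dat S) (k : ℕ) (X : ∀ j, (S (j + 1)).grp) (s : (S (k+1)).grp) :
    al D k X * ev k (lv D k).C s = ev k (lv D k).C (X k * s * (X k)⁻¹) * al D k X := by
  have ga := good_al D k X
  have ge := good_ev D k s
  have ge' := good_ev D k (X k * s * (X k)⁻¹)
  refine low_ext (k := k) (ga.1.mul ge.1) (ge'.1.mul ga.1) fun j hj p => ?_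
  rw [pt_mul, pt_mul, pt_al D X hj, pt_al D X hj]
  rw [ge'.Cinv hj]
  rcases eq_or_ne j k with rfl | h
  · rw [ev_eq, ev_eq, pt_ee, pt_ee, ind_apply, ind_apply]
    rw [ga.Cinv hj]
    by_cases hp : p ∈ (lv D j).C
    · simp [hp]
    · simp [hp]
  · rw [ev_eq, ev_eq, pt_ee_ne _ h, pt_ee_ne _ h, one_mul, mul_one]

theorem al_succ (D : Dat S) (k : ℕ) (X : ∀ j, (S (j + 1)).grp) :
    al D k X = ev k (lv D k).C (X k) * al D (k+1) X := by
  have ge := good_ev D k (X k)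
  have l1 : Low k (al D (k+1) X) := fun j hj => low_al D (k+1) X j (by omega)
  refine low_ext (k := k) (low_al D k X) (ge.1.mul l1) fun j hj p => ?_
  rw [pt_mul, pt_al D X hj]
  rcases eq_or_ne j k with rfl | h
  · rw [ev_eq, pt_ee, ind_apply, (low_al D (j+1) X).pt (by omega), mul_one]
  · rw [pt_al D X (show k+1 ≤ j by omega), ge.Cinv hj, ev_eq, pt_ee_ne _ h, one_mul]

theorem tr_decomp {k : ℕ} {γ : iterLimit S} (h : Tr (k+1) γ) :
    Tr k ((ee k (pt γ k))⁻¹ * γ) := by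
  intro j hj p
  rw [pt_mul, pt_inv]
  rcases eq_or_ne j k with rfl | h'
  · rw [pt_ee, lev_inv, low_ee j _ j le_rfl]; simp
  · rw [pt_ee_ne _ h', h j (by omega)]; simp

theorem conj_ee {k : ℕ} {g : iterLimit S} (h : Tr k g) (b : Om S k → (S (k + 1)).grp) :
    g * ee k b * g⁻¹ = ee k (fun p => b ((lev g k)⁻¹ p)) := by
  refine low_ext (k := k) ((low_ee _ _).conj g) (low_ee _ _) fun j hj p => ?_
  rw [pt_conj h _ hj]
  rcases eq_or_ne j k with rfl | h
  · rw [pt_ee, pt_ee]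
  · rw [pt_ee_ne _ h, pt_ee_ne _ h]

theorem Tr.mul {k : ℕ} {γ δ : iterLimit S} (h : Tr k γ) (h' : Tr k δ) : Tr k (γ * δ) := by
  intro j hj p; rw [pt_mul, h j hj, h' j hj, mul_one]

theorem Tr.mono {k l : ℕ} {γ : iterLimit S} (h : Tr k γ) (hl : k ≤ l) : Tr l γ :=
  fun j hj p => h j (hl.trans hj) p

theorem lev_ee_mul {k : ℕ} {h : iterLimit S} (hh : Tr k h) (b : Om S k → (S (k + 1)).grp)
    (f : Om S k → (S (k + 1)).carrier) (p : Om S k) :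
    (show Om S k → (S (k + 1)).carrier from lev (ee k b * h) (k + 1) f) p
      = (b p).1 (f ((lev h k)⁻¹ p)) := by
  rw [lev_succ_apply, pt_mul, pt_ee, hh k le_rfl, lev_mul, low_ee k b k le_rfl]
  simp

theorem trans_lemma (htr : ∀ k (x y : (S k).carrier), ∃ s : (S k).grp, s.1 x = y) :
    ∀ k (p q : Om S k), ∃ γ, Tr k γ ∧ lev γ k p = q := by
  intro k
  cases k with
  | zero =>
    intro p q
    obtain ⟨s, hs⟩ := htr 0 p q
    exact ⟨mk s 1, fun j _ p => by simp, hs⟩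
  | succ k =>
    intro (p : Om S k → (S (k+1)).carrier) (q : Om S k → (S (k+1)).carrier)
    choose b hb using fun z : Om S k => htr (k+1) (p z) (q z)
    refine ⟨ee k b * 1, (tr_ee k b).mul fun j _ p => by simp, ?_⟩
    funext z
    exact (lev_ee_mul (k := k) (h := 1) (fun j _ p => by simp) b p z).trans (hb z)

theorem sep_lemma (D : Dat S) (htr : ∀ k (x y : (S k).carrier), ∃ s : (S k).grp, s.1 x = y)
    (k : ℕ) (p q : Om S k) (hpq : q ≠ p) :
    ∃ γ, Tr k γ ∧ lev γ k p ∈ (lv D k).C ∧ lev γ k q ∉ (lv D k).C := by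
  classical
  cases k with
  | zero =>
    obtain ⟨γ, h1, h2⟩ := trans_lemma htr 0 p (D.c 0)
    refine ⟨γ, h1, h2, fun h3 => hpq ?_⟩
    have h3 : lev γ 0 q = D.c 0 := h3
    exact (lev γ 0).injective (h3.trans h2.symm)
  | succ k =>
    have B := basic D k
    obtain ⟨t, ht⟩ := Function.ne_iff.1 (show (q : Om S k → (S (k+1)).carrier) ≠ p from hpq)
    obtain ⟨u, hu⟩ := B.neU
    obtain ⟨h, h1, h2⟩ := trans_lemma htr k t u
    have h2' : (lev h k)⁻¹ u = t := by rw [← h2]; simp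
    let r : Om S k → (S (k+1)).carrier :=
      fun z => if z ∈ (lv D k).U then D.c (k+1) else D.y (k+1)
    choose b hb using fun z : Om S k =>
      htr (k+1) ((show Om S k → (S (k+1)).carrier from p) ((lev h k)⁻¹ z)) (r z)
    refine ⟨ee k b * h, (tr_ee k b).mul (h1.mono (by omega)), ?_, ?_⟩
    · intro z hz
      exact (lev_ee_mul h1 b p z).trans (hb z)
    · intro hC
      have e1 := hC u (B.UZ u hu)
      have e2 := (lev_ee_mul h1 b q u).symm.trans e1
      have e3 := (hb u).symm
      apply ht
      have := (b u).1.injective (e2.trans e3)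
      rw [h2'] at this
      exact this

theorem perfect_lemma {G ι : Type*} [Group G] (X : ι → G)
    (hX : Subgroup.closure (Set.range X) = ⊤) (hG : commutator G = ⊤) (N : Subgroup G)
    (h1 : ∀ i j, ⁅X i, X j⁆ ∈ N) (h2 : ∀ i, ∀ n, X i * n * (X i)⁻¹ ∈ N ↔ n ∈ N) : N = ⊤ := by
  have hn : Subgroup.normalizer (N : Set G) = ⊤ := by
    rw [eq_top_iff, ← hX, Subgroup.closure_le]
    rintro _ ⟨i, rfl⟩
    exact Subgroup.mem_normalizer_iff.2 fun n => (h2 i n).symm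
  have : N.Normal := Subgroup.normalizer_eq_top_iff.1 hn
  have c1 : ∀ i g, Commute (QuotientGroup.mk (s := N) (X i)) (QuotientGroup.mk g) := by
    intro i
    have : (⊤ : Subgroup G) ≤ (Subgroup.centralizer {QuotientGroup.mk' N (X i)}).comap
        (QuotientGroup.mk' N) := by
      rw [← hX, Subgroup.closure_le]
      rintro _ ⟨j, rfl⟩
      rw [SetLike.mem_coe, Subgroup.mem_comap, Subgroup.mem_centralizer_singleton_iff]
      have := (QuotientGroup.eq_one_iff _).2 (h1 j i)
      exact commutatorElement_eq_one_iff_mul_comm.1 this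
    intro g
    have := this (Subgroup.mem_top g)
    rw [Subgroup.mem_comap, Subgroup.mem_centralizer_singleton_iff] at this
    exact this.symm
  have c2 : ∀ g h, Commute (QuotientGroup.mk (s := N) h) (QuotientGroup.mk g) := by
    intro g
    have : (⊤ : Subgroup G) ≤ (Subgroup.centralizer {QuotientGroup.mk' N g}).comap
        (QuotientGroup.mk' N) := by
      rw [← hX, Subgroup.closure_le]
      rintro _ ⟨j, rfl⟩
      rw [SetLike.mem_coe, Subgroup.mem_comap, Subgroup.mem_centralizer_singleton_iff]
      exact c1 j g
    intro h
    have := this (Subgroup.mem_top h)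
    rw [Subgroup.mem_comap, Subgroup.mem_centralizer_singleton_iff] at this
    exact this
  rw [eq_top_iff, ← hG, commutator_def, Subgroup.commutator_le]
  intro g _ h _
  rw [← QuotientGroup.eq_one_iff]
  exact commutatorElement_eq_one_iff_mul_comm.2 (c2 h g)

theorem perfect_lemma' {G : Type*} [Group G] (hG : commutator G = ⊤) (N : Subgroup G)
    (h1 : ∀ g h : G, ⁅g, h⁆ ∈ N) : N = ⊤ := by
  rw [eq_top_iff, ← hG, commutator_def, Subgroup.commutator_le]
  exact fun g _ h _ => h1 g h

theorem step (D : Dat S) (htr : ∀ k (x y : (S k).carrier), ∃ s : (S k).grp, s.1 x = y)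
    {ι : Type*} (X : ι → ∀ j, (S (j + 1)).grp) (k : ℕ) [Finite (Om S k)]
    (hX : Subgroup.closure (Set.range fun i => X i k) = ⊤)
    (hperf : commutator (S (k+1)).grp = ⊤) (H : Subgroup (iterLimit S))
    (hT : ∀ γ, Tr k γ → γ ∈ H) (hA : ∀ i, al D k (X i) ∈ H) :
    (∀ γ, Tr (k+1) γ → γ ∈ H) ∧ (∀ i, al D (k+1) (X i) ∈ H) := by
  classical
  have hC : ∀ s, ev k (lv D k).C s ∈ H := by
    obtain ⟨g, hg⟩ := exists_shift D k
    have : H.comap (ev k (lv D k).C) = ⊤ := by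
      refine perfect_lemma _ hX hperf _ ?_ ?_
      · intro i j
        rw [Subgroup.mem_comap]
        have hb := H.mul_mem (H.mul_mem (hT g hg.tr) (hA j)) (H.inv_mem (hT g hg.tr))
        have := comm_lemma D hg (X i) (X j)
        have hm := H.mul_mem (hA i) hb
        rw [this] at hm
        exact (H.mul_mem_cancel_right hb).1 ((H.mul_mem_cancel_right (hA i)).1 hm)
      · intro i n
        rw [Subgroup.mem_comap, Subgroup.mem_comap, ← H.mul_mem_cancel_right (hA i),
          ← conj_lemma, H.mul_mem_cancel_left (hA i)]
    intro s
    have h : s ∈ H.comap (ev k (lv D k).C) := by rw [this]; trivial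
    exact h
  have hI : ∀ E E' : Set (Om S k), (∀ s, ev k E s ∈ H) → (∀ s, ev k E' s ∈ H) →
      ∀ s, ev k (E ∩ E') s ∈ H := by
    intro E E' hE hE' s
    have : H.comap (ev k (E ∩ E')) = ⊤ := by
      refine perfect_lemma' hperf _ fun a b => ?_
      rw [Subgroup.mem_comap]
      have : ev k (E ∩ E') ⁅a, b⁆ = ⁅ev k E a, ev k E' b⁆ := by
        change eeH k _ = ⁅eeH k _, eeH k _⁆
        rw [← map_commutatorElement]
        congr 1
        funext p
        rw [ind_apply]
        change _ = ⁅ind E a p, ind E' b p⁆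
        rw [ind_apply, ind_apply]
        by_cases h : p ∈ E <;> by_cases h' : p ∈ E' <;> simp [h, h']
      rw [this, commutatorElement_def]
      exact H.mul_mem (H.mul_mem (H.mul_mem (hE a) (hE' b)) (H.inv_mem (hE a))) (H.inv_mem (hE' b))
    have h : s ∈ H.comap (ev k (E ∩ E')) := by rw [this]; trivial
    exact h
  have hS : ∀ p q : Om S k, q ≠ p → ∃ E : Set (Om S k), (∀ s, ev k E s ∈ H) ∧ p ∈ E ∧ q ∉ E := by
    intro p q hpq
    obtain ⟨γ, h1, h2, h3⟩ := sep_lemma D htr k p q hpq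
    refine ⟨{z | lev γ k z ∈ (lv D k).C}, fun s => ?_, h2, h3⟩
    have := conj_ee h1.inv (ind (lv D k).C s)
    have hm : γ⁻¹ * ee k (ind (lv D k).C s) * γ⁻¹⁻¹ ∈ H :=
      H.mul_mem (H.mul_mem (hT _ h1.inv) (hC s)) (H.inv_mem (hT _ h1.inv))
    rw [this] at hm
    have e2 : ev k {z | lev γ k z ∈ (lv D k).C} s =
        ee k fun p => ind (lv D k).C s ((lev γ⁻¹ k)⁻¹ p) := rfl
    rw [e2]; exact hm
  have hF : ∀ (p : Om S k) (F : Set (Om S k)), F.Finite → p ∉ F → ∃ E : Set (Om S k),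
      (∀ s, ev k E s ∈ H) ∧ p ∈ E ∧ ∀ q ∈ F, q ∉ E := by
    intro p F hF
    induction F, hF using Set.Finite.induction_on with
    | empty =>
      intro _
      obtain ⟨u, hu⟩ := (basic D k).neU
      by_cases hh : ∃ q : Om S k, q ≠ p
      · obtain ⟨q, hq⟩ := hh
        obtain ⟨E, h1, h2, _⟩ := hS p q hq
        exact ⟨E, h1, h2, by simp⟩
      · push Not at hh
        obtain ⟨γ, h1, h2⟩ := trans_lemma htr k p p
        refine ⟨Set.univ, fun s => ?_, trivial, by simp⟩
        exfalso
        obtain ⟨g, hg⟩ := exists_shift D k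
        have := hg.U k le_rfl u hu
        rw [hh (lev g k u), ← hh u] at this
        exact this hu
    | @insert a F _ _ ih =>
      intro hp
      simp only [Set.mem_insert_iff, not_or] at hp
      obtain ⟨E, h1, h2, h3⟩ := ih hp.2
      obtain ⟨E', h1', h2', h3'⟩ := hS p a (fun h => hp.1 h.symm)
      refine ⟨E ∩ E', hI E E' h1 h1', ⟨h2, h2'⟩, ?_⟩
      rintro q (rfl | hq) hqE
      · exact h3' hqE.2
      · exact h3 q hq hqE.1
  have hB : ∀ b, ee k b ∈ H := by
    intro b
    change b ∈ H.comap (eeH k)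
    refine Subgroup.pi_mem_of_mulSingle_mem b fun p => ?_
    obtain ⟨E, h1, h2, h3⟩ := hF p {p}ᶜ (Set.toFinite _) (by simp)
    have : Pi.mulSingle p (b p) = ind E (b p) := by
      funext q
      rw [ind_apply]
      by_cases hq : q = p
      · subst hq; simp [h2]
      · rw [if_neg (h3 q hq), Pi.mulSingle_eq_of_ne hq]
    rw [this]
    exact h1 _
  refine ⟨fun γ hγ => ?_, fun i => ?_⟩
  · have := hT _ (tr_decomp hγ)
    exact (H.mul_mem_cancel_left (H.inv_mem (hB _))).1 this
  · have := hA i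
    rw [al_succ] at this
    exact (H.mul_mem_cancel_left (hC _)).1 this

theorem exists_trunc (γ : iterLimit S) (n : ℕ) :
    ∃ δ, Tr n δ ∧ ∀ k ≤ n, lev δ k = lev γ k := by
  refine ⟨mk (S := S) ⟨lev γ 0, lev_mem γ 0⟩ (fun j p => if j < n then pt γ j p else 1), ?_, ?_⟩
  · intro j hj p
    rw [pt_mk, if_neg (by omega)]
  · refine lev_ext_upto (S := S) (γ := mk (S := S) ⟨lev γ 0, lev_mem γ 0⟩ (fun j p => if j < n then pt γ j p else 1)) (δ := γ) rfl n ?_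
    exact fun j hj p => by rw [pt_mk, if_pos hj]

theorem dense_of (H : Subgroup (iterLimit S)) (h : ∀ k γ, Tr k γ → γ ∈ H) :
    Dense (H : Set (iterLimit S)) := by
  rw [dense_iff_inter_open]
  rintro U hU ⟨γ, hγ⟩
  obtain ⟨V, hV, rfl⟩ := isOpen_induced_iff.1 hU
  obtain ⟨I, u, hu, huV⟩ := isOpen_pi_iff.1 hV γ.1 hγ
  obtain ⟨δ, h1, h2⟩ := exists_trunc γ (I.sup id)
  refine ⟨δ, huV ?_, h _ _ h1⟩
  intro i hi
  have : δ.1 i = γ.1 i := Subtype.ext (h2 i (Finset.le_sup (f := id) hi))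
  rw [this]
  exact (hu i hi).2

theorem finite_om [∀ k, Finite (S k).carrier] : ∀ k, Finite (Om S k) := by
  intro k
  induction k with
  | zero => exact inferInstanceAs (Finite (S 0).carrier)
  | succ k ih => exact inferInstanceAs (Finite (Om S k → (S (k+1)).carrier))

noncomputable def mkH : (S 0).grp →* iterLimit S :=
  MonoidHom.mk' (fun s => mk s 1) (by
    intro s t
    refine lim_ext rfl fun k p => ?_
    rw [pt_mul]; simp)

theorem main (D : Dat S) (htr : ∀ k (x y : (S k).carrier), ∃ s : (S k).grp, s.1 x = y)
    [∀ k, Finite (S k).carrier]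
    {ι κ : Type*} (X : ι → ∀ j, (S (j + 1)).grp)
    (hX : ∀ k, Subgroup.closure (Set.range fun i => X i k) = ⊤)
    (hperf : ∀ k, commutator (S k).grp = ⊤)
    (t : κ → (S 0).grp) (ht : Subgroup.closure (Set.range t) = ⊤)
    (H : Subgroup (iterLimit S)) (h1 : ∀ i, al D 0 (X i) ∈ H) (h2 : ∀ i, mkH (t i) ∈ H) :
    Dense (H : Set (iterLimit S)) := by
  have key : ∀ k, (∀ γ, Tr k γ → γ ∈ H) ∧ (∀ i, al D k (X i) ∈ H) := by
    intro k
    induction k with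
    | zero =>
      refine ⟨fun γ hγ => ?_, h1⟩
      have : (⊤ : Subgroup (S 0).grp) ≤ H.comap mkH := by
        rw [← ht, Subgroup.closure_le]
        rintro _ ⟨i, rfl⟩
        exact h2 i
      have hm := this (Subgroup.mem_top (⟨lev γ 0, lev_mem γ 0⟩ : (S 0).grp))
      have e : γ = mkH (S := S) ⟨lev γ 0, lev_mem γ 0⟩ := by
        refine lim_ext rfl fun k p => ?_
        rw [hγ k (by omega)]
        change _ = pt (mk _ 1) k p
        simp
      rw [e]; exact hm
    | succ k ih =>
      have := finite_om (S := S) k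
      exact step D htr X k (hX k) (hperf _) H ih.1 ih.2
  exact dense_of H fun k => (key k).1

theorem exists_family {G : Type*} [Group G] {d : ℕ} {T : Finset G} (h : T.card ≤ d)
    (hT : Subgroup.closure (T : Set G) = ⊤) :
    ∃ x : Fin d → G, Subgroup.closure (Set.range x) = ⊤ := by
  refine ⟨fun i => if h : i.1 < T.card then (T.equivFin.symm ⟨i.1, h⟩).1 else 1, ?_⟩
  rw [eq_top_iff, ← hT]
  apply Subgroup.closure_mono
  intro g hg
  refine ⟨⟨(T.equivFin ⟨g, hg⟩).1, by omega⟩, ?_⟩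
  simp
end TA

/-- **Theorem A.** -/
theorem theoremA (d : ℕ) (hd : 0 < d) (m : ℕ → ℕ)
    (S : ∀ k, Subgroup (Perm (Fin (m k))))
    (htrans : ∀ k, ∀ x y : Fin (m k), ∃ σ ∈ S k, σ x = y)
    (hperf : ∀ k, commutator (S k) = ⊤)
    (hgen : ∀ k, ∃ T : Finset (S k), T.card ≤ d ∧ Subgroup.closure (T : Set (S k)) = ⊤)
    (hstab : ∀ k, ∃ i j : Fin (m k),
      {σ : Perm (Fin (m k)) | σ ∈ S k ∧ σ i = i} ≠ {σ : Perm (Fin (m k)) | σ ∈ S k ∧ σ j = j}) :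
    ∃ g : Fin (d + minGens (S 0)) → (iterLimit (fun k => ⟨Fin (m k), S k⟩)),
      Dense ((Subgroup.closure (Set.range g) :
        Subgroup (iterLimit (fun k => ⟨Fin (m k), S k⟩))) :
          Set (iterLimit (fun k => ⟨Fin (m k), S k⟩))) := by
  classical
  have hD : ∀ k, ∃ (c x : Fin (m k)) (σ : S k), σ.1 c = c ∧ σ.1 x ≠ x := by
    intro k
    obtain ⟨i, j, hij⟩ := hstab k
    by_contra hcon
    push Not at hcon
    apply hij
    ext σ
    constructor
    · rintro ⟨h1, h2⟩; exact ⟨h1, hcon i j ⟨σ, h1⟩ h2⟩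
    · rintro ⟨h1, h2⟩; exact ⟨h1, hcon j i ⟨σ, h1⟩ h2⟩
  choose c x σ hc hx using hD
  let P : ℕ → PermGroup := fun k => ⟨Fin (m k), S k⟩
  let D : TA.Dat P := ⟨c, x, σ, hc, hx⟩
  have hfam : ∀ k, ∃ x : Fin d → S k, Subgroup.closure (Set.range x) = ⊤ := by
    intro k
    obtain ⟨T, h1, h2⟩ := hgen k
    exact TA.exists_family h1 h2
  choose X hX using hfam
  have hmin : ∃ T : Finset (S 0), T.card = minGens (S 0) ∧
      Subgroup.closure (T : Set (S 0)) = ⊤ := by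
    obtain ⟨T, -, h2⟩ := hgen 0
    exact Nat.sInf_mem (s := {r | ∃ T : Finset (S 0), T.card = r ∧
      Subgroup.closure (T : Set (S 0)) = ⊤}) ⟨T.card, T, rfl, h2⟩
  obtain ⟨T, hT1, hT2⟩ := hmin
  obtain ⟨t, ht⟩ := TA.exists_family hT1.le hT2
  have : ∀ k, Finite (P k).carrier := fun k => inferInstanceAs (Finite (Fin (m k)))
  refine ⟨Fin.append (fun i : Fin d => TA.al D 0 (fun j => X (j+1) i))
    (fun i => TA.mkH (S := P) (t i)), ?_⟩
  refine TA.main D (fun k a b => ?_) (fun i j => X (j+1) i) (fun k => hX (k+1)) hperf t ht _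
    (fun i => ?_) (fun i => ?_)
  · obtain ⟨s, hs, h⟩ := htrans k a b
    exact ⟨⟨s, hs⟩, h⟩
  · exact Subgroup.subset_closure ⟨Fin.castAdd _ i, Fin.append_left _ _ i⟩
  · exact Subgroup.subset_closure ⟨Fin.natAdd _ i, Fin.append_right _ _ i⟩
end

section
/- Let d be a positive integer and let S = {S_k ≤ Sym({1,…,m_k})}_{k∈ℕ} be a sequence of finite transitive permutation groups such that each S_k is perfect and can be generated by at most d elements as an abstract group. Suppose that for every k ∈ ℕ there exist points i, j ∈ {1,…,m_k} with St_{S_k}(i) ≠ St_{S_k}(j). Let G = lim← G_n be an infinitely iterated mixed wreath product of type (S,{k_n}) of stride at most m. Then G is topologically finitely generated; more precisely, G is topologically generated by at most 2md elements. -/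
open Equiv

/-- The imprimitive (permutational wreath) permutation of `α × β` induced by
`a : β → Perm α` and `b : Perm β`. -/
def wrPerm {α β : Type} (a : β → Perm α) (b : Perm β) : Perm (α × β) where
  toFun p := (a (b p.2) p.1, b p.2)
  invFun p := ((a p.2)⁻¹ p.1, b⁻¹ p.2)
  left_inv p := by simp
  right_inv p := by simp

theorem wrPerm_one {α β : Type} :
    wrPerm (fun _ : β => (1 : Perm α)) 1 = 1 := by
  apply Equiv.ext; intro p; simp [wrPerm]

theorem wrPerm_mul {α β : Type} (a a' : β → Perm α) (b b' : Perm β) :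
    wrPerm a b * wrPerm a' b' = wrPerm (fun j => a j * a' (b⁻¹ j)) (b * b') := by
  apply Equiv.ext; intro p
  simp [wrPerm, Perm.mul_apply]

theorem wrPerm_inv {α β : Type} (a : β → Perm α) (b : Perm β) :
    (wrPerm a b)⁻¹ = wrPerm (fun j => (a (b j))⁻¹) b⁻¹ := by
  apply Equiv.ext; intro p
  simp [wrPerm, Perm.inv_def]

/-- The permutational wreath product `A ≀ B` of permutation groups, as a subgroup of
`Perm (α × β)` acting by the imprimitive action. -/
def permWr {α β : Type} (A : Subgroup (Perm α)) (B : Subgroup (Perm β)) :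
    Subgroup (Perm (α × β)) where
  carrier := {π | ∃ (a : β → Perm α) (b : Perm β),
    (∀ i, a i ∈ A) ∧ b ∈ B ∧ π = wrPerm a b}
  one_mem' := ⟨fun _ => 1, 1, fun _ => A.one_mem, B.one_mem, wrPerm_one.symm⟩
  mul_mem' := by
    rintro π π' ⟨a, b, ha, hb, rfl⟩ ⟨a', b', ha', hb', rfl⟩
    exact ⟨fun j => a j * a' (b⁻¹ j), b * b',
      fun j => A.mul_mem (ha j) (ha' _), B.mul_mem hb hb', wrPerm_mul a a' b b'⟩
  inv_mem' := by
    rintro π ⟨a, b, ha, hb, rfl⟩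
    exact ⟨fun j => (a (b j))⁻¹, b⁻¹,
      fun j => A.inv_mem (ha _), B.inv_mem hb, wrPerm_inv a b⟩

/-- Permutational wreath product of bundled permutation groups. -/
def WrP (A B : PermGroup) : PermGroup :=
  ⟨A.carrier × B.carrier, permWr A.grp B.grp⟩

/-- The iterated mixed wreath product determined by a sequence of permutation groups `S`
and a function `e : ℕ → Bool` recording at which levels the exponentiation (product
action) is used instead of the permutational wreath product. -/
def mixedPG (S : ℕ → PermGroup) (e : ℕ → Bool) : ℕ → PermGroup
  | 0 => S 0
  | k + 1 => cond (e (k + 1)) (ExpP (S (k + 1)) (mixedPG S e k))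
      (WrP (S (k + 1)) (mixedPG S e k))

/-- `π'` in `A ≀ P` projects to `π` in `P`. -/
def IsLiftWr {A P : PermGroup} (π' : (WrP A P).grp) (π : P.grp) : Prop :=
  ∃ a : P.carrier → Perm A.carrier, (∀ i, a i ∈ A.grp) ∧
    (π' : Perm (WrP A P).carrier) = wrPerm a (π : Perm P.carrier)

theorem IsLiftWr.one {A P : PermGroup} : IsLiftWr (A := A) (P := P) 1 1 :=
  ⟨fun _ => 1, fun _ => A.grp.one_mem, by
    simp only [OneMemClass.coe_one]
    exact wrPerm_one.symm⟩

theorem IsLiftWr.mul {A P : PermGroup} {π₁ π₂ : (WrP A P).grp} {ρ₁ ρ₂ : P.grp}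
    (h₁ : IsLiftWr π₁ ρ₁) (h₂ : IsLiftWr π₂ ρ₂) : IsLiftWr (π₁ * π₂) (ρ₁ * ρ₂) := by
  obtain ⟨a, ha, hEq⟩ := h₁
  obtain ⟨a', ha', hEq'⟩ := h₂
  exact ⟨fun j => a j * a' ((ρ₁ : Perm P.carrier)⁻¹ j),
    fun j => A.grp.mul_mem (ha j) (ha' _), by
      push_cast [hEq, hEq']
      exact wrPerm_mul a a' _ _⟩

theorem IsLiftWr.inv {A P : PermGroup} {π₁ : (WrP A P).grp} {ρ₁ : P.grp}
    (h₁ : IsLiftWr π₁ ρ₁) : IsLiftWr π₁⁻¹ ρ₁⁻¹ := by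
  obtain ⟨a, ha, hEq⟩ := h₁
  exact ⟨fun j => (a ((ρ₁ : Perm P.carrier) j))⁻¹,
    fun j => A.grp.inv_mem (ha _), by
      push_cast [hEq]
      exact wrPerm_inv a _⟩

/-- The projection relation for a mixed step: exponentiation if `b = true`, permutational
wreath product if `b = false`. -/
def IsLiftMixed (A P : PermGroup) (b : Bool) :
    ((cond b (ExpP A P) (WrP A P)).grp) → (P.grp) → Prop :=
  match b with
  | true => fun π' π => IsLift π' π
  | false => fun π' π => IsLiftWr π' π

theorem IsLiftMixed.one {A P : PermGroup} (b : Bool) : IsLiftMixed A P b 1 1 := by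
  cases b
  · exact IsLiftWr.one
  · exact IsLift.one

theorem IsLiftMixed.mul {A P : PermGroup} (b : Bool)
    {π₁ π₂ : ((cond b (ExpP A P) (WrP A P)).grp)} {ρ₁ ρ₂ : P.grp}
    (h₁ : IsLiftMixed A P b π₁ ρ₁) (h₂ : IsLiftMixed A P b π₂ ρ₂) :
    IsLiftMixed A P b (π₁ * π₂) (ρ₁ * ρ₂) := by
  cases b
  · exact IsLiftWr.mul h₁ h₂
  · exact IsLift.mul h₁ h₂

theorem IsLiftMixed.inv {A P : PermGroup} (b : Bool)
    {π₁ : ((cond b (ExpP A P) (WrP A P)).grp)} {ρ₁ : P.grp}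
    (h₁ : IsLiftMixed A P b π₁ ρ₁) : IsLiftMixed A P b π₁⁻¹ ρ₁⁻¹ := by
  cases b
  · exact IsLiftWr.inv h₁
  · exact IsLift.inv h₁

/-- The inverse limit of an iterated mixed wreath product, realised as the subgroup of
compatible sequences in the product of all the finite levels. -/
def mixedLimit (S : ℕ → PermGroup) (e : ℕ → Bool) :
    Subgroup (∀ k, (mixedPG S e k).grp) where
  carrier := {f | ∀ k,
    IsLiftMixed (S (k + 1)) (mixedPG S e k) (e (k + 1)) (f (k + 1)) (f k)}
  one_mem' := fun k => IsLiftMixed.one _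
  mul_mem' := fun hf hg k => IsLiftMixed.mul _ (hf k) (hg k)
  inv_mem' := fun hf k => IsLiftMixed.inv _ (hf k)

/-- Each finite level carries the discrete topology; the limit then carries the subspace
topology of the product topology, i.e. the usual profinite topology. -/
instance (S : ℕ → PermGroup) (e : ℕ → Bool) (k : ℕ) :
    TopologicalSpace ((mixedPG S e k).grp) := ⊥

section GroupLemma

theorem aux_perfect {A ι : Type} [Group A] (hperf : commutator A = ⊤) (t : ι → A)
    (ht : Subgroup.closure (Set.range t) = ⊤) (N : Subgroup A)
    (hconj : ∀ k, ∀ n ∈ N, (t k)⁻¹ * n * t k ∈ N) (hconj' : ∀ k, ∀ n ∈ N, t k * n * (t k)⁻¹ ∈ N)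
    (hcomm : ∀ i j, (t i)⁻¹ * (t j)⁻¹ * t i * t j ∈ N) : N = ⊤ := by
  have hN : N.Normal := by
    rw [← Subgroup.normalizer_eq_top_iff, eq_top_iff, ← ht, Subgroup.closure_le]
    rintro _ ⟨k, rfl⟩
    rw [SetLike.mem_coe, Subgroup.mem_normalizer_iff]
    intro n
    constructor
    · exact hconj' k n
    · intro h
      have := hconj k _ h
      simpa [mul_assoc] using this
  have hq : Subgroup.closure (Set.range (fun i => (QuotientGroup.mk' N) (t i))) = ⊤ := by
    have : Set.range (fun i => (QuotientGroup.mk' N) (t i)) = (QuotientGroup.mk' N) '' Set.range t := by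
      rw [← Set.range_comp]; rfl
    rw [this, ← MonoidHom.map_closure, ht]
    exact Subgroup.map_top_of_surjective _ (QuotientGroup.mk'_surjective N)
  have hc : ∀ i j, (QuotientGroup.mk' N) (t i) * (QuotientGroup.mk' N) (t j)
      = (QuotientGroup.mk' N) (t j) * (QuotientGroup.mk' N) (t i) := by
    intro i j
    have h := hcomm i j
    rw [← map_mul, ← map_mul]
    have h2 : (QuotientGroup.mk' N) ((t i)⁻¹ * (t j)⁻¹ * t i * t j) = 1 :=
      (QuotientGroup.eq_one_iff _).2 h
    rw [← mul_inv_eq_one, ← map_inv, ← map_mul]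
    have h3 : (QuotientGroup.mk' N) ((t j)⁻¹ * (t i)⁻¹ * t j * t i) = 1 :=
      (QuotientGroup.eq_one_iff _).2 (hcomm j i)
    simp only [map_mul, map_inv, mul_inv_rev] at h3 ⊢
    generalize (QuotientGroup.mk' N) (t i) = x at *
    generalize (QuotientGroup.mk' N) (t j) = y at *
    have : y⁻¹ * x⁻¹ = (y * x)⁻¹ * 1 := by
      rw [mul_one, mul_inv_rev, ]
      have h4 : y⁻¹ * x⁻¹ = x⁻¹ * y⁻¹ := by
        calc y⁻¹ * x⁻¹ = (y⁻¹ * x⁻¹ * y * x) * (x⁻¹ * y⁻¹) := by group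
          _ = _ := by rw [h3, one_mul]
      exact h4
    have h5 : x * y = y * x := by
      have := congrArg (·⁻¹) this
      simpa using this
    rw [h5]; group
  have hcent : ∀ x y : A ⧸ N, x * y = y * x := by
    have h1 : ∀ i (y : A ⧸ N), y * (QuotientGroup.mk' N) (t i) = (QuotientGroup.mk' N) (t i) * y := by
      intro i y
      have : (⊤ : Subgroup (A ⧸ N)) ≤ Subgroup.centralizer {(QuotientGroup.mk' N) (t i)} := by
        rw [← hq, Subgroup.closure_le]
        rintro _ ⟨j, rfl⟩
        rw [SetLike.mem_coe, Subgroup.mem_centralizer_singleton_iff]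
        exact hc _ _
      exact (Subgroup.mem_centralizer_singleton_iff.1 (this (Subgroup.mem_top y)))
    intro x y
    have : (⊤ : Subgroup (A ⧸ N)) ≤ Subgroup.centralizer {y} := by
      rw [← hq, Subgroup.closure_le]
      rintro _ ⟨j, rfl⟩
      rw [SetLike.mem_coe, Subgroup.mem_centralizer_singleton_iff]
      exact (h1 _ _).symm
    exact Subgroup.mem_centralizer_singleton_iff.1 (this (Subgroup.mem_top x))
  rw [eq_top_iff, ← hperf, commutator_def, Subgroup.commutator_le]
  intro x _ y _
  rw [← QuotientGroup.eq_one_iff, commutatorElement_def]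
  have := hcent (x : A ⧸ N) y
  simp only [QuotientGroup.mk_mul, QuotientGroup.mk_inv]
  rw [this]; group

theorem aux_fun {A ι Ω : Type} [Group A] [Finite Ω] [DecidableEq Ω] (hperf : commutator A = ⊤)
    (t : ι → A) (ht : Subgroup.closure (Set.range t) = ⊤) (Q : Subgroup (Ω → A)) (c : Ω)
    (h3 : ∃ w1 w2 : Ω, w1 ≠ c ∧ w2 ≠ c ∧ w1 ≠ w2)
    (hQ : ∀ i w, (Pi.mulSingle c (t i) : Ω → A)⁻¹ * Pi.mulSingle w (t i) ∈ Q) : Q = ⊤ := by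
  obtain ⟨w1, w2, h1, h2, h12⟩ := h3
  have hc : Q.comap (MonoidHom.mulSingle (fun _ : Ω => A) c) = ⊤ := by
    apply aux_perfect hperf t ht
    · intro k n hn
      rw [Subgroup.mem_comap] at hn ⊢
      have := Q.mul_mem (Q.mul_mem (hQ k w1) hn) (Q.inv_mem (hQ k w1))
      convert this using 1
      funext x
      by_cases hx : x = c
      · subst hx; simp [Pi.mulSingle_eq_of_ne h1.symm, mul_assoc]
      · by_cases hx' : x = w1
        · subst hx'; simp [hx]
        · simp [hx, hx']
    · intro k n hn
      rw [Subgroup.mem_comap] at hn ⊢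
      have := Q.mul_mem (Q.mul_mem (Q.inv_mem (hQ k w1)) hn) (hQ k w1)
      convert this using 1
      funext x
      by_cases hx : x = c
      · subst hx; simp [Pi.mulSingle_eq_of_ne h1.symm, mul_assoc]
      · by_cases hx' : x = w1
        · subst hx'; simp [hx]
        · simp [hx, hx']
    · intro i j
      rw [Subgroup.mem_comap]
      have := Q.mul_mem (Q.mul_mem (hQ i w1) (hQ j w2))
        (Q.mul_mem (Q.inv_mem (hQ i w1)) (Q.inv_mem (hQ j w2)))
      convert this using 1
      funext x
      by_cases hx : x = c
      · subst hx; simp [Pi.mulSingle_eq_of_ne h1.symm, Pi.mulSingle_eq_of_ne h2.symm, mul_assoc]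
      · by_cases hx' : x = w1
        · subst hx'; simp [hx, h12]
        · simp [hx, hx']
  have hcm : ∀ s, (Pi.mulSingle c s : Ω → A) ∈ Q := by
    intro s
    have : s ∈ Q.comap (MonoidHom.mulSingle (fun _ : Ω => A) c) := hc ▸ Subgroup.mem_top s
    exact this
  have hw : ∀ w s, (Pi.mulSingle w s : Ω → A) ∈ Q := by
    intro w s
    have : Q.comap (MonoidHom.mulSingle (fun _ : Ω => A) w) = ⊤ := by
      rw [eq_top_iff, ← ht, Subgroup.closure_le]
      rintro _ ⟨i, rfl⟩
      have := Q.mul_mem (hcm (t i)) (hQ i w)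
      rw [mul_inv_cancel_left] at this
      exact this
    have h : s ∈ Q.comap (MonoidHom.mulSingle (fun _ : Ω => A) w) := this ▸ Subgroup.mem_top s
    exact h
  rw [eq_top_iff]
  intro a _
  exact Subgroup.pi_mem_of_mulSingle_mem a (fun w => hw w (a w))

end GroupLemma

section Abstract

/-- Sequence built from labels. -/
def bld {G A Ω : ℕ → Type} (mk : ∀ k, (Ω k → A k) → G k → G (k + 1)) (s : G 0)
    (a : ∀ k, Ω k → A k) : ∀ k, G k
  | 0 => s
  | k + 1 => mk k (a k) (bld mk s a k)

theorem bld_congr {G A Ω : ℕ → Type} (mk : ∀ k, (Ω k → A k) → G k → G (k + 1)) (s : G 0)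
    (a b : ∀ k, Ω k → A k) (n : ℕ) (h : ∀ j < n, a j = b j) : ∀ j ≤ n, bld mk s a j = bld mk s b j := by
  intro j
  induction j with
  | zero => intro _; rfl
  | succ j ih =>
    intro hj
    simp only [bld]
    rw [ih (by omega), h j (by omega)]

theorem bld_surj {G A Ω : ℕ → Type} [∀ k, One (A k)] (mk : ∀ k, (Ω k → A k) → G k → G (k + 1))
    (hs : ∀ k g, ∃ a h, g = mk k a h) (n : ℕ) :
    ∀ g : G n, ∃ s a, (∀ j ≥ n, a j = 1) ∧ bld mk s a n = g := by
  induction n with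
  | zero => intro g; exact ⟨g, 1, fun _ _ => rfl, rfl⟩
  | succ n ih =>
    intro g
    obtain ⟨a', h, rfl⟩ := hs n g
    obtain ⟨s, a, ha, rfl⟩ := ih h
    refine ⟨s, Function.update a n a', ?_, ?_⟩
    · intro j hj
      rw [Function.update_of_ne (by omega)]
      exact ha j (by omega)
    · simp only [bld, Function.update_self]
      congr 1
      apply bld_congr mk s _ _ n _ n le_rfl
      intro j hj
      rw [Function.update_of_ne (by omega)]

theorem abstract_main {G A Ω : ℕ → Type} {ι : Type} [∀ k, Group (G k)] [∀ k, Group (A k)]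
    [∀ k, MulAction (G k) (Ω k)] [∀ k, Finite (Ω k)] [∀ k, DecidableEq (Ω k)]
    (mk : ∀ k, (Ω k → A k) → G k → G (k + 1))
    (mk_mul : ∀ k a b g h, mk k a g * mk k b h = mk k (a * fun i => b (g⁻¹ • i)) (g * h))
    (mk_one : ∀ k, mk k 1 1 = 1)
    (hs : ∀ k g, ∃ a h, g = mk k a h)
    (htr : ∀ k (x y : Ω k), ∃ g : G k, g • x = y)
    (hperf : ∀ k, commutator (A k) = ⊤)
    (t : ∀ k, ι → A k) (ht : ∀ k, Subgroup.closure (Set.range (t k)) = ⊤)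
    (c : ∀ k, Ω k) (h3 : ∀ k, ∃ w1 w2 : Ω k, w1 ≠ c k ∧ w2 ≠ c k ∧ w1 ≠ w2)
    (m : ℕ) (hm : 0 < m)
    (hfix : ∀ n s a, (∀ j ≥ n, a j = 1) → ∀ j ≥ n + m, bld mk s a j • c j = c j)
    (K : Subgroup (∀ k, G k)) (hK0 : ∀ s, bld mk s 1 ∈ K)
    (hK1 : ∀ r < m, ∀ i, bld mk 1 (fun k => if k % m = r then Pi.mulSingle (c k) (t k i) else 1) ∈ K) :
    ∀ n s a, (∀ j ≥ n, a j = 1) → bld mk s a ∈ K := by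
  -- labels of truncated directed elements
  set L : ℕ → ℕ → ι → ∀ k, Ω k → A k := fun n r i k =>
    if n ≤ k ∧ k % m = r then Pi.mulSingle (c k) (t k i) else 1 with hL
  -- pure level elements
  have lab_low : ∀ n (a : Ω n → A n) (j : ℕ), j ≤ n → bld mk 1 (Pi.mulSingle n a) j = 1 := by
    intro n a j
    induction j with
    | zero => intro _; rfl
    | succ j ih =>
      intro hj
      simp only [bld]
      rw [ih (by omega), Pi.mulSingle_eq_of_ne (by omega), mk_one]
  have L_low : ∀ n r i (j : ℕ), j ≤ n → bld mk 1 (L n r i) j = 1 := by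
    intro n r i j
    induction j with
    | zero => intro _; rfl
    | succ j ih =>
      intro hj
      simp only [bld]
      rw [ih (by omega)]
      have : L n r i j = 1 := by simp only [hL]; rw [if_neg (by omega)]
      rw [this, mk_one]
  have lab_mul : ∀ n (a b : Ω n → A n), bld mk 1 (Pi.mulSingle n (a * b)) =
      bld mk 1 (Pi.mulSingle n a) * bld mk 1 (Pi.mulSingle n b) := by
    intro n a b
    funext j
    induction j with
    | zero => simp [bld]
    | succ j ih =>
      rw [Pi.mul_apply] at ih ⊢
      simp only [bld]
      rw [ih, mk_mul]
      by_cases h : j = n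
      · subst h
        simp only [Pi.mulSingle_eq_same, lab_low j _ j le_rfl, inv_one, one_smul]
      · simp only [Pi.mulSingle_eq_of_ne h]
        congr 1
        simp only [one_mul]; rfl
  let lab : ∀ n, (Ω n → A n) →* (∀ k, G k) := fun n =>
    MonoidHom.mk' (fun a => bld mk 1 (Pi.mulSingle n a)) (lab_mul n)
  have lab_def : ∀ n a, lab n a = bld mk 1 (Pi.mulSingle n a) := fun _ _ => rfl
  -- conjugation
  have lab_conj : ∀ n s a, (∀ j ≥ n, a j = 1) → ∀ w x,
      bld mk s a * lab n (Pi.mulSingle w x) =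
        lab n (Pi.mulSingle (bld mk s a n • w) x) * bld mk s a := by
    intro n s a ha w x
    rw [lab_def, lab_def]
    funext j
    induction j with
    | zero => simp [bld]
    | succ j ih =>
      rw [Pi.mul_apply, Pi.mul_apply] at ih ⊢
      simp only [bld]
      rw [mk_mul, mk_mul, ih]
      congr 1
      by_cases h : j = n
      · subst h
        simp only [Pi.mulSingle_eq_same, lab_low j _ j le_rfl, inv_one, one_smul, ha j le_rfl,
          one_mul]
        funext i
        simp only [Pi.mul_apply, Pi.one_apply, mul_one]
        by_cases hi : i = bld mk s a j • w
        · subst hi; simp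
        · rw [Pi.mulSingle_eq_of_ne hi, Pi.mulSingle_eq_of_ne]
          intro h; apply hi; rw [← h, smul_inv_smul]
      · simp only [Pi.mulSingle_eq_of_ne h, one_mul]
        by_cases hj : j < n
        · rw [lab_low n _ j hj.le]
          funext i; simp
        · rw [ha j (by omega)]; funext i; simp
  -- stripping
  have strip : ∀ n i, bld mk 1 (L n (n % m) i) =
      bld mk 1 (L (n + 1) (n % m) i) * lab n (Pi.mulSingle (c n) (t n i)) := by
    intro n i
    rw [lab_def]
    funext j
    induction j with
    | zero => simp [bld]
    | succ j ih =>
      rw [Pi.mul_apply] at ih ⊢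
      simp only [bld]
      rw [mk_mul, ih]
      congr 1
      by_cases h : j = n
      · subst h
        rw [L_low (j + 1) _ _ j (by omega)]
        funext i
        simp [hL]
      · simp only [Pi.mulSingle_eq_of_ne h]
        have : L n (n % m) i j = L (n + 1) (n % m) i j := by
          simp only [hL]
          have : (n ≤ j ∧ j % m = n % m) ↔ (n + 1 ≤ j ∧ j % m = n % m) := by
            constructor <;> rintro ⟨h1, h2⟩ <;> exact ⟨by omega, h2⟩
          simp only [this]
        rw [this]; funext i; simp
  have strip' : ∀ n r i, r ≠ n % m → bld mk 1 (L n r i) = bld mk 1 (L (n + 1) r i) := by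
    intro n r i hr
    congr 1
    funext j
    simp only [hL]
    have : (n ≤ j ∧ j % m = r) ↔ (n + 1 ≤ j ∧ j % m = r) := by
      constructor
      · rintro ⟨h1, h2⟩
        refine ⟨?_, h2⟩
        rcases h1.eq_or_lt with h | h
        · subst h; exact absurd h2.symm hr
        · exact h
      · rintro ⟨h1, h2⟩; exact ⟨by omega, h2⟩
    simp only [this]
  -- commuting
  have comm : ∀ n s a, (∀ j ≥ n, a j = 1) → ∀ i,
      bld mk s a * bld mk 1 (L (n + 1) (n % m) i) =
        bld mk 1 (L (n + 1) (n % m) i) * bld mk s a := by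
    intro n s a ha i
    funext j
    induction j with
    | zero => simp [bld]
    | succ j ih =>
      rw [Pi.mul_apply, Pi.mul_apply] at ih ⊢
      simp only [bld]
      rw [mk_mul, mk_mul, ih]
      congr 1
      by_cases hj : n + 1 ≤ j
      · rw [ha j (by omega)]
        funext w
        simp only [hL, Pi.mul_apply, Pi.one_apply, one_mul, mul_one]
        by_cases hc : j % m = n % m
        · rw [if_pos ⟨hj, hc⟩]
          have hge : n + m ≤ j := by
            have h1 : n ≡ j [MOD m] := hc.symm
            have h2 : m ∣ j - n := (Nat.modEq_iff_dvd' (by omega)).1 h1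
            have := Nat.le_of_dvd (by omega) h2
            omega
          have hf := hfix n s a ha j hge
          by_cases hw : w = c j
          · subst hw
            rw [inv_smul_eq_iff.2 hf.symm]
          · rw [Pi.mulSingle_eq_of_ne hw, Pi.mulSingle_eq_of_ne]
            intro h; apply hw; rw [inv_smul_eq_iff] at h; rw [h, hf]
        · rw [if_neg (by tauto)]; rfl
      · have : L (n + 1) (n % m) i j = 1 := by simp only [hL]; rw [if_neg (by omega)]
        rw [this, L_low (n + 1) _ _ j (by omega)]
        funext w; simp
  -- decomposition
  have decomp : ∀ n s a, (∀ j ≥ n + 1, a j = 1) →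
      bld mk s a = lab n (a n) * bld mk s (Function.update a n 1) := by
    intro n s a ha
    rw [lab_def]
    funext j
    induction j with
    | zero => simp [bld]
    | succ j ih =>
      rw [Pi.mul_apply] at ih ⊢
      simp only [bld]
      rw [mk_mul, ih]
      congr 1
      by_cases h : j = n
      · subst h
        funext w; simp
      · rw [Pi.mulSingle_eq_of_ne h, Function.update_of_ne h]
        by_cases hj : j < n
        · rw [lab_low n _ j hj.le]; funext w; simp
        · rw [ha j (by omega)]; funext w; simp
  have key : ∀ n, (∀ s a, (∀ j ≥ n, a j = 1) → bld mk s a ∈ K) ∧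
      (∀ r < m, ∀ i, bld mk 1 (L n r i) ∈ K) := by
    intro n
    induction n with
    | zero =>
      constructor
      · intro s a ha
        have : a = 1 := by funext j; exact ha j (by omega)
        rw [this]; exact hK0 s
      · intro r hr i
        convert hK1 r hr i using 3
        simp [hL]
    | succ n ih =>
      obtain ⟨ih1, ih2⟩ := ih
      have hQ : K.comap (lab n) = ⊤ := by
        apply aux_fun (hperf n) (t n) (ht n) _ (c n) (h3 n)
        intro i w
        obtain ⟨g, hg⟩ := htr n (c n) w
        obtain ⟨s, a, ha, rfl⟩ := bld_surj mk hs n g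
        have hf := ih1 s a ha
        have hu := ih2 (n % m) (Nat.mod_lt _ hm) i
        have := K.mul_mem (K.mul_mem (K.mul_mem (K.inv_mem hu) hf) hu) (K.inv_mem hf)
        rw [Subgroup.mem_comap]
        convert this using 1
        rw [strip, map_mul, map_inv, ← hg]
        have e1 := comm n s a ha i
        have e2 := lab_conj n s a ha (c n) (t n i)
        generalize bld mk 1 (L (n + 1) (n % m) i) = u at *
        generalize lab n (Pi.mulSingle (c n) (t n i)) = p at *
        generalize lab n (Pi.mulSingle (bld mk s a n • c n) (t n i)) = q at *
        generalize bld mk s a = f at *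
        calc p⁻¹ * q = p⁻¹ * u⁻¹ * u * (q * f) * f⁻¹ := by group
          _ = p⁻¹ * u⁻¹ * (u * f) * p * f⁻¹ := by rw [← e2]; group
          _ = (u * p)⁻¹ * f * (u * p) * f⁻¹ := by rw [← e1]; group
      have hlab : ∀ a, lab n a ∈ K := by
        intro a
        have : a ∈ K.comap (lab n) := hQ ▸ Subgroup.mem_top a
        exact this
      constructor
      · intro s a ha
        rw [decomp n s a ha]
        refine K.mul_mem (hlab _) (ih1 _ _ ?_)
        intro j hj
        by_cases h : j = n
        · subst h; simp
        · rw [Function.update_of_ne h]; exact ha j (by omega)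
      · intro r hr i
        by_cases h : r = n % m
        · have := K.mul_mem (ih2 r hr i) (K.inv_mem (hlab (Pi.mulSingle (c n) (t n i))))
          rw [h, strip, mul_inv_cancel_right] at this
          rw [h]; exact this
        · rw [← strip' n r i h]; exact ih2 r hr i
  exact fun n => (key n).1

end Abstract

section Concrete

/-- Element of a mixed step with given labels. -/
def mkW (A P : PermGroup) (b : Bool) (a : P.carrier → A.grp) (π : P.grp) :
    (cond b (ExpP A P) (WrP A P)).grp :=
  match b with
  | true => ⟨prodPerm (fun i => (a i : Perm A.carrier)) (π : Perm P.carrier),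
      fun i => (a i : Perm A.carrier), π, fun i => (a i).2, π.2, rfl⟩
  | false => ⟨wrPerm (fun i => (a i : Perm A.carrier)) (π : Perm P.carrier),
      fun i => (a i : Perm A.carrier), π, fun i => (a i).2, π.2, rfl⟩

theorem mkW_mul (A P : PermGroup) (b : Bool) (a a' : P.carrier → A.grp) (π π' : P.grp) :
    mkW A P b a π * mkW A P b a' π' = mkW A P b (a * fun i => a' (π⁻¹ • i)) (π * π') := by
  cases b
  · exact Subtype.ext (wrPerm_mul _ _ _ _)
  · exact Subtype.ext (prodPerm_mul _ _ _ _)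

theorem mkW_one (A P : PermGroup) (b : Bool) : mkW A P b 1 1 = 1 := by
  cases b
  · exact Subtype.ext wrPerm_one
  · exact Subtype.ext prodPerm_one

theorem mkW_lift (A P : PermGroup) (b : Bool) (a : P.carrier → A.grp) (π : P.grp) :
    IsLiftMixed A P b (mkW A P b a π) π := by
  cases b
  · exact ⟨fun i => (a i : Perm A.carrier), fun i => (a i).2, rfl⟩
  · exact ⟨fun i => (a i : Perm A.carrier), fun i => (a i).2, rfl⟩

theorem mkW_of_lift (A P : PermGroup) (b : Bool) (g : (cond b (ExpP A P) (WrP A P)).grp) (π : P.grp)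
    (h : IsLiftMixed A P b g π) : ∃ a, g = mkW A P b a π := by
  cases b
  · obtain ⟨a, ha, h⟩ := h
    exact ⟨fun i => ⟨a i, ha i⟩, Subtype.ext h⟩
  · obtain ⟨a, ha, h⟩ := h
    exact ⟨fun i => ⟨a i, ha i⟩, Subtype.ext h⟩

theorem mkW_surj (A P : PermGroup) (b : Bool) (g : (cond b (ExpP A P) (WrP A P)).grp) :
    ∃ a π, g = mkW A P b a π := by
  cases b
  · obtain ⟨_, a, π, ha, hπ, rfl⟩ := g
    exact ⟨fun i => ⟨a i, ha i⟩, ⟨π, hπ⟩, rfl⟩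
  · obtain ⟨_, a, π, ha, hπ, rfl⟩ := g
    exact ⟨fun i => ⟨a i, ha i⟩, ⟨π, hπ⟩, rfl⟩

/-- The distinguished point of a mixed step. -/
def ptW (A P : PermGroup) (b : Bool) (x : A.carrier) (c : P.carrier) :
    (cond b (ExpP A P) (WrP A P)).carrier :=
  match b with
  | true => fun _ : P.carrier => x
  | false => (x, c)

theorem ptW_inj (A P : PermGroup) (b : Bool) (x y : A.carrier) (c : P.carrier)
    (h : ptW A P b x c = ptW A P b y c) : x = y := by
  cases b
  · exact congrArg Prod.fst (show (x, c) = (y, c) from h)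
  · exact congrFun (show (fun _ : P.carrier => x) = (fun _ => y) from h) c

theorem ptW_fix (A P : PermGroup) (b : Bool) (x : A.carrier) (c : P.carrier) (π : P.grp)
    (h : b = true ∨ π • c = c) : mkW A P b 1 π • ptW A P b x c = ptW A P b x c := by
  cases b
  · have h : π • c = c := by simpa using h
    exact Prod.ext rfl h
  · rfl

theorem step_finite (A P : PermGroup) (b : Bool) [Finite A.carrier] [Finite P.carrier] :
    Finite (cond b (ExpP A P) (WrP A P)).carrier := by
  cases b
  · exact (inferInstance : Finite (A.carrier × P.carrier))
  · exact (inferInstance : Finite (P.carrier → A.carrier))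

theorem step_trans (A P : PermGroup) (b : Bool) (hA : ∀ x y : A.carrier, ∃ g : A.grp, g • x = y)
    (hP : ∀ x y : P.carrier, ∃ g : P.grp, g • x = y) 
    (x y : (cond b (ExpP A P) (WrP A P)).carrier) :
    ∃ g : (cond b (ExpP A P) (WrP A P)).grp, g • x = y := by
  cases b
  · obtain ⟨x1, x2⟩ := x
    obtain ⟨y1, y2⟩ := y
    obtain ⟨g, hg⟩ := hA x1 y1
    obtain ⟨π, hπ⟩ := hP x2 y2
    exact ⟨mkW A P false (fun _ => g) π, Prod.ext hg hπ⟩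
  · have : ∀ i : P.carrier, ∃ g : A.grp, g • ((x : P.carrier → A.carrier) i) =
      (y : P.carrier → A.carrier) i := fun i => hA _ _
    choose a ha using this
    exact ⟨mkW A P true a 1, funext fun i => ha i⟩

/-- The distinguished points. -/
def ptM (S : ℕ → PermGroup) (e : ℕ → Bool) (x : ∀ k, (S k).carrier) :
    ∀ k, (mixedPG S e k).carrier
  | 0 => x 0
  | k + 1 => ptW (S (k + 1)) (mixedPG S e k) (e (k + 1)) (x (k + 1)) (ptM S e x k)

/-- The step map. -/
def mkM (S : ℕ → PermGroup) (e : ℕ → Bool) (k : ℕ)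
    (a : (mixedPG S e k).carrier → (S (k + 1)).grp) (g : (mixedPG S e k).grp) :
    (mixedPG S e (k + 1)).grp := mkW (S (k + 1)) (mixedPG S e k) (e (k + 1)) a g

theorem three_le (m : ℕ) (S : Subgroup (Perm (Fin m))) (hperf : commutator S = ⊤)
    (hstab : ∃ i j : Fin m,
      {σ : Perm (Fin m) | σ ∈ S ∧ σ i = i} ≠ {σ : Perm (Fin m) | σ ∈ S ∧ σ j = j}) : 3 ≤ m := by
  by_contra hlt
  have hc : ∀ a b : Perm (Fin m), a * b = b * a := by
    have : m = 0 ∨ m = 1 ∨ m = 2 := by omega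
    rcases this with rfl | rfl | rfl <;> decide
  have h1 : ∀ σ ∈ S, σ = 1 := by
    have hb : (⊤ : Subgroup S) ≤ ⊥ := by
      rw [← hperf, commutator_def, Subgroup.commutator_le]
      intro x _ y _
      rw [Subgroup.mem_bot, commutatorElement_eq_one_iff_mul_comm]
      exact Subtype.ext (hc _ _)
    intro σ hσ
    have := hb (Subgroup.mem_top (⟨σ, hσ⟩ : S))
    rw [Subgroup.mem_bot] at this
    exact congrArg Subtype.val this
  obtain ⟨i, j, hij⟩ := hstab
  apply hij
  ext σ
  constructor
  · rintro ⟨h, _⟩; exact ⟨h, by rw [h1 σ h]; rfl⟩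
  · rintro ⟨h, _⟩; exact ⟨h, by rw [h1 σ h]; rfl⟩

theorem gens_fun {G : Type} [Group G] (d : ℕ)
    (h : ∃ T : Finset G, T.card ≤ d ∧ Subgroup.closure (T : Set G) = ⊤) :
    ∃ t : Fin d → G, Subgroup.closure (Set.range t) = ⊤ := by
  obtain ⟨T, hT, hcl⟩ := h
  refine ⟨fun i => if h : i.1 < T.card then (T.equivFin.symm ⟨i.1, h⟩ : G) else 1, ?_⟩
  rw [eq_top_iff, ← hcl]
  apply Subgroup.closure_mono
  intro x hx
  refine ⟨⟨(T.equivFin ⟨x, hx⟩).1, lt_of_lt_of_le (Fin.is_lt _) hT⟩, ?_⟩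
  simp

end Concrete

/-- **Theorem B.** Here `e k = true` records that the `k`-th step of the iterated mixed
wreath product is an exponentiation (product action) step, i.e. `k` belongs to the set
`{k_n}`; the hypothesis `hstride` says precisely (with the convention `k_0 = 0`) that the
increasing sequence `{k_n}` of exponentiation steps is infinite and satisfies
`k_{n+1} - k_n ≤ mstride` for all `n`, i.e. that the mixed wreath product has stride at
most `mstride`. -/
theorem theoremB (d mstride : ℕ) (hd : 0 < d) (hm : 0 < mstride) (m : ℕ → ℕ)
    (S : ∀ k, Subgroup (Perm (Fin (m k))))
    (htrans : ∀ k, ∀ x y : Fin (m k), ∃ σ ∈ S k, σ x = y)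
    (hperf : ∀ k, commutator (S k) = ⊤)
    (hgen : ∀ k, ∃ T : Finset (S k), T.card ≤ d ∧ Subgroup.closure (T : Set (S k)) = ⊤)
    (hstab : ∀ k, ∃ i j : Fin (m k),
      {σ : Perm (Fin (m k)) | σ ∈ S k ∧ σ i = i} ≠ {σ : Perm (Fin (m k)) | σ ∈ S k ∧ σ j = j})
    (e : ℕ → Bool)
    (hstride : ∀ j : ℕ, ∃ i : ℕ, j < i ∧ i ≤ j + mstride ∧ e i = true) :
    ∃ g : Fin (2 * mstride * d) → (mixedLimit (fun k => ⟨Fin (m k), S k⟩) e),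
      Dense ((Subgroup.closure (Set.range g) :
        Subgroup (mixedLimit (fun k => ⟨Fin (m k), S k⟩) e)) :
          Set (mixedLimit (fun k => ⟨Fin (m k), S k⟩) e)) := by
  classical
  set P : ℕ → PermGroup := fun k => ⟨Fin (m k), S k⟩ with hP
  have hm3 : ∀ k, 3 ≤ m k := fun k => three_le _ _ (hperf k) (hstab k)
  let x : ∀ k, (P k).carrier := fun k => (⟨0, by have := hm3 k; omega⟩ : Fin (m k))
  have htrP : ∀ k (a b : (P k).carrier), ∃ g : (P k).grp, g • a = b := by
    intro k a b
    obtain ⟨σ, hσ, h⟩ := htrans k a b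
    exact ⟨⟨σ, hσ⟩, h⟩
  have hfinP : ∀ k, Finite (P k).carrier := fun k => (inferInstance : Finite (Fin (m k)))
  have hfin : ∀ k, Finite (mixedPG P e k).carrier := by
    intro k
    induction k with
    | zero => exact hfinP 0
    | succ k ih => exact step_finite _ _ _
  have htr : ∀ k (a b : (mixedPG P e k).carrier), ∃ g : (mixedPG P e k).grp, g • a = b := by
    intro k
    induction k with
    | zero => exact htrP 0
    | succ k ih => exact step_trans _ _ _ (htrP (k + 1)) ih
  have h3P : ∀ k, ∃ w1 w2 : (P k).carrier, w1 ≠ x k ∧ w2 ≠ x k ∧ w1 ≠ w2 := by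
    intro k
    refine ⟨(⟨1, by have := hm3 k; omega⟩ : Fin (m k)), (⟨2, by have := hm3 k; omega⟩ : Fin (m k)),
      fun h => ?_, fun h => ?_, fun h => ?_⟩ <;>
    · have h' := congrArg Fin.val h
      simp [x] at h'
  have h3 : ∀ k, ∃ w1 w2 : (mixedPG P e k).carrier,
      w1 ≠ ptM P e x k ∧ w2 ≠ ptM P e x k ∧ w1 ≠ w2 := by
    intro k
    cases k with
    | zero => exact h3P 0
    | succ k =>
      obtain ⟨w1, w2, h1, h2, h12⟩ := h3P (k + 1)
      exact ⟨ptW _ _ (e (k + 1)) w1 (ptM P e x k), ptW _ _ (e (k + 1)) w2 (ptM P e x k),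
        fun h => h1 (ptW_inj _ _ _ _ _ _ h), fun h => h2 (ptW_inj _ _ _ _ _ _ h),
        fun h => h12 (ptW_inj _ _ _ _ _ _ h)⟩
  have hbldL : ∀ s a, bld (mkM P e) s a ∈ mixedLimit P e := fun s a k => mkW_lift _ _ _ _ _
  have hfix : ∀ n s a, (∀ j ≥ n, a j = 1) → ∀ j ≥ n + mstride,
      bld (mkM P e) s a j • ptM P e x j = ptM P e x j := by
    intro n s a ha j hj
    obtain ⟨i, hi1, hi2, hi3⟩ := hstride n
    have : ∀ j ≥ i, bld (mkM P e) s a j • ptM P e x j = ptM P e x j := by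
      intro j hj
      induction j, hj using Nat.le_induction with
      | base =>
        obtain ⟨i, rfl⟩ : ∃ i', i = i' + 1 := ⟨i - 1, by omega⟩
        simp only [bld]
        rw [ha i (by omega)]
        exact ptW_fix _ _ _ _ _ _ (Or.inl hi3)
      | succ j hj ih =>
        simp only [bld]
        rw [ha j (by omega)]
        exact ptW_fix _ _ _ _ _ _ (Or.inr ih)
    exact this j (by omega)
  have hg : ∀ k, ∃ t : Fin d → (P k).grp, Subgroup.closure (Set.range t) = ⊤ :=
    fun k => gens_fun d (hgen k)
  choose t ht using hg
  let gen : Fin d ⊕ (Fin mstride × Fin d) → mixedLimit P e := fun q => match q with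
    | Sum.inl i => ⟨bld (mkM P e) (t 0 i : (P 0).grp) 1, hbldL _ _⟩
    | Sum.inr (r, i) => ⟨bld (mkM P e) 1 (fun k => if k % mstride = r.1 then
        Pi.mulSingle (ptM P e x k) (t (k + 1) i) else 1), hbldL _ _⟩
  have hcard : Fintype.card (Fin d ⊕ (Fin mstride × Fin d)) ≤ Fintype.card (Fin (2 * mstride * d)) := by
    simp only [Fintype.card_sum, Fintype.card_prod, Fintype.card_fin]
    nlinarith
  obtain ⟨emb⟩ := Function.Embedding.nonempty_of_card_le hcard
  haveI : Nonempty (Fin d ⊕ (Fin mstride × Fin d)) := ⟨Sum.inl ⟨0, hd⟩⟩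
  refine ⟨fun i => gen (Function.invFun emb i), ?_⟩
  have hgenmem : ∀ q, gen q ∈ Subgroup.closure
      (Set.range (fun i => gen (Function.invFun emb i))) := by
    intro q
    apply Subgroup.subset_closure
    exact ⟨emb q, by simp only [Function.leftInverse_invFun emb.injective q]⟩
  generalize Subgroup.closure (Set.range (fun i => gen (Function.invFun emb i))) = C at hgenmem ⊢
  let K : Subgroup (∀ k, (mixedPG P e k).grp) := C.map (mixedLimit P e).subtype
  have hmain := abstract_main (G := fun k => (mixedPG P e k).grp) (A := fun k => (P (k + 1)).grp)
    (Ω := fun k => (mixedPG P e k).carrier) (mkM P e)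
    (fun k a b g h => mkW_mul _ _ _ _ _ _ _) (fun k => mkW_one _ _ _)
    (fun k g => mkW_surj _ _ _ g) htr (fun k => hperf (k + 1)) (fun k => t (k + 1))
    (fun k => ht (k + 1)) (ptM P e x) h3 mstride hm hfix K ?_ ?_
  · intro f
    obtain ⟨f, hf⟩ := f
    have : ∀ k, ∃ a, f (k + 1) = mkM P e k a (f k) := fun k => mkW_of_lift _ _ _ _ _ (hf k)
    choose a ha using this
    have hfb : f = bld (mkM P e) (f 0) a := by
      funext k
      induction k with
      | zero => rfl
      | succ k ih => simp only [bld]; rw [← ih]; exact ha k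
    let tr : ℕ → ∀ k, (mixedPG P e k).carrier → (P (k + 1)).grp := fun n k => if k < n then a k else 1
    have hmem : ∀ n, (⟨bld (mkM P e) (f 0) (tr n), hbldL _ _⟩ : mixedLimit P e) ∈ C := by
      intro n
      have := hmain n (f 0) (tr n) (fun j hj => by simp only [tr]; rw [if_neg (by omega)])
      obtain ⟨z, hz, hz'⟩ := this
      have hzz : z = ⟨bld (mkM P e) (f 0) (tr n), hbldL _ _⟩ := Subtype.ext hz'
      rw [← hzz]; exact hz
    refine mem_closure_of_tendsto (b := Filter.atTop) (f := fun n =>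
      (⟨bld (mkM P e) (f 0) (tr n), hbldL _ _⟩ : mixedLimit P e)) ?_
      (Filter.Eventually.of_forall hmem)
    rw [tendsto_subtype_rng, tendsto_pi_nhds]
    intro k
    apply tendsto_const_nhds.congr'
    filter_upwards [Filter.eventually_ge_atTop k] with n hn
    have h1 : f k = bld (mkM P e) (f 0) a k := congrFun hfb k
    show f k = bld (mkM P e) (f 0) (tr n) k
    rw [h1]
    exact bld_congr _ _ _ _ n (fun j hj => by simp only [tr]; rw [if_pos hj]) k hn
  · have hone : ∀ s : (P 0).grp, bld (mkM P e) s 1 ∈ K := by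
      let φ : (P 0).grp →* (∀ k, (mixedPG P e k).grp) := MonoidHom.mk'
        (fun s => bld (mkM P e) s 1) (by
          intro a b
          funext j
          induction j with
          | zero => rfl
          | succ j ih =>
            rw [Pi.mul_apply] at ih ⊢
            simp only [bld]
            rw [ih]
            have hmul := mkW_mul (P (j + 1)) (mixedPG P e j) (e (j + 1)) 1 1
              (bld (mkM P e) a 1 j) (bld (mkM P e) b 1 j)
            have h1 : ((1 : (mixedPG P e j).carrier → (P (j + 1)).grp) * fun i =>
                (1 : (mixedPG P e j).carrier → (P (j + 1)).grp)
                  ((bld (mkM P e) a 1 j)⁻¹ • i)) = 1 := by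
              funext i; simp
            rw [h1] at hmul
            exact hmul.symm)
      have : K.comap φ = ⊤ := by
        rw [eq_top_iff, ← ht 0, Subgroup.closure_le]
        rintro _ ⟨i, rfl⟩
        exact ⟨_, hgenmem (Sum.inl i), rfl⟩
      intro s
      have h : s ∈ K.comap φ := this ▸ Subgroup.mem_top s
      exact h
    exact hone
  · intro r hr i
    exact ⟨_, hgenmem (Sum.inr (⟨r, hr⟩, i)), rfl⟩
end

section
/- Let d and n be positive integers and let S = {S_k ≤ Sym({1,…,m_k})}_{k=1,…,n} be a finite sequence of finite transitive permutation groups such that each S_k is perfect and can be generated by at most d elements, and such that for every k ∈ {1,…,n} there exist points i, j ∈ {1,…,m_k} with St_{S_k}(i) ≠ St_{S_k}(j). Then the iterated exponentiation S̃_n is generated by d + d(S_1) elements; in particular S̃_n is generated by a generating set of S_1 (viewed inside S̃_n as the bottom group) together with d further elements. -/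
open Equiv

/-- The embedding of permutations of the bottom set into the iterated exponentiation:
a permutation `π` of the bottom set gives the permutation `(e,…,e)·π` at every level. -/
def botMap (S : ℕ → PermGroup) : (k : ℕ) → Perm ((S 0).carrier) → Perm ((iterExpP S k).carrier)
  | 0 => fun π => π
  | k + 1 => fun π => prodPerm (fun _ => (1 : Perm ((S (k + 1)).carrier))) (botMap S k π)

/-! ### Abstract wreath products -/

set_option linter.unusedSectionVars false

structure Wr (A X : Type) where
  lab : X → A
  prm : Perm X

namespace Wr

variable {A X : Type} [Group A]

theorem ext' {g h : Wr A X} (h1 : ∀ i, g.lab i = h.lab i) (h2 : g.prm = h.prm) : g = h := by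
  cases g; cases h; congr; exact funext h1

instance : Mul (Wr A X) := ⟨fun g h => ⟨fun i => g.lab i * h.lab (g.prm⁻¹ i), g.prm * h.prm⟩⟩
instance : One (Wr A X) := ⟨⟨fun _ => 1, 1⟩⟩
instance : Inv (Wr A X) := ⟨fun g => ⟨fun i => (g.lab (g.prm i))⁻¹, g.prm⁻¹⟩⟩

theorem mul_lab (g h : Wr A X) (i : X) : (g * h).lab i = g.lab i * h.lab (g.prm⁻¹ i) := rfl
@[simp] theorem mul_prm (g h : Wr A X) : (g * h).prm = g.prm * h.prm := rfl
@[simp] theorem one_lab (i : X) : (1 : Wr A X).lab i = 1 := rfl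
@[simp] theorem one_prm : (1 : Wr A X).prm = 1 := rfl
theorem inv_lab (g : Wr A X) (i : X) : (g⁻¹).lab i = (g.lab (g.prm i))⁻¹ := rfl
@[simp] theorem inv_prm (g : Wr A X) : (g⁻¹).prm = g.prm⁻¹ := rfl

instance : Group (Wr A X) where
  mul_assoc a b c := by
    apply ext'
    · intro i; simp [mul_lab, mul_assoc]
    · simp [mul_assoc]
  one_mul a := by apply ext' <;> simp [mul_lab]
  mul_one a := by apply ext' <;> simp [mul_lab]
  inv_mul_cancel a := by apply ext' <;> simp [mul_lab, inv_lab]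

/-- label of `g` along the edge from `x` to `g x` -/
def c (g : Wr A X) (x : X) : A := g.lab (g.prm x)

@[simp] theorem c_one (x : X) : c (1 : Wr A X) x = 1 := rfl
@[simp] theorem c_mul (g h : Wr A X) (x : X) : c (g * h) x = c g (h.prm x) * c h x := by
  simp [c, mul_lab]
@[simp] theorem c_inv (g : Wr A X) (x : X) : c g⁻¹ x = (c g (g.prm⁻¹ x))⁻¹ := by
  simp [c, inv_lab]
theorem c_inv' (g : Wr A X) {x y : X} (h : g.prm y = x) : c g⁻¹ x = (c g y)⁻¹ := by
  subst h; simp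
theorem prm_inv' (g : Wr A X) {x y : X} (h : g.prm y = x) : (g⁻¹).prm x = y := by
  subst h; simp
theorem prm_inv'' (g : Wr A X) {x y : X} (h : g.prm y = x) : (g.prm)⁻¹ x = y := by
  subst h; simp

def prmHom : Wr A X →* Perm X where
  toFun := prm
  map_one' := rfl
  map_mul' _ _ := rfl

@[simp] theorem pow_prm (g : Wr A X) (n : ℕ) : (g ^ n).prm = g.prm ^ n := map_pow prmHom g n

def baseHom : (X → A) →* Wr A X where
  toFun a := ⟨a, 1⟩
  map_one' := rfl
  map_mul' _ _ := by apply ext' <;> simp [mul_lab]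

/-- `a` is a label of a loop at `x`. -/
def Phi (H : Subgroup (Wr A X)) (x : X) : Subgroup A where
  carrier := {s | ∃ h ∈ H, h.prm x = x ∧ c h x = s}
  one_mem' := ⟨1, H.one_mem, rfl, rfl⟩
  mul_mem' := by
    rintro _ _ ⟨g, hg, g1, rfl⟩ ⟨h, hh, h1, rfl⟩
    exact ⟨g * h, H.mul_mem hg hh, by simp [g1, h1], by simp [h1]⟩
  inv_mem' := by
    rintro _ ⟨g, hg, g1, rfl⟩
    exact ⟨g⁻¹, H.inv_mem hg, prm_inv' g g1, c_inv' g g1⟩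

def NF (H : Subgroup (Wr A X)) (x : X) (F : Set X) : Subgroup A where
  carrier := {s | ∃ h ∈ H, h.prm = 1 ∧ h.lab x = s ∧ ∀ y ∈ F, h.lab y = 1}
  one_mem' := ⟨1, H.one_mem, rfl, rfl, fun _ _ => rfl⟩
  mul_mem' := by
    rintro _ _ ⟨g, hg, g1, rfl, g2⟩ ⟨h, hh, h1, rfl, h2⟩
    refine ⟨g * h, H.mul_mem hg hh, by simp [g1, h1], by simp [mul_lab, g1], ?_⟩
    intro y hy; simp [mul_lab, g1, g2 y hy, h2 y hy]
  inv_mem' := by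
    rintro _ ⟨g, hg, g1, rfl, g2⟩
    refine ⟨g⁻¹, H.inv_mem hg, by simp [g1], by simp [inv_lab, g1], ?_⟩
    intro y hy; simp [inv_lab, g1, g2 y hy]

theorem top_of_comm (hA : commutator A = ⊤) (N : Subgroup A)
    (h : ∀ a b : A, a * b * a⁻¹ * b⁻¹ ∈ N) : N = ⊤ := by
  rw [eq_top_iff, ← hA, commutator_def, Subgroup.commutator_le]
  intro a _ b _
  exact h a b

/-- conjugating a base element by an element `h` -/
theorem conj_lab (h k : Wr A X) (hk : k.prm = 1) (x : X) :
    (h * k * h⁻¹).prm = 1 ∧ (h * k * h⁻¹).lab (h.prm x) = c h x * k.lab x * (c h x)⁻¹ := by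
  constructor
  · simp [hk]
  · simp [mul_lab, inv_lab, hk, c]

/-- trivial-label connectedness -/
def R (H : Subgroup (Wr A X)) (x y : X) : Prop := ∃ h ∈ H, h.prm x = y ∧ c h x = 1

theorem R.refl {H : Subgroup (Wr A X)} (x : X) : R H x x := ⟨1, H.one_mem, rfl, rfl⟩
theorem R.symm {H : Subgroup (Wr A X)} {x y : X} : R H x y → R H y x := by
  rintro ⟨h, hh, h1, h2⟩
  exact ⟨h⁻¹, H.inv_mem hh, prm_inv' h h1, by rw [c_inv' h h1, h2, inv_one]⟩
theorem R.trans {H : Subgroup (Wr A X)} {x y z : X} : R H x y → R H y z → R H x z := by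
  rintro ⟨h, hh, h1, h2⟩ ⟨g, hg, g1, g2⟩
  exact ⟨g * h, H.mul_mem hg hh, by simp [h1, g1], by simp [h1, h2, g2]⟩

theorem Phi_mono {H : Subgroup (Wr A X)} {x y : X} (r : R H x y) : Phi H x ≤ Phi H y := by
  rintro _ ⟨g, hg, g1, rfl⟩
  obtain ⟨h, hh, h1, h2⟩ := r
  refine ⟨h * g * h⁻¹, H.mul_mem (H.mul_mem hh hg) (H.inv_mem hh), ?_, ?_⟩
  · subst h1; simp [g1]
  · subst h1; simp [g1, h2]

theorem NF_mono {H : Subgroup (Wr A X)} {x y : X} (r : R H x y) : NF H x ∅ ≤ NF H y ∅ := by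
  rintro _ ⟨k, hk, k1, rfl, -⟩
  obtain ⟨h, hh, h1, h2⟩ := r
  refine ⟨h * k * h⁻¹, H.mul_mem (H.mul_mem hh hk) (H.inv_mem hh), (conj_lab h k k1 x).1, ?_,
    by simp⟩
  rw [← h1, (conj_lab h k k1 x).2, h2]; simp

theorem NF_normal {H : Subgroup (Wr A X)} {x : X} (F : Set X) (hN : NF H x ∅ = ⊤) (a s : A)
    (hs : s ∈ NF H x F) : a * s * a⁻¹ ∈ NF H x F := by
  have ha : a ∈ NF H x ∅ := by rw [hN]; trivial
  obtain ⟨k, hk, k1, rfl, -⟩ := ha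
  obtain ⟨l, hl, l1, rfl, l2⟩ := hs
  refine ⟨k * l * k⁻¹, H.mul_mem (H.mul_mem hk hl) (H.inv_mem hk), ?_, ?_, ?_⟩
  · simp [k1, l1]
  · simp [mul_lab, inv_lab, k1, l1]
  · intro y hy; simp [mul_lab, inv_lab, k1, l1, l2 y hy]

theorem NF_move {H : Subgroup (Wr A X)} (hN : ∀ x, NF H x ∅ = ⊤) (x y : X)
    (h : Wr A X) (hh : h ∈ H) : NF H x {y} ≤ NF H (h.prm x) {h.prm y} := by
  rintro _ ⟨k, hk, k1, rfl, k2⟩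
  have : c h x * k.lab x * (c h x)⁻¹ ∈ NF H (h.prm x) {h.prm y} := by
    refine ⟨h * k * h⁻¹, H.mul_mem (H.mul_mem hh hk) (H.inv_mem hh), (conj_lab h k k1 x).1,
      (conj_lab h k k1 x).2, ?_⟩
    rintro _ rfl
    rw [(conj_lab h k k1 y).2, k2 y rfl]; simp
  have := NF_normal _ (hN _) (c h x)⁻¹ _ this
  simpa [mul_assoc] using this

theorem NF_swap {H : Subgroup (Wr A X)} (x y : X) (hN : NF H x {y} = ⊤)
    (hy : NF H y ∅ = ⊤) : NF H y {x} = ⊤ := by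
  rw [eq_top_iff]
  intro s _
  have hs : s ∈ NF H y ∅ := by rw [hy]; trivial
  obtain ⟨k, hk, k1, rfl, -⟩ := hs
  have : k.lab x ∈ NF H x {y} := by rw [hN]; trivial
  obtain ⟨l, hl, l1, l2, l3⟩ := this
  refine ⟨k * l⁻¹, H.mul_mem hk (H.inv_mem hl), by simp [k1, l1], ?_, ?_⟩
  · simp [mul_lab, inv_lab, k1, l1, l3 y rfl]
  · rintro _ rfl; simp [mul_lab, inv_lab, k1, l1, l2]

theorem NF_trans {H : Subgroup (Wr A X)} (x y y' : X) (h1 : NF H x {y} ≤ NF H x {y'})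
    (h2 : NF H y' {y} = ⊤) : NF H y' {x} = ⊤ := by
  rw [eq_top_iff]
  intro s _
  have hs : s ∈ NF H y' {y} := by rw [h2]; trivial
  obtain ⟨k, hk, k1, rfl, k2⟩ := hs
  have : k.lab x ∈ NF H x {y'} := h1 ⟨k, hk, k1, rfl, k2⟩
  obtain ⟨l, hl, l1, l2, l3⟩ := this
  refine ⟨k * l⁻¹, H.mul_mem hk (H.inv_mem hl), by simp [k1, l1], ?_, ?_⟩
  · simp [mul_lab, inv_lab, k1, l1, l3 y' rfl]
  · rintro _ rfl; simp [mul_lab, inv_lab, k1, l1, l2]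

theorem NF_finset [Finite X] (hA : commutator A = ⊤) {H : Subgroup (Wr A X)} (x : X)
    (h0 : NF H x ∅ = ⊤) (h1 : ∀ y, y ≠ x → NF H x {y} = ⊤) (F : Finset X) (hF : x ∉ F) :
    NF H x F = ⊤ := by
  classical
  induction F using Finset.induction_on with
  | empty => simpa using h0
  | insert y F hy ih =>
    have ih := ih (fun h => hF (Finset.mem_insert_of_mem h))
    have hyx := h1 y (fun h => hF (by simp [h]))
    refine top_of_comm hA _ fun a b => ?_
    have ha : a ∈ NF H x F := by rw [ih]; trivial
    have hb : b ∈ NF H x {y} := by rw [hyx]; trivial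
    obtain ⟨k, hk, k1, rfl, k2⟩ := ha
    obtain ⟨l, hl, l1, rfl, l2⟩ := hb
    refine ⟨k * l * k⁻¹ * l⁻¹, H.mul_mem (H.mul_mem (H.mul_mem hk hl) (H.inv_mem hk))
      (H.inv_mem hl), by simp [k1, l1], by simp [mul_lab, inv_lab, k1, l1], ?_⟩
    intro w hw
    rcases Finset.mem_insert.1 (Finset.mem_coe.1 hw) with rfl | hw
    · simp [mul_lab, inv_lab, k1, l1, l2 w rfl]
    · simp [mul_lab, inv_lab, k1, l1, k2 w hw]

theorem base_of_single [Finite X] [DecidableEq X] {H : Subgroup (Wr A X)}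
    (h : ∀ x (s : A), (⟨Pi.mulSingle x s, 1⟩ : Wr A X) ∈ H) (a : X → A) :
    (⟨a, 1⟩ : Wr A X) ∈ H := by
  have : a ∈ H.comap baseHom := Subgroup.pi_mem_of_mulSingle_mem a (fun i => h i (a i))
  exact this

theorem full_of_NF [Finite X] (hA : commutator A = ⊤) {H : Subgroup (Wr A X)}
    (h0 : ∀ x, NF H x ∅ = ⊤) (h1 : ∀ x y, x ≠ y → NF H x {y} = ⊤) (a : X → A) :
    (⟨a, 1⟩ : Wr A X) ∈ H := by
  classical
  have := Fintype.ofFinite X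
  refine base_of_single (fun x s => ?_) a
  have hs : s ∈ NF H x (Finset.univ.erase x : Finset X) := by
    rw [NF_finset hA x (h0 x) (fun y hy => h1 x y hy.symm) _ (by simp)]; trivial
  obtain ⟨k, hk, k1, rfl, k2⟩ := hs
  convert hk using 1
  apply ext'
  · intro i
    by_cases hi : i = x
    · subst hi; simp
    · simp [hi, k2 i (by simp [hi])]
  · exact k1.symm

/-- the labelled generator -/
theorem pow_c_off [DecidableEq X] (x : X) (s : A) (g : Perm X) (y : X)
    (hy : ¬ g.SameCycle x y) (j : ℕ) : c ((⟨Pi.mulSingle x s, g⟩ : Wr A X) ^ j) y = 1 := by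
  induction j with
  | zero => rfl
  | succ j ih =>
    rw [pow_succ', c_mul, ih, mul_one, pow_prm]
    have : g ((g ^ j) y) ≠ x := by
      intro h
      apply hy
      refine Perm.SameCycle.symm ⟨(j + 1 : ℕ), ?_⟩
      rw [zpow_natCast, pow_succ']; exact h
    simp only [c]
    rw [Pi.mulSingle_eq_of_ne this]

theorem pow_c_on [DecidableEq X] (x : X) (s : A) (g : Perm X) (j : ℕ)
    (hj : j < Function.minimalPeriod g x) :
    c ((⟨Pi.mulSingle x s, g⟩ : Wr A X) ^ j) x = 1 := by
  induction j with
  | zero => rfl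
  | succ j ih =>
    rw [pow_succ', c_mul, ih (by omega), mul_one, pow_prm]
    have : g ((g ^ j) x) ≠ x := by
      intro h
      have h2 : Function.IsPeriodicPt g (j + 1) x := by
        show (g : X → X)^[j+1] x = x
        rw [← Perm.coe_pow, pow_succ']; exact h
      have := h2.minimalPeriod_le (by omega)
      omega
    simp only [c]
    rw [Pi.mulSingle_eq_of_ne this]

theorem pow_minPer (g : Perm X) (x : X) : (g ^ (Function.minimalPeriod g x)) x = x := by
  rw [Perm.coe_pow]; exact Function.iterate_minimalPeriod

theorem minPer_pos [Finite X] (g : Perm X) (x : X) : 0 < Function.minimalPeriod g x := by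
  apply Function.minimalPeriod_pos_of_mem_periodicPts
  exact ⟨orderOf g, orderOf_pos g, by
    show (g : X → X)^[orderOf g] x = x
    rw [← Perm.coe_pow, pow_orderOf_eq_one]; rfl⟩

theorem pow_c_loop [Finite X] [DecidableEq X] (x : X) (s : A) (g : Perm X) :
    c ((⟨Pi.mulSingle x s, g⟩ : Wr A X) ^ (Function.minimalPeriod g x)) x = s := by
  obtain ⟨l, hl⟩ : ∃ l, Function.minimalPeriod g x = l + 1 :=
    ⟨_, (Nat.succ_pred_eq_of_pos (minPer_pos g x)).symm⟩
  have h1 := pow_minPer g x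
  rw [hl] at h1 ⊢
  rw [pow_succ', c_mul, pow_c_on x s g l (by omega), mul_one, pow_prm]
  rw [pow_succ'] at h1
  simp only [c]
  have : g ((g ^ l) x) = x := h1
  rw [this]; simp

theorem R_gen [Finite X] [DecidableEq X] {H : Subgroup (Wr A X)} (x : X) (s : A) (g : Perm X)
    (hG : (⟨Pi.mulSingle x s, g⟩ : Wr A X) ∈ H) (y : X) : R H y (g y) := by
  by_cases h : g y = x
  · obtain ⟨l, hl⟩ : ∃ l, Function.minimalPeriod g x = l + 1 :=
      ⟨_, (Nat.succ_pred_eq_of_pos (minPer_pos g x)).symm⟩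
    have h1 := pow_minPer g x
    rw [h]
    apply R.symm
    refine ⟨_, H.pow_mem hG l, ?_, pow_c_on x s g l (by omega)⟩
    rw [hl, pow_succ'] at h1
    have h2 : g ((g ^ l) x) = x := h1
    rw [pow_prm]
    exact g.injective (h2.trans h.symm)
  · exact ⟨_, hG, rfl, by simp only [c]; rw [Pi.mulSingle_eq_of_ne h]⟩

/-- Basic consequences for a subgroup generated by trivially lifted elements and labelled ones. -/
theorem R_all [Finite X] [DecidableEq X] {ι : Type} (T : Set (Perm X)) (g : ι → Perm X) (x : ι → X)
    (s : ι → A) (H : Subgroup (Wr A X))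
    (hT : ∀ σ ∈ T, (⟨fun _ => 1, σ⟩ : Wr A X) ∈ H)
    (hg : ∀ i, (⟨Pi.mulSingle (x i) (s i), g i⟩ : Wr A X) ∈ H)
    (p : Perm X) (hp : p ∈ Subgroup.closure (T ∪ Set.range g)) :
    ∀ y, R H y (p y) := by
  induction hp using Subgroup.closure_induction with
  | mem p hp =>
    intro y
    rcases hp with hp | ⟨i, rfl⟩
    · exact ⟨_, hT p hp, rfl, rfl⟩
    · exact R_gen _ _ _ (hg i) y
  | one => exact fun y => R.refl y
  | mul p q _ _ h1 h2 => exact fun y => (h2 y).trans (h1 (q y))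
  | inv p _ h => intro y; have := h (p⁻¹ y); simp at this; exact this.symm

theorem lift_all {ι : Type} (T : Set (Perm X)) (g : ι → Perm X) (G : ι → X → A)
    (H : Subgroup (Wr A X))
    (hT : ∀ σ ∈ T, (⟨fun _ => 1, σ⟩ : Wr A X) ∈ H)
    (hg : ∀ i, (⟨G i, g i⟩ : Wr A X) ∈ H)
    (p : Perm X) (hp : p ∈ Subgroup.closure (T ∪ Set.range g)) :
    ∃ h ∈ H, h.prm = p := by
  have : Subgroup.closure (T ∪ Set.range g) ≤ H.map prmHom := by
    rw [Subgroup.closure_le]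
    rintro p (hp | ⟨i, rfl⟩)
    · exact ⟨_, hT p hp, rfl⟩
    · exact ⟨_, hg i, rfl⟩
  obtain ⟨h, hh, rfl⟩ := this hp
  exact ⟨h, hh, rfl⟩

end Wr

section step

variable {A Y Z : Type} [Group A]

theorem pp_base_mul (a a' : Z → Perm Y) :
    prodPerm a 1 * prodPerm a' 1 = prodPerm (a * a') 1 := by
  rw [prodPerm_mul]; rfl

theorem pp_base_inv (a : Z → Perm Y) : (prodPerm a 1)⁻¹ = prodPerm (a⁻¹) 1 := by
  rw [prodPerm_inv]; rfl

theorem pp_conj (a b : Z → Perm Y) (q : Perm Z) :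
    prodPerm b q * prodPerm a 1 * (prodPerm b q)⁻¹ =
      prodPerm (fun i => b i * a (q⁻¹ i) * (b i)⁻¹) 1 := by
  apply Equiv.ext; intro x; funext i
  simp [prodPerm_inv]

/-- the point stabilizer -/
def stab (B : Subgroup (Perm Y)) (y : Y) : Subgroup (Perm Y) where
  carrier := {b | b ∈ B ∧ b y = y}
  one_mem' := ⟨B.one_mem, rfl⟩
  mul_mem' := by
    rintro a b ⟨ha, ha'⟩ ⟨hb, hb'⟩
    exact ⟨B.mul_mem ha hb, by simp [ha', hb']⟩
  inv_mem' := by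
    rintro a ⟨ha, ha'⟩
    refine ⟨B.inv_mem ha, ?_⟩
    rw [Perm.inv_eq_iff_eq]; exact ha'.symm

theorem pp_fix (B : Subgroup (Perm Y)) (y : Y) (b : Z → Perm Y) (q : Perm Z)
    (hb : ∀ z, b z ∈ stab B y) : prodPerm b q (fun _ => y) = fun _ => y := by
  funext z; simp [(hb z).2]

/-- labels at the constant point of lifts of base elements in `V` -/
def Cg (B : Subgroup (Perm Y)) (H : Subgroup (Wr A (Z → Y))) (y : Y)
    (V : Subgroup (Z → Perm Y)) : Subgroup A where
  carrier := {s | ∃ h ∈ H, ∃ b ∈ V, (∀ z, b z ∈ stab B y) ∧ h.prm = prodPerm b 1 ∧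
    h.c (fun _ => y) = s}
  one_mem' := ⟨1, H.one_mem, 1, V.one_mem, fun _ => Subgroup.one_mem _, prodPerm_one.symm, rfl⟩
  mul_mem' := by
    rintro _ _ ⟨g, hg, b, hb, b1, g1, rfl⟩ ⟨h, hh, b', hb', b1', h1, rfl⟩
    refine ⟨g * h, H.mul_mem hg hh, b * b', V.mul_mem hb hb',
      fun z => Subgroup.mul_mem _ (b1 z) (b1' z), ?_, ?_⟩
    · rw [Wr.mul_prm, g1, h1, pp_base_mul]
    · rw [Wr.c_mul, h1, pp_fix B y _ _ b1']
  inv_mem' := by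
    rintro _ ⟨g, hg, b, hb, b1, g1, rfl⟩
    refine ⟨g⁻¹, H.inv_mem hg, b⁻¹, V.inv_mem hb, fun z => Subgroup.inv_mem _ (b1 z), ?_, ?_⟩
    · rw [Wr.inv_prm, g1, pp_base_inv]
    · exact Wr.c_inv' g (by rw [g1, pp_fix B y _ _ b1])

theorem Cg_conj {B : Subgroup (Perm Y)} {H : Subgroup (Wr A (Z → Y))} {y : Y}
    {V V' : Subgroup (Z → Perm Y)} (h : Wr A (Z → Y)) (hh : h ∈ H) (b : Z → Perm Y) (q : Perm Z)
    (hb : ∀ z, b z ∈ stab B y) (hp : h.prm = prodPerm b q)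
    (hV : ∀ a ∈ V, (∀ z, a z ∈ stab B y) → (fun i => b i * a (q⁻¹ i) * (b i)⁻¹) ∈ V')
    (s : A) (hs : s ∈ Cg B H y V) :
    h.c (fun _ => y) * s * (h.c (fun _ => y))⁻¹ ∈ Cg B H y V' := by
  obtain ⟨k, hk, a, ha, a1, k1, rfl⟩ := hs
  refine ⟨h * k * h⁻¹, H.mul_mem (H.mul_mem hh hk) (H.inv_mem hh), _, hV a ha a1, ?_, ?_, ?_⟩
  · intro z
    exact Subgroup.mul_mem _ (Subgroup.mul_mem _ (hb z) (a1 _)) (Subgroup.inv_mem _ (hb z))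
  · rw [Wr.mul_prm, Wr.mul_prm, Wr.inv_prm, hp, k1, pp_conj]
  · have e1 : h.prm (fun _ => y) = fun _ => y := by rw [hp, pp_fix B y _ _ hb]
    have e2 : k.prm (fun _ => y) = fun _ => y := by rw [k1, pp_fix B y _ _ a1]
    rw [Wr.c_mul, Wr.prm_inv' h e1, Wr.c_inv' h e1, Wr.c_mul, e2]

theorem Cg_mono {B : Subgroup (Perm Y)} {H : Subgroup (Wr A (Z → Y))} {y : Y}
    {V V' : Subgroup (Z → Perm Y)} (h : V ≤ V') : Cg B H y V ≤ Cg B H y V' := by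
  rintro _ ⟨g, hg, b, hb, b1, g1, rfl⟩
  exact ⟨g, hg, b, h hb, b1, g1, rfl⟩

/-- base elements supported on `F` -/
def supp (F : Set Z) : Subgroup (Z → Perm Y) where
  carrier := {b | ∀ z, z ∉ F → b z = 1}
  one_mem' := fun _ _ => rfl
  mul_mem' := by
    intro a b ha hb z hz; simp [ha z hz, hb z hz]
  inv_mem' := by
    intro a ha z hz; simp [ha z hz]

theorem N_top [Finite Z] [Nontrivial Z] (hA : commutator A = ⊤) (B : Subgroup (Perm Y))
    (Q : Subgroup (Perm Z)) (hQ : ∀ x y : Z, ∃ q ∈ Q, q x = y) (T : Set (Perm Z)) (hTQ : T ⊆ Q)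
    (hNC : ∀ W : Subgroup (Perm Z), T ⊆ W → (∀ q ∈ Q, ∀ w ∈ W, q * w * q⁻¹ ∈ W) → Q ≤ W)
    (H : Subgroup (Wr A (Z → Y))) (hprm : ∀ h ∈ H, h.prm ∈ expWr B Q)
    (hlift : ∀ p ∈ expWr B Q, ∃ h ∈ H, h.prm = p)
    (hT : ∀ σ ∈ T, (⟨fun _ => 1, prodPerm (fun _ => 1) σ⟩ : Wr A (Z → Y)) ∈ H) (y : Y)
    (hPhi : Wr.Phi H (fun _ => y) = ⊤) : Wr.NF H (fun _ => y) ∅ = ⊤ := by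
  classical
  -- every element of A is a label of a nice element
  have hall : ∀ s : A, ∃ h ∈ H, ∃ b q, (∀ z, b z ∈ stab B y) ∧ q ∈ Q ∧ h.prm = prodPerm b q ∧
      h.c (fun _ => y) = s := by
    intro s
    have hs : s ∈ Wr.Phi H (fun _ => y) := by rw [hPhi]; trivial
    obtain ⟨h, hh, h1, rfl⟩ := hs
    obtain ⟨b, q, hb, hq, e⟩ := hprm h hh
    refine ⟨h, hh, b, q, fun z => ⟨hb z, ?_⟩, hq, e, rfl⟩
    rw [e] at h1
    exact congrFun h1 z
  have hlift' : ∀ q ∈ Q, ∀ b : Z → Perm Y, (∀ z, b z ∈ stab B y) →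
      ∃ h ∈ H, h.prm = prodPerm b q := by
    intro q hq b hb
    exact hlift _ ⟨b, q, fun z => (hb z).1, hq, rfl⟩
  set C := Cg B H y ⊤ with hC
  have Cn : ∀ a s : A, s ∈ C → a * s * a⁻¹ ∈ C := by
    intro a s hs
    obtain ⟨h, hh, b, q, hb, hq, e, rfl⟩ := hall a
    exact Cg_conj (V' := ⊤) h hh b q hb e (fun _ _ _ => Subgroup.mem_top _) s hs
  let W : Subgroup (Perm Z) :=
    { carrier := {q | ∃ h ∈ H, ∃ b, (∀ z, b z ∈ stab B y) ∧ h.prm = prodPerm b q ∧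
        h.c (fun _ => y) ∈ C}
      one_mem' := ⟨1, H.one_mem, fun _ => 1, fun _ => Subgroup.one_mem _, prodPerm_one.symm,
        C.one_mem⟩
      mul_mem' := by
        rintro q q' ⟨g, hg, b, hb, g1, g2⟩ ⟨h, hh, b', hb', h1, h2⟩
        refine ⟨g * h, H.mul_mem hg hh, _, ?_, by rw [Wr.mul_prm, g1, h1, prodPerm_mul], ?_⟩
        · intro z; exact Subgroup.mul_mem _ (hb z) (hb' _)
        · rw [Wr.c_mul, h1, pp_fix B y _ _ hb']
          exact C.mul_mem g2 h2
      inv_mem' := by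
        rintro q ⟨g, hg, b, hb, g1, g2⟩
        refine ⟨g⁻¹, H.inv_mem hg, _, ?_, by rw [Wr.inv_prm, g1, prodPerm_inv], ?_⟩
        · intro z; exact Subgroup.inv_mem _ (hb _)
        · rw [Wr.c_inv' g (show g.prm (fun _ => y) = _ by rw [g1, pp_fix B y _ _ hb])]
          exact C.inv_mem g2 }
  have hW : Q ≤ W := by
    apply hNC
    · intro σ hσ
      exact ⟨_, hT σ hσ, _, fun _ => Subgroup.one_mem _, rfl, C.one_mem⟩
    · rintro q hq w ⟨g, hg, b, hb, g1, g2⟩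
      obtain ⟨h, hh, h1⟩ := hlift' q hq (fun _ => 1) (fun _ => Subgroup.one_mem _)
      have e1 : h.prm (fun _ => y) = fun _ => y := by
        rw [h1, pp_fix B y _ _ (fun _ => Subgroup.one_mem _)]
      refine ⟨h * g * h⁻¹, H.mul_mem (H.mul_mem hh hg) (H.inv_mem hh), _, ?_,
        by rw [Wr.mul_prm, Wr.mul_prm, Wr.inv_prm, h1, g1, prodPerm_inv, prodPerm_mul,
          prodPerm_mul], ?_⟩
      · intro z
        simpa using hb _
      · have e2 : g.prm (fun _ => y) = fun _ => y := by rw [g1, pp_fix B y _ _ hb]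
        rw [Wr.c_mul, Wr.prm_inv' h e1, Wr.c_inv' h e1, Wr.c_mul, e2]
        exact Cn _ _ g2
  have hCtop : C = ⊤ := by
    rw [eq_top_iff]
    intro s _
    obtain ⟨h, hh, b, q, hb, hq, e, rfl⟩ := hall s
    obtain ⟨g, hg, b', hb', g1, g2⟩ := hW hq
    have e2 : g.prm (fun _ => y) = fun _ => y := by rw [g1, pp_fix B y _ _ hb']
    have : (h * g⁻¹).c (fun _ => y) ∈ C := by
      refine ⟨h * g⁻¹, H.mul_mem hh (H.inv_mem hg), fun i => b i * (b' i)⁻¹, trivial, ?_, ?_, rfl⟩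
      · intro z; exact Subgroup.mul_mem _ (hb z) (Subgroup.inv_mem _ (hb' z))
      · rw [Wr.mul_prm, Wr.inv_prm, e, g1, prodPerm_inv, prodPerm_mul]
        simp
    rw [Wr.c_mul, Wr.prm_inv' g e2, Wr.c_inv' g e2] at this
    have := C.mul_mem this g2
    simpa using this
  -- the coordinate subgroups
  let D : Z → Subgroup A := fun z => Cg B H y (supp {z})
  have hND : ∀ z, Cg B H y ⊥ ≤ D z := fun z => Cg_mono bot_le
  have hDtop : ∀ s : A, s ∈ ⨆ z, D z := by
    have key : ∀ F : Finset Z, Cg B H y (supp (F : Set Z)) ≤ ⨆ z, D z := by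
      intro F
      induction F using Finset.induction_on with
      | empty =>
        obtain ⟨z⟩ : Nonempty Z := inferInstance
        refine le_trans ?_ (le_iSup D z)
        exact Cg_mono (fun b hb w hw => hb w (by simp))
      | insert z F hz ih =>
        rintro _ ⟨g, hg, b, hb, b1, g1, rfl⟩
        have hst : ∀ w, (Pi.mulSingle z (b z) : Z → Perm Y) w ∈ stab B y := by
          intro w
          by_cases hw : w = z
          · subst hw; simpa using b1 w
          · simp [hw, Subgroup.one_mem]
        obtain ⟨h, hh, h1⟩ := hlift' 1 Q.one_mem (Pi.mulSingle z (b z)) hst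
        have e1 : h.prm (fun _ => y) = fun _ => y := by rw [h1, pp_fix B y _ _ hst]
        have e2 : g.prm (fun _ => y) = fun _ => y := by rw [g1, pp_fix B y _ _ b1]
        have m1 : h.c (fun _ => y) ∈ ⨆ z, D z := by
          refine Subgroup.mem_iSup_of_mem z ⟨h, hh, _, ?_, hst, h1, rfl⟩
          intro w hw
          have : w ≠ z := hw
          simp [this]
        have m2 : (h⁻¹ * g).c (fun _ => y) ∈ ⨆ z, D z := by
          refine ih ⟨h⁻¹ * g, H.mul_mem (H.inv_mem hh) hg, (Pi.mulSingle z (b z))⁻¹ * b, ?_, ?_,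
            ?_, rfl⟩
          · intro w hw
            by_cases hwz : w = z
            · subst hwz; simp
            · have := hb w (by simpa [hwz] using hw)
              simp [hwz, this]
          · intro w; exact Subgroup.mul_mem _ (Subgroup.inv_mem _ (hst w)) (b1 w)
          · rw [Wr.mul_prm, Wr.inv_prm, h1, g1, pp_base_inv, pp_base_mul]
        have := Subgroup.mul_mem _ m1 m2
        rw [Wr.c_mul, e2, Wr.c_inv' h e1] at this
        simpa using this
    intro s
    have := Fintype.ofFinite Z
    have hs : s ∈ C := by rw [hCtop]; trivial
    refine key Finset.univ ?_
    refine Cg_mono ?_ hs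
    intro b _ z hz
    simp at hz
  have hcomm : ∀ z z', z ≠ z' → ∀ s ∈ D z, ∀ t ∈ D z', s * t * s⁻¹ * t⁻¹ ∈ Cg B H y ⊥ := by
    rintro z z' hzz _ ⟨g, hg, b, hb, b1, g1, rfl⟩ _ ⟨h, hh, b', hb', b1', h1, rfl⟩
    have e1 : h.prm (fun _ => y) = fun _ => y := by rw [h1, pp_fix B y _ _ b1']
    have e2 : g.prm (fun _ => y) = fun _ => y := by rw [g1, pp_fix B y _ _ b1]
    refine ⟨g * h * g⁻¹ * h⁻¹, H.mul_mem (H.mul_mem (H.mul_mem hg hh) (H.inv_mem hg))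
      (H.inv_mem hh), 1, Subgroup.one_mem _, fun _ => Subgroup.one_mem _, ?_, ?_⟩
    · simp only [Wr.mul_prm, Wr.inv_prm, g1, h1, pp_base_inv, pp_base_mul]
      congr 1
      funext w
      by_cases hw : w = z
      · have : b' w = 1 := hb' w (by intro h; exact hzz (hw.symm.trans h))
        simp [this]
      · have : b w = 1 := hb w hw
        simp [this]
    · simp only [Wr.c_mul, Wr.prm_inv' h e1, Wr.prm_inv' g e2, Wr.c_inv' h e1, Wr.c_inv' g e2, e1,
        e2]
  have hDn : ∀ z, ∀ a s : A, s ∈ D z → a * s * a⁻¹ ∈ D z := by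
    intro z a
    have ha := hDtop a
    induction ha using Subgroup.iSup_induction' with
    | hp w a ha =>
      intro s hs
      by_cases hw : w = z
      · subst hw
        exact (D w).mul_mem ((D w).mul_mem ha hs) ((D w).inv_mem ha)
      · have := (D z).mul_mem (hND z (hcomm w z hw a ha s hs)) hs
        simpa using this
    | h1 => intro s hs; simpa using hs
    | hmul a b _ _ h1 h2 =>
      intro s hs
      have := h1 _ (h2 s hs)
      simpa [mul_assoc] using this
  have hDle : ∀ z z', D z ≤ D z' := by
    intro z z' s hs
    obtain ⟨q, hq, hqz⟩ := hQ z z'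
    obtain ⟨h, hh, h1⟩ := hlift' q hq (fun _ => 1) (fun _ => Subgroup.one_mem _)
    have := Cg_conj (V' := supp {z'}) h hh _ q (fun _ => Subgroup.one_mem _) h1 ?_ s hs
    · have := hDn z' (h.c (fun _ => y))⁻¹ _ this
      simpa [mul_assoc] using this
    · intro a ha _ w hw
      have : a (q⁻¹ w) = 1 := by
        apply ha
        intro h
        apply hw
        have h : q⁻¹ w = z := h
        rw [Perm.inv_eq_iff_eq] at h
        exact h.trans hqz
      simp only [this]; simp
  have hDT : ∀ z, D z = ⊤ := by
    intro z
    rw [eq_top_iff]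
    intro s _
    exact (iSup_le (fun w => hDle w z)) (hDtop s)
  obtain ⟨z, z', hzz⟩ := exists_pair_ne Z
  refine Wr.top_of_comm hA _ fun a b => ?_
  obtain ⟨h, hh, b', hb', b1, h1, h2⟩ := hcomm z z' hzz a (by rw [hDT]; trivial) b
    (by rw [hDT]; trivial)
  have hb1 : b' = 1 := hb'
  have hp : h.prm = 1 := by rw [h1, hb1]; exact prodPerm_one
  refine ⟨h, hh, hp, ?_, by simp⟩
  rw [← h2]; simp [Wr.c, hp]

end step

section position

variable {Y Z : Type}

theorem zpow_form [DecidableEq Z] (B : Subgroup (Perm Y)) (z : Z) (β : Perm Y) (hβ : β ∈ B)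
    (q : Perm Z) (k : ℤ) :
    ∃ b : Z → Perm Y, (∀ w, b w ∈ B) ∧ (∀ w, ¬ q.SameCycle z w → b w = 1) ∧
      prodPerm (Pi.mulSingle z β) q ^ k = prodPerm b (q ^ k) := by
  have hm : ∀ w, (Pi.mulSingle z β : Z → Perm Y) w ∈ B := by
    intro w
    by_cases h : w = z
    · subst h; simpa using hβ
    · rw [Pi.mulSingle_eq_of_ne h]; exact B.one_mem
  have hm1 : ∀ w, ¬ q.SameCycle z w → (Pi.mulSingle z β : Z → Perm Y) w = 1 := by
    intro w h
    apply Pi.mulSingle_eq_of_ne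
    rintro rfl
    exact h (Perm.SameCycle.refl _ _)
  induction k with
  | zero => exact ⟨fun _ => 1, fun _ => B.one_mem, fun _ _ => rfl, by simp [prodPerm_one]⟩
  | succ n ih =>
    obtain ⟨b, h1, h2, h3⟩ := ih
    refine ⟨fun i => b i * (Pi.mulSingle z β : Z → Perm Y) ((q ^ (n : ℤ))⁻¹ i),
      fun w => B.mul_mem (h1 w) (hm _), ?_, ?_⟩
    · intro w hw
      show b w * _ = 1
      rw [h2 w hw, one_mul, hm1]
      rw [← zpow_neg, Perm.sameCycle_zpow_right]
      exact hw
    · rw [zpow_add_one, zpow_add_one, h3, prodPerm_mul]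
  | pred n ih =>
    obtain ⟨b, h1, h2, h3⟩ := ih
    refine ⟨fun i => b i * ((Pi.mulSingle z β : Z → Perm Y) (q ((q ^ (-(n : ℤ)))⁻¹ i)))⁻¹,
      fun w => B.mul_mem (h1 w) (B.inv_mem (hm _)), ?_, ?_⟩
    · intro w hw
      show b w * _ = 1
      rw [h2 w hw, one_mul, hm1, inv_one]
      rw [← zpow_neg, Perm.sameCycle_apply_right, Perm.sameCycle_zpow_right]
      exact hw
    · rw [zpow_sub_one, zpow_sub_one, h3, prodPerm_inv, prodPerm_mul]

theorem position [DecidableEq Z] (B : Subgroup (Perm Y)) (β : Perm Y) (hβ : β ∈ B) (v : Y)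
    (hv : β v ≠ v) (q : Perm Z) (z zs : Z) (hzs : ¬ q.SameCycle z zs) (u y0 : Y)
    (b0 : Perm Y) (hb0 : b0 ∈ B) (hu : b0 u = u) (hy0 : b0 y0 ≠ y0) (g : Perm (Z → Y))
    (hg : g = prodPerm (Pi.mulSingle z β) q) :
    ∃ x : Z → Y,
      (∀ y : Z → Y, y zs ≠ x zs → (∀ w, w ≠ zs → y w = x w) →
        ¬ g.SameCycle x y ∧ (g ^ (Function.minimalPeriod g x)) y = y) ∧
      (∀ y : Z → Y, y zs ≠ x zs → (∀ w, ∀ b ∈ B, b (x w) = x w → b (y w) = y w) →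
        ¬ g.SameCycle x y ∧ (g ^ (Function.minimalPeriod g x)) y = y) := by
  classical
  have huy : u ≠ y0 := by rintro rfl; exact hy0 hu
  obtain ⟨rep, hr1, hr2⟩ : ∃ rep : Z → Z, (∀ w, q.SameCycle (rep w) w) ∧
      (∀ w w', q.SameCycle w w' → rep w = rep w') := by
    refine ⟨fun w => (Quotient.mk (Perm.SameCycle.setoid q) w).out, ?_, ?_⟩
    · intro w
      exact Quotient.exact (Quotient.out_eq (Quotient.mk (Perm.SameCycle.setoid q) w))
    · intro w w' h
      have : Quotient.mk (Perm.SameCycle.setoid q) w = Quotient.mk (Perm.SameCycle.setoid q) w' :=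
        Quotient.sound h
      simp only [this]
  obtain ⟨x, hx⟩ : ∃ x : Z → Y, x = fun w =>
    if q.SameCycle z w then v else if w = rep w then u else y0 := ⟨_, rfl⟩
  have hO : ∀ w, q.SameCycle z w → x w = v := by intro w h; rw [hx]; simp [h]
  have hR : ∀ w, ¬ q.SameCycle z w → w = rep w → x w = u := by
    intro w h h'; rw [hx]; simp only [h, if_false]; rw [if_pos h']
  have hR' : ∀ w, ¬ q.SameCycle z w → w ≠ rep w → x w = y0 := by
    intro w h h'; rw [hx]; simp only [h, if_false]; rw [if_neg h']
  have hRu : ∀ w, ¬ q.SameCycle z w → x w = u → w = rep w := by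
    intro w h h'
    by_contra hne
    exact huy (h'.symm.trans (hR' w h hne))
  have hrr : ∀ w, rep (rep w) = rep w := fun w => hr2 _ _ (hr1 w)
  have hrk : ∀ w (k : ℤ), rep ((q ^ k) w) = rep w := fun w k =>
    hr2 _ _ (by rw [Perm.sameCycle_zpow_left])
  have hoff : ∀ w, ¬ q.SameCycle z w → ¬ q.SameCycle z (rep w) := fun w h h' => h (h'.trans (hr1 w))
  have hoffk : ∀ w (k : ℤ), ¬ q.SameCycle z w → ¬ q.SameCycle z ((q ^ k) w) := fun w k h h' =>
    h (by rwa [Perm.sameCycle_zpow_right] at h')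
  have hcomm : ∀ (k : ℤ) w w', q.SameCycle w w' → (q ^ k) w = w → (q ^ k) w' = w' := by
    rintro k w w' ⟨n, rfl⟩ h
    rw [← Perm.mul_apply, ← zpow_add, add_comm, zpow_add, Perm.mul_apply, h]
  -- evaluation of a power of g at a shifted point
  have hev : ∀ k : ℤ, ∃ b : Z → Perm Y, (∀ w, b w ∈ B) ∧ (∀ w, ¬ q.SameCycle z w → b w = 1) ∧
      ∀ (y : Z → Y) w, (g ^ k) y ((q ^ k) w) = b ((q ^ k) w) (y w) := by
    intro k
    obtain ⟨b, h1, h2, h3⟩ := zpow_form B z β hβ q k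
    refine ⟨b, h1, h2, ?_⟩
    intro y w
    rw [hg, h3, prodPerm_apply]
    simp
  have hA : ∀ k : ℤ, (g ^ k) x = x → q ^ k = 1 := by
    intro k hk
    obtain ⟨b, h1, h2, h3⟩ := hev k
    ext w
    show (q ^ k) w = w
    by_cases hw : q.SameCycle z w
    · apply hcomm k z w hw
      by_contra hne
      have e1 := h3 x z
      rw [hk, hO z (Perm.SameCycle.refl _ _),
        hO _ (by rw [Perm.sameCycle_zpow_right])] at e1
      have e2 := h3 (g x) z
      have e3 : (g ^ k) (g x) = g x := by
        rw [← Perm.mul_apply, ((Commute.refl g).zpow_left k).eq, Perm.mul_apply, hk]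
      rw [e3, hg, prodPerm_apply, prodPerm_apply, Pi.mulSingle_eq_same,
        Pi.mulSingle_eq_of_ne hne,
        hO _ (by rw [← zpow_neg_one, Perm.sameCycle_zpow_right, Perm.sameCycle_zpow_right]),
        hO _ (by rw [← zpow_neg_one, Perm.sameCycle_zpow_right])] at e2
      simp only [Perm.one_apply] at e2
      exact hv ((b _).injective (e2.symm.trans e1))
    · apply hcomm k (rep w) w (hr1 w)
      have e1 := h3 x (rep w)
      rw [hk, h2 _ (hoffk _ _ (hoff _ hw)), Perm.one_apply, hR _ (hoff _ hw) (hrr w).symm] at e1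
      have e2 := hRu _ (hoffk _ _ (hoff _ hw)) e1
      rw [hrk, hrr] at e2
      exact e2
  have hper : ∃ b : Z → Perm Y, (∀ w, b w ∈ B) ∧ (∀ w, ¬ q.SameCycle z w → b w = 1) ∧
      (∀ (y : Z → Y) w, (g ^ (Function.minimalPeriod g x)) y w = b w (y w)) ∧
      ∀ w, b w (x w) = x w := by
    have h0 := Wr.pow_minPer g x
    obtain ⟨b, h1, h2, h3⟩ := hev (Function.minimalPeriod g x : ℤ)
    have hq := hA (Function.minimalPeriod g x : ℤ) (by rw [zpow_natCast]; exact h0)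
    rw [hq] at h3
    simp only [zpow_natCast, Perm.one_apply] at h3
    refine ⟨b, h1, h2, h3, ?_⟩
    intro w
    rw [← h3, h0]
  obtain ⟨b, h1, h2, h3, h4⟩ := hper
  refine ⟨x, ?_, ?_⟩
  · intro y hy hyw
    refine ⟨?_, ?_⟩
    · rintro ⟨k, hk⟩
      obtain ⟨c, c1, c2, c3⟩ := hev k
      have e : ∀ w, ¬ q.SameCycle z w → y ((q ^ k) w) = x w := by
        intro w hw
        have := c3 x w
        rwa [hk, c2 _ (hoffk _ _ hw), Perm.one_apply] at this
      by_cases hf : (q ^ k) (rep zs) = rep zs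
      · apply hy
        have := e zs hzs
        rwa [hcomm k _ _ (hr1 zs) hf] at this
      · have hne : (q ^ k) (rep zs) ≠ rep ((q ^ k) (rep zs)) := by rw [hrk, hrr]; exact hf
        have a1 := e (rep zs) (hoff _ hzs)
        rw [hR _ (hoff _ hzs) (hrr zs).symm] at a1
        have a2 := hR' _ (hoffk _ k (hoff _ hzs)) hne
        have a3 : (q ^ k) (rep zs) = zs := by
          by_contra h
          have := hyw _ h
          rw [a1, a2] at this
          exact huy this
        -- now the preimage of the representative
        have b1 := e ((q ^ (-k)) (rep zs)) (hoffk _ _ (hoff _ hzs))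
        rw [← Perm.mul_apply, ← zpow_add, add_neg_cancel, zpow_zero, Perm.one_apply] at b1
        have b2 : rep zs ≠ zs := by
          intro h; apply hf; rw [a3]; exact h.symm
        rw [hyw _ b2, hR _ (hoff _ hzs) (hrr zs).symm] at b1
        have b3 := hRu _ (hoffk _ _ (hoff _ hzs)) b1.symm
        rw [hrk, hrr] at b3
        apply hf
        have b4 := congrArg (q ^ k) b3
        rw [← Perm.mul_apply, ← zpow_add, add_neg_cancel, zpow_zero, Perm.one_apply] at b4
        exact b4.symm
    · funext w
      rw [h3]
      by_cases hw : w = zs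
      · rw [hw, h2 _ hzs, Perm.one_apply]
      · rw [hyw w hw, h4]
  · intro y hy hyw
    refine ⟨?_, ?_⟩
    · rintro ⟨k, hk⟩
      obtain ⟨c, c1, c2, c3⟩ := hev k
      have e : ∀ w, ¬ q.SameCycle z w → y ((q ^ k) w) = x w := by
        intro w hw
        have := c3 x w
        rwa [hk, c2 _ (hoffk _ _ hw), Perm.one_apply] at this
      have b1 := e ((q ^ (-k)) (rep zs)) (hoffk _ _ (hoff _ hzs))
      rw [← Perm.mul_apply, ← zpow_add, add_neg_cancel, zpow_zero, Perm.one_apply] at b1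
      have hf : (q ^ k) (rep zs) = rep zs := by
        by_cases hn : (q ^ (-k)) (rep zs) = rep ((q ^ (-k)) (rep zs))
        · rw [hrk, hrr] at hn
          have b4 := congrArg (q ^ k) hn
          rw [← Perm.mul_apply, ← zpow_add, add_neg_cancel, zpow_zero, Perm.one_apply] at b4
          exact b4.symm
        · exfalso
          rw [hR' _ (hoffk _ _ (hoff _ hzs)) hn] at b1
          have := hyw (rep zs) b0 hb0
          rw [hR _ (hoff _ hzs) (hrr zs).symm, b1] at this
          exact hy0 (this hu)
      apply hy
      have := e zs hzs
      rwa [hcomm k _ _ (hr1 zs) hf] at this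
    · funext w
      rw [h3]
      exact hyw w _ (h1 w) (h4 w)

end position

section stepthm

theorem central_top {A ι : Type} [Group A] (hA : commutator A = ⊤) (α : ι → A)
    (hα : Subgroup.closure (Set.range α) = ⊤) (N : Subgroup A)
    (hN : ∀ a s, s ∈ N → a * s * a⁻¹ ∈ N) (h : ∀ i a, a * α i * a⁻¹ * (α i)⁻¹ ∈ N) : N = ⊤ := by
  apply Wr.top_of_comm hA
  have key : ∀ s : A, ∀ a, a * s * a⁻¹ * s⁻¹ ∈ N := by
    intro s
    have hs : s ∈ Subgroup.closure (Set.range α) := by rw [hα]; trivial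
    induction hs using Subgroup.closure_induction with
    | mem s hs => obtain ⟨i, rfl⟩ := hs; exact h i
    | one => intro a; simp [N.one_mem]
    | mul s t _ _ h1 h2 =>
      intro a
      have := N.mul_mem (h1 a) (hN s _ (h2 a))
      convert this using 1
      group
    | inv s _ h1 =>
      intro a
      have := hN s⁻¹ _ (N.inv_mem (h1 a))
      convert this using 1
      group
  exact fun a b => key b a

theorem NF_comm {A X : Type} [Group A] [Finite X] [DecidableEq X] {H : Subgroup (Wr A X)}
    (x y : X) (s : A) (g : Perm X) (hG : (⟨Pi.mulSingle x s, g⟩ : Wr A X) ∈ H)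
    (h1 : ¬ g.SameCycle x y) (h2 : (g ^ (Function.minimalPeriod g x)) y = y)
    (hN : Wr.NF H x ∅ = ⊤) (a : A) : a * s * a⁻¹ * s⁻¹ ∈ Wr.NF H x {y} := by
  have ha : a ∈ Wr.NF H x ∅ := by rw [hN]; trivial
  obtain ⟨k, hk, k1, rfl, -⟩ := ha
  obtain ⟨P, hP⟩ : ∃ P, P = (⟨Pi.mulSingle x s, g⟩ : Wr A X) ^ (Function.minimalPeriod g x) :=
    ⟨_, rfl⟩
  have hPH : P ∈ H := by rw [hP]; exact H.pow_mem hG _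
  have c1 : P.c x = s := by rw [hP]; exact Wr.pow_c_loop x s g
  have c2 : P.c y = 1 := by rw [hP]; exact Wr.pow_c_off x s g y h1 _
  have p1 : P.prm x = x := by rw [hP, Wr.pow_prm]; exact Wr.pow_minPer g x
  have p2 : P.prm y = y := by rw [hP, Wr.pow_prm]; exact h2
  have hk' : (k⁻¹).prm = 1 := by simp [k1]
  have q1 := Wr.conj_lab P k⁻¹ hk' x
  have q2 := Wr.conj_lab P k⁻¹ hk' y
  rw [p1, c1, Wr.inv_lab, k1, Perm.one_apply] at q1
  rw [p2, c2, Wr.inv_lab, k1, Perm.one_apply] at q2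
  refine ⟨k * (P * k⁻¹ * P⁻¹), H.mul_mem hk (H.mul_mem (H.mul_mem hPH (H.inv_mem hk))
    (H.inv_mem hPH)), ?_, ?_, ?_⟩
  · rw [Wr.mul_prm, k1, q1.1, one_mul]
  · rw [Wr.mul_lab, k1, inv_one, Perm.one_apply, q1.2]; group
  · rintro _ rfl
    rw [Wr.mul_lab, k1, inv_one, Perm.one_apply, q2.2]; group

variable {A Y Z ι : Type} [Group A]

theorem step_thm [Finite Y] [Finite Z] [Nontrivial Z] [DecidableEq Z] [DecidableEq (Z → Y)]
    (hA : commutator A = ⊤) (α : ι → A) (hα : Subgroup.closure (Set.range α) = ⊤)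
    (B : Subgroup (Perm Y)) (hB : ∀ x y : Y, ∃ b ∈ B, b x = y)
    (Q : Subgroup (Perm Z)) (hQ : ∀ x y : Z, ∃ q ∈ Q, q x = y) (T : Set (Perm Z)) (hTQ : T ⊆ Q)
    (hNC : ∀ W : Subgroup (Perm Z), T ⊆ W → (∀ q ∈ Q, ∀ w ∈ W, q * w * q⁻¹ ∈ W) → Q ≤ W)
    (g' : ι → Perm Z) (hg' : ∀ i, g' i ∈ Q) (β : ι → Perm Y) (hβ : ∀ i, β i ∈ B)
    (hβ1 : ∀ i, β i ≠ 1) (z : ι → Z) (hz : ∀ i, ∃ w, ¬ (g' i).SameCycle (z i) w)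
    (g : ι → Perm (Z → Y)) (hg : ∀ i, g i = prodPerm (Pi.mulSingle (z i) (β i)) (g' i))
    (hcl : Subgroup.closure ((fun σ => prodPerm (fun _ => 1) σ) '' T ∪ Set.range g) = expWr B Q)
    (u y0 : Y) (b0 : Perm Y) (hb0 : b0 ∈ B) (hu : b0 u = u) (hy0 : b0 y0 ≠ y0) :
    ∃ x : ι → (Z → Y), (∀ i, ∃ y, ¬ (g i).SameCycle (x i) y) ∧
      ∀ H : Subgroup (Wr A (Z → Y)),
        (∀ σ ∈ T, (⟨fun _ => 1, prodPerm (fun _ => 1) σ⟩ : Wr A (Z → Y)) ∈ H) →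
        (∀ i, (⟨Pi.mulSingle (x i) (α i), g i⟩ : Wr A (Z → Y)) ∈ H) →
        ∀ a, ∀ p ∈ expWr B Q, (⟨a, p⟩ : Wr A (Z → Y)) ∈ H := by
  have huy : u ≠ y0 := by rintro rfl; exact hy0 hu
  choose zs hzs using hz
  have hpos : ∀ i, ∃ x : Z → Y,
      (∀ y : Z → Y, y (zs i) ≠ x (zs i) → (∀ w, w ≠ zs i → y w = x w) →
        ¬ (g i).SameCycle x y ∧ ((g i) ^ (Function.minimalPeriod (g i) x)) y = y) ∧
      (∀ y : Z → Y, y (zs i) ≠ x (zs i) → (∀ w, ∀ b ∈ B, b (x w) = x w → b (y w) = y w) →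
        ¬ (g i).SameCycle x y ∧ ((g i) ^ (Function.minimalPeriod (g i) x)) y = y) := by
    intro i
    obtain ⟨v, hv⟩ : ∃ v, β i v ≠ v := by
      by_contra! h
      exact hβ1 i (Equiv.ext h)
    exact position B (β i) (hβ i) v hv (g' i) (z i) (zs i) (hzs i) u y0 b0 hb0 hu hy0 (g i) (hg i)
  choose X hX1 hX2 using hpos
  refine ⟨X, ?_, ?_⟩
  · intro i
    obtain ⟨y, hy⟩ : ∃ y : Y, y ≠ X i (zs i) := by
      by_cases h : u = X i (zs i)
      · exact ⟨y0, fun h' => huy (h.trans h'.symm)⟩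
      · exact ⟨u, h⟩
    refine ⟨Function.update (X i) (zs i) y, (hX1 i _ ?_ ?_).1⟩
    · simpa using hy
    · intro w hw; simp [hw]
  -- reduce to the generated subgroup
  suffices main : ∀ H : Subgroup (Wr A (Z → Y)), (∀ h ∈ H, h.prm ∈ expWr B Q) →
      (∀ σ ∈ T, (⟨fun _ => 1, prodPerm (fun _ => 1) σ⟩ : Wr A (Z → Y)) ∈ H) →
      (∀ i, (⟨Pi.mulSingle (X i) (α i), g i⟩ : Wr A (Z → Y)) ∈ H) →
      ∀ a, ∀ p ∈ expWr B Q, (⟨a, p⟩ : Wr A (Z → Y)) ∈ H by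
    intro H h1 h2 a p hp
    have hgE : ∀ i, g i ∈ expWr B Q := fun i => by
      rw [← hcl]; exact Subgroup.subset_closure (Or.inr ⟨i, rfl⟩)
    have := main (H ⊓ (expWr B Q).comap Wr.prmHom) (fun h hh => hh.2)
      (fun σ hσ => ⟨h1 σ hσ, ⟨fun _ => 1, σ, fun _ => B.one_mem, hTQ hσ, rfl⟩⟩)
      (fun i => ⟨h2 i, hgE i⟩) a p hp
    exact this.1
  intro H hprm hT hG
  have hT' : ∀ σ ∈ (fun σ => prodPerm (fun _ => (1 : Perm Y)) σ) '' T,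
      (⟨fun _ => 1, σ⟩ : Wr A (Z → Y)) ∈ H := by
    rintro _ ⟨σ, hσ, rfl⟩; exact hT σ hσ
  have hlift : ∀ p ∈ expWr B Q, ∃ h ∈ H, h.prm = p := by
    intro p hp
    rw [← hcl] at hp
    exact Wr.lift_all _ g (fun i => Pi.mulSingle (X i) (α i)) H hT' hG p hp
  have mover : ∀ (x x' : Z → Y) (q : Perm Z), ∃ b : Z → Perm Y, (∀ w, b w ∈ B) ∧
      prodPerm b q x = x' := by
    intro x x' q
    choose b hb1 hb2 using fun w => hB (x (q⁻¹ w)) (x' w)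
    exact ⟨b, hb1, funext fun w => hb2 w⟩
  have hR : ∀ x y, Wr.R H x y := by
    intro x y
    obtain ⟨b, hb, e⟩ := mover x y 1
    have := Wr.R_all _ g X α H hT' hG (prodPerm b 1) (by
      rw [hcl]; exact ⟨b, 1, hb, Q.one_mem, rfl⟩) x
    rwa [e] at this
  have hPhi : ∀ x, Wr.Phi H x = ⊤ := by
    intro x
    rw [eq_top_iff, ← hα, Subgroup.closure_le]
    rintro _ ⟨i, rfl⟩
    apply Wr.Phi_mono (hR (X i) x)
    exact ⟨_, H.pow_mem (hG i) (Function.minimalPeriod (g i) (X i)), by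
      rw [Wr.pow_prm]; exact Wr.pow_minPer _ _, Wr.pow_c_loop _ _ _⟩
  have hN : ∀ x, Wr.NF H x ∅ = ⊤ := by
    intro x
    have := N_top hA B Q hQ T hTQ hNC H hprm hlift hT u (hPhi _)
    rw [eq_top_iff, ← this]
    exact Wr.NF_mono (hR _ _)
  have mv : ∀ p ∈ expWr B Q, ∀ x y, Wr.NF H x {y} = Wr.NF H (p x) {p y} := by
    intro p hp x y
    obtain ⟨h, hh, rfl⟩ := hlift p hp
    apply le_antisymm (Wr.NF_move hN x y h hh)
    have := Wr.NF_move hN (h.prm x) (h.prm y) h⁻¹ (H.inv_mem hh)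
    simpa using this
  have hgood : ∀ x y, (∀ i, ∃ p ∈ expWr B Q, p x = X i ∧ ¬ (g i).SameCycle (X i) (p y) ∧
      ((g i) ^ (Function.minimalPeriod (g i) (X i))) (p y) = p y) → Wr.NF H x {y} = ⊤ := by
    intro x y h
    apply central_top hA α hα _ (fun a s hs => Wr.NF_normal _ (hN x) a s hs)
    intro i a
    obtain ⟨p, hp, e, h1, h2⟩ := h i
    rw [mv p hp, e]
    exact NF_comm _ _ _ _ (hG i) h1 h2 (hN _) a
  have hsingle : ∀ (x y : Z → Y) (w0 : Z), y w0 ≠ x w0 → (∀ w, w ≠ w0 → y w = x w) →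
      Wr.NF H x {y} = ⊤ := by
    intro x y w0 h1 h2
    apply hgood
    intro i
    obtain ⟨q, hq, e⟩ := hQ w0 (zs i)
    obtain ⟨b, hb, e2⟩ := mover x (X i) q
    have e' : q⁻¹ (zs i) = w0 := by rw [← e]; simp
    refine ⟨prodPerm b q, ⟨b, q, hb, hq, rfl⟩, e2, hX1 i _ ?_ ?_⟩
    · rw [← e2, prodPerm_apply, prodPerm_apply, e']
      exact fun h => h1 ((b _).injective h)
    · intro w hw
      rw [← e2, prodPerm_apply, prodPerm_apply, h2]
      intro h; apply hw; rw [← e, ← h]; simp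
  have h1 : ∀ x y : Z → Y, x ≠ y → Wr.NF H x {y} = ⊤ := by
    intro x y hxy
    by_cases hc : ∀ w, ∀ b ∈ B, b (x w) = x w → b (y w) = y w
    · obtain ⟨w0, hw0⟩ : ∃ w, x w ≠ y w := by
        by_contra! h; exact hxy (funext h)
      apply hgood
      intro i
      obtain ⟨q, hq, e⟩ := hQ w0 (zs i)
      obtain ⟨b, hb, e2⟩ := mover x (X i) q
      have e' : q⁻¹ (zs i) = w0 := by rw [← e]; simp
      refine ⟨prodPerm b q, ⟨b, q, hb, hq, rfl⟩, e2, hX2 i _ ?_ ?_⟩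
      · rw [← e2, prodPerm_apply, prodPerm_apply, e']
        exact fun h => hw0 ((b _).injective h).symm
      · intro w b' hb'
        rw [← e2, prodPerm_apply, prodPerm_apply]
        intro h
        have := hc (q⁻¹ w) ((b w)⁻¹ * b' * b w)
          (B.mul_mem (B.mul_mem (B.inv_mem (hb w)) hb') (hb w)) (by
            rw [Perm.mul_apply, Perm.mul_apply, h]; simp)
        rw [Perm.mul_apply, Perm.mul_apply, Perm.inv_eq_iff_eq] at this
        exact this
    · push Not at hc
      obtain ⟨w0, b, hb, hb1, hb2⟩ := hc
      obtain ⟨p, hp⟩ : ∃ p, p = prodPerm (Pi.mulSingle w0 b) (1 : Perm Z) := ⟨_, rfl⟩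
      have hpE : p ∈ expWr B Q := by
        refine ⟨_, _, ?_, Q.one_mem, hp⟩
        intro w
        by_cases h : w = w0
        · subst h; simpa using hb
        · rw [Pi.mulSingle_eq_of_ne h]; exact B.one_mem
      have hpx : p x = x := by
        funext w
        rw [hp, prodPerm_apply]
        by_cases h : w = w0
        · subst h; simpa using hb1
        · rw [Pi.mulSingle_eq_of_ne h]; simp
      have h2 : Wr.NF H (p y) {y} = ⊤ := by
        apply hsingle (p y) y w0
        · rw [hp, prodPerm_apply]; simpa using hb2.symm
        · intro w hw
          rw [hp, prodPerm_apply, Pi.mulSingle_eq_of_ne hw]; simp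
      have h3 := mv p hpE x y
      rw [hpx] at h3
      have h4 := Wr.NF_trans x y (p y) h3.le h2
      rw [h3]
      exact Wr.NF_swap _ _ h4 (hN _)
  intro a p hp
  obtain ⟨h, hh, rfl⟩ := hlift p hp
  have hb := Wr.full_of_NF hA hN h1 (fun i => a i * (h.lab i)⁻¹)
  have := H.mul_mem hb hh
  convert this using 1
  apply Wr.ext'
  · intro i; simp [Wr.mul_lab]
  · simp

end stepthm

section iterate

def ppHom {Y X : Type} : (X → Perm Y) →* Perm (X → Y) where
  toFun a := prodPerm a 1
  map_one' := prodPerm_one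
  map_mul' a b := (pp_base_mul a b).symm

def toPerm {Y X : Type} (S : Subgroup (Perm Y)) : Wr S X →* Perm (X → Y) where
  toFun g := prodPerm (fun i => (g.lab i : Perm Y)) g.prm
  map_one' := prodPerm_one
  map_mul' g h := by
    rw [prodPerm_mul]
    rfl

/-- trivial lift -/
def tl {Y X : Type} (σ : Perm X) : Perm (X → Y) := prodPerm (fun _ => 1) σ

def tlHom {Y X : Type} : Perm X →* Perm (X → Y) where
  toFun := tl
  map_one' := prodPerm_one
  map_mul' a b := by
    rw [tl, tl, tl, prodPerm_mul]; simp

theorem pp_split {Y X : Type} (a : X → Perm Y) (p : Perm X) :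
    prodPerm a p = ppHom a * tlHom p := by
  show _ = prodPerm a 1 * prodPerm (fun _ => 1) p
  rw [prodPerm_mul]; simp

/-- A subgroup containing one coordinate copy of `S`, and normalised by a transitive group,
contains the base group. -/
theorem base_le {Y X : Type} [Finite X] [DecidableEq X] (S : Subgroup (Perm Y))
    (P : Subgroup (Perm X)) (hP : ∀ x y : X, ∃ p ∈ P, p x = y) (W : Subgroup (Perm (X → Y)))
    (hn : ∀ q ∈ P, ∀ w ∈ W, tlHom q * w * (tlHom q)⁻¹ ∈ W) (x0 : X)
    (h0 : ∀ s ∈ S, ppHom (Pi.mulSingle x0 s) ∈ W) (a : X → Perm Y) (ha : ∀ x, a x ∈ S) :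
    ppHom a ∈ W := by
  have : a ∈ W.comap ppHom := by
    apply Subgroup.pi_mem_of_mulSingle_mem a
    intro x
    obtain ⟨p, hp, e⟩ := hP x0 x
    have := hn p hp _ (h0 (a x) (ha x))
    show ppHom _ ∈ W
    convert this using 1
    show _ = prodPerm (fun _ => 1) p * prodPerm _ 1 * (prodPerm (fun _ => 1) p)⁻¹
    rw [prodPerm_inv, prodPerm_mul, prodPerm_mul]
    show prodPerm _ 1 = _
    congr 1
    · funext i
      by_cases hi : i = x
      · subst hi
        have : p⁻¹ i = x0 := by rw [← e]; simp
        simp [this]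
      · have : p.symm i ≠ x0 := by
          intro h; apply hi; rw [← e, ← h]; simp
        simp [hi, this]
    · simp
  exact this

theorem nc_step {Y X : Type} [Finite X] (S : Subgroup (Perm Y)) (hS : commutator S = ⊤)
    (P : Subgroup (Perm X)) (hP : ∀ x y : X, ∃ p ∈ P, p x = y) (T : Set (Perm X))
    (τ : Perm X) (hτ : τ ∈ T) (x0 : X) (hx0 : τ x0 ≠ x0)
    (hNC : ∀ W : Subgroup (Perm X), T ⊆ W → (∀ q ∈ P, ∀ w ∈ W, q * w * q⁻¹ ∈ W) → P ≤ W)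
    (W : Subgroup (Perm (X → Y))) (hT : tlHom '' T ⊆ (W : Set (Perm (X → Y))))
    (hW : ∀ q ∈ expWr S P, ∀ w ∈ W, q * w * q⁻¹ ∈ W) : expWr S P ≤ W := by
  classical
  have hms : ∀ s ∈ S, ∀ x, ppHom (Pi.mulSingle x s : X → Perm Y) ∈ expWr S P := by
    intro s hs x
    refine ⟨_, 1, ?_, P.one_mem, rfl⟩
    intro w
    by_cases h : w = x
    · subst h; simpa using hs
    · rw [Pi.mulSingle_eq_of_ne h]; exact S.one_mem
  have htl : ∀ q ∈ P, tlHom q ∈ expWr S P := fun q hq =>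
    ⟨fun _ => 1, q, fun _ => S.one_mem, hq, rfl⟩
  have htau : tlHom τ ∈ W := hT ⟨τ, hτ, rfl⟩
  let M : Subgroup S := W.comap (ppHom.comp
    ((MonoidHom.mulSingle (fun _ : X => Perm Y) x0).comp S.subtype))
  have hM : M = ⊤ := by
    apply Wr.top_of_comm hS
    intro a b
    show ppHom (Pi.mulSingle x0 ((a * b * a⁻¹ * b⁻¹ : S) : Perm Y)) ∈ W
    -- first commutator
    obtain ⟨f, hf⟩ : ∃ f : X → Perm Y, f = Pi.mulSingle x0 (b : Perm Y) *
      (Pi.mulSingle (τ x0) (b : Perm Y))⁻¹ := ⟨_, rfl⟩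
    have h1 : ppHom f ∈ W := by
      have := W.mul_mem (hW _ (hms b b.2 x0) _ htau) (W.inv_mem htau)
      convert this using 1
      have e : tlHom τ * (ppHom (Pi.mulSingle x0 (b : Perm Y)))⁻¹ * (tlHom τ)⁻¹ =
          ppHom (Pi.mulSingle (τ x0) (b : Perm Y))⁻¹ := by
        rw [← map_inv]
        show prodPerm (fun _ => 1) τ * prodPerm _ 1 * (prodPerm (fun _ => 1) τ)⁻¹ = prodPerm _ 1
        rw [prodPerm_inv, prodPerm_mul, prodPerm_mul]
        congr 1
        · funext i
          by_cases hi : i = τ x0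
          · subst hi; simp
          · have : τ.symm i ≠ x0 := by
              intro h; apply hi; rw [← h]; simp
            simp [hi, this]
        · simp
      rw [mul_assoc, mul_assoc, ← mul_assoc (tlHom τ), e, ← map_mul, hf]
    have h2 := W.mul_mem (hW _ (hms a a.2 x0) _ h1) (W.inv_mem h1)
    convert h2 using 1
    rw [← map_inv, ← map_inv, ← map_mul, ← map_mul, ← map_mul]
    congr 1
    funext i
    rw [hf]
    by_cases hi : i = x0
    · subst hi
      simp [Pi.mulSingle_eq_of_ne hx0.symm, mul_assoc]
    · by_cases hj : i = τ x0
      · subst hj; simp [hi]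
      · simp [hi, hj]
  have hbase : ∀ a : X → Perm Y, (∀ x, a x ∈ S) → ppHom a ∈ W := by
    apply base_le S P hP W (fun q hq w hw => hW _ (htl q hq) w hw) x0
    intro s hs
    have : (⟨s, hs⟩ : S) ∈ M := by rw [hM]; trivial
    exact this
  have hPW : P ≤ W.comap tlHom := by
    apply hNC
    · intro σ hσ; exact hT ⟨σ, hσ, rfl⟩
    · intro q hq w hw
      show tlHom (q * w * q⁻¹) ∈ W
      rw [map_mul, map_mul, map_inv]
      exact hW _ (htl q hq) _ hw
  rintro _ ⟨a, p, ha, hp, rfl⟩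
  rw [pp_split]
  exact W.mul_mem (hbase a ha) (hPW hp)

structure Basic (P : PermGroup) (T : Set (Perm P.carrier)) : Prop where
  fin : Finite P.carrier
  ntr : Nontrivial P.carrier
  tr : ∀ x y : P.carrier, ∃ p ∈ P.grp, p x = y
  sub : T ⊆ P.grp
  mv : ∃ τ ∈ T, ∃ x, τ x ≠ x
  nc : ∀ W : Subgroup (Perm P.carrier), T ⊆ W →
    (∀ q ∈ P.grp, ∀ w ∈ W, q * w * q⁻¹ ∈ W) → P.grp ≤ W

structure Good (A : PermGroup) {ι : Type} (α : ι → A.grp) : Prop where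
  fin : Finite A.carrier
  tr : ∀ x y : A.carrier, ∃ p ∈ A.grp, p x = y
  pf : commutator A.grp = ⊤
  gen : Subgroup.closure (Set.range α) = ⊤
  ne : ∀ i, α i ≠ 1
  st : ∃ (u y0 : A.carrier) (b0 : Perm A.carrier), b0 ∈ A.grp ∧ b0 u = u ∧ b0 y0 ≠ y0

open Classical in
def Gen (A P : PermGroup) (T : Set (Perm P.carrier)) {ι : Type} (α : ι → A.grp) : Prop :=
  ∃ (g' : ι → Perm P.carrier) (z : ι → P.carrier), (∀ i, g' i ∈ P.grp) ∧
    (∀ i, ∃ w, ¬ (g' i).SameCycle (z i) w) ∧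
    Subgroup.closure (tlHom '' T ∪
      Set.range (fun i => prodPerm (Pi.mulSingle (z i) (α i : Perm A.carrier)) (g' i))) =
      expWr A.grp P.grp

theorem Basic_step {A P : PermGroup} {T : Set (Perm P.carrier)} {ι : Type} {α : ι → A.grp}
    (hA : Good A α) (hP : Basic P T) : Basic (ExpP A P) (tlHom '' T) := by
  obtain ⟨u, y0, b0, -, hu, hy0⟩ := hA.st
  have huy : u ≠ y0 := by rintro rfl; exact hy0 hu
  have := hP.fin
  have := hP.ntr
  have := hA.fin
  have : Nontrivial A.carrier := ⟨u, y0, huy⟩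
  obtain ⟨τ, hτ, x0, hx0⟩ := hP.mv
  refine ⟨?_, ?_, ?_, ?_, ?_, ?_⟩
  · show Finite (P.carrier → A.carrier); infer_instance
  · show Nontrivial (P.carrier → A.carrier); infer_instance
  · intro x y
    choose b hb1 hb2 using fun w : P.carrier => hA.tr (x w) (y w)
    exact ⟨prodPerm b 1, ⟨b, 1, hb1, P.grp.one_mem, rfl⟩, funext fun w => hb2 w⟩
  · rintro _ ⟨σ, hσ, rfl⟩
    exact ⟨fun _ => 1, σ, fun _ => A.grp.one_mem, hP.sub hσ, rfl⟩
  · classical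
    refine ⟨_, ⟨τ, hτ, rfl⟩, (Function.update (fun _ => u) x0 y0 : P.carrier → A.carrier), ?_⟩
    intro h
    have h' := congrFun h (τ x0)
    change prodPerm (fun _ => 1) τ (Function.update (fun _ => u) x0 y0) (τ x0) = _ at h'
    have e : τ⁻¹ (τ x0) = x0 := by simp
    rw [prodPerm_apply, e, Function.update_self,
      Function.update_of_ne hx0] at h'
    exact huy h'.symm
  · exact nc_step A.grp hA.pf P.grp hP.tr T τ hτ x0 hx0 hP.nc

theorem mulSingle_mem {A P : PermGroup} [DecidableEq P.carrier] (z : P.carrier) (s : A.grp)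
    (w : P.carrier) : (Pi.mulSingle z (s : Perm A.carrier) : P.carrier → Perm A.carrier) w ∈ A.grp := by
  by_cases h : w = z
  · subst h; simp
  · rw [Pi.mulSingle_eq_of_ne h]; exact A.grp.one_mem

theorem Gen_base {A P : PermGroup} {T : Set (Perm P.carrier)} {ι : Type} {α : ι → A.grp}
    (hA : Good A α) (hP : Basic P T) (hT : Subgroup.closure T = P.grp) : Gen A P T α := by
  classical
  have := hP.fin
  have := hP.ntr
  obtain ⟨z0, z1, hz⟩ := exists_pair_ne P.carrier
  refine ⟨fun _ => 1, fun _ => z0, fun _ => P.grp.one_mem, fun _ => ⟨z1, by simpa using hz⟩, ?_⟩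
  apply le_antisymm
  · rw [Subgroup.closure_le]
    rintro _ (⟨σ, hσ, rfl⟩ | ⟨i, rfl⟩)
    · exact ⟨fun _ => 1, σ, fun _ => A.grp.one_mem, hP.sub hσ, rfl⟩
    · exact ⟨_, 1, mulSingle_mem z0 (α i), P.grp.one_mem, rfl⟩
  · generalize hWd : Subgroup.closure (G := Perm (P.carrier → A.carrier)) _ = W
    have hsub := Subgroup.subset_closure (G := Perm (P.carrier → A.carrier)) (k := tlHom '' T ∪
      Set.range (fun i => prodPerm (Pi.mulSingle z0 (α i : Perm A.carrier)) (1 : Perm P.carrier)))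
    rw [hWd] at hsub
    have h1 : P.grp ≤ W.comap tlHom := by
      rw [← hT, Subgroup.closure_le]
      intro σ hσ
      exact hsub (Or.inl ⟨σ, hσ, rfl⟩)
    have h2 : (⊤ : Subgroup A.grp) ≤ W.comap (ppHom.comp
        ((MonoidHom.mulSingle (fun _ : P.carrier => Perm A.carrier) z0).comp A.grp.subtype)) := by
      rw [← hA.gen, Subgroup.closure_le]
      rintro _ ⟨i, rfl⟩
      exact hsub (Or.inr ⟨i, rfl⟩)
    have h3 := base_le A.grp P.grp hP.tr W (fun q hq w hw =>
      W.mul_mem (W.mul_mem (h1 hq) hw) (W.inv_mem (h1 hq))) z0 (fun s hs =>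
        h2 (Subgroup.mem_top (⟨s, hs⟩ : A.grp)))
    rintro _ ⟨a, p, ha, hp, rfl⟩
    rw [pp_split]
    exact W.mul_mem (h3 a ha) (h1 hp)

theorem Gen_step {A' A P : PermGroup} {T : Set (Perm P.carrier)} {ι : Type} {α : ι → A'.grp}
    {β : ι → A.grp} (hA' : Good A' α) (hA : Good A β) (hP : Basic P T) (h : Gen A P T β) :
    Gen A' (ExpP A P) (tlHom '' T) α := by
  classical
  obtain ⟨g', z, hg', hz, hcl⟩ := h
  have := hP.fin
  have := hP.ntr
  have := hA.fin
  obtain ⟨u, y0, b0, hb0, hu, hy0⟩ := hA.st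
  obtain ⟨x, hx1, hx2⟩ := step_thm hA'.pf α hA'.gen A.grp hA.tr P.grp hP.tr T hP.sub hP.nc g' hg'
    (fun i => (β i : Perm A.carrier)) (fun i => (β i).2) (fun i h => hA.ne i (Subtype.ext h)) z hz
    _ (fun i => rfl) hcl u y0 b0 hb0 hu hy0
  have hgE : ∀ i, prodPerm (Pi.mulSingle (z i) (β i : Perm A.carrier)) (g' i) ∈
      (ExpP A P).grp := fun i => ⟨_, _, mulSingle_mem (z i) (β i), hg' i, rfl⟩
  refine ⟨fun i => prodPerm (Pi.mulSingle (z i) (β i : Perm A.carrier)) (g' i), x, hgE, hx1, ?_⟩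
  apply le_antisymm
  · rw [Subgroup.closure_le]
    rintro _ (⟨_, ⟨σ, hσ, rfl⟩, rfl⟩ | ⟨i, rfl⟩)
    · exact ⟨fun _ => 1, _, fun _ => A'.grp.one_mem, (Basic_step hA hP).sub ⟨σ, hσ, rfl⟩, rfl⟩
    · exact ⟨_, _, mulSingle_mem (P := ExpP A P) (x i) (α i), hgE i, rfl⟩
  · generalize hWd : Subgroup.closure (G := Perm ((ExpP A P).carrier → A'.carrier)) _ = W
    have hsub := Subgroup.subset_closure (G := Perm ((ExpP A P).carrier → A'.carrier))
      (k := tlHom '' (tlHom '' T) ∪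
      Set.range (fun i => prodPerm (Pi.mulSingle (x i) (α i : Perm A'.carrier))
        (prodPerm (Pi.mulSingle (z i) (β i : Perm A.carrier)) (g' i))))
    rw [hWd] at hsub
    have := hx2 (W.comap (toPerm A'.grp)) (by
      intro σ hσ
      exact hsub (Or.inl ⟨_, ⟨σ, hσ, rfl⟩, rfl⟩)) (by
      intro i
      have := hsub (Or.inr ⟨i, rfl⟩)
      have e : (fun w => ((Pi.mulSingle (x i) (α i) : (P.carrier → A.carrier) → A'.grp) w :
          Perm A'.carrier)) = Pi.mulSingle (x i) (α i : Perm A'.carrier) := by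
        funext w
        by_cases hw : w = x i
        · subst hw; simp
        · simp [hw]
      show prodPerm (fun w => ((Pi.mulSingle (x i) (α i) : (P.carrier → A.carrier) → A'.grp) w :
          Perm A'.carrier)) _ ∈ W
      rw [e]
      exact this)
    rintro _ ⟨a, p, ha, hp, rfl⟩
    exact this (fun i => ⟨a i, ha i⟩) p hp

theorem bot_succ (S : ℕ → PermGroup) (k : ℕ) (T : Set (Perm (S 0).carrier)) :
    botMap S (k + 1) '' T = tlHom '' (botMap S k '' T) := by
  rw [Set.image_image]; rfl

theorem Basic_all (S : ℕ → PermGroup) {ι : Type} (α : ∀ k, ι → (S k).grp) (n : ℕ)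
    (hS : ∀ k, k ≤ n → Good (S k) (α k)) (T : Set (Perm (S 0).carrier))
    (hT : Subgroup.closure T = (S 0).grp) :
    ∀ k, k ≤ n → Basic (iterExpP S k) (botMap S k '' T) := by
  intro k
  induction k with
  | zero =>
    intro hk
    have h0 := hS 0 hk
    obtain ⟨u, y0, b0, hb, hu, hy0⟩ := h0.st
    have e : botMap S 0 '' T = T := Set.image_id T
    rw [e]
    refine ⟨h0.fin, ⟨u, y0, by rintro rfl; exact hy0 hu⟩, h0.tr, ?_, ?_, ?_⟩
    · show T ⊆ (S 0).grp
      rw [← hT]; exact Subgroup.subset_closure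
    · by_contra! hc
      have : (S 0).grp ≤ ⊥ := by
        rw [← hT, Subgroup.closure_le]
        intro τ hτ
        exact Equiv.ext (hc τ hτ)
      have hb1 : b0 = 1 := this hb
      apply hy0; rw [hb1]; rfl
    · intro W hW _
      have : Subgroup.closure T ≤ W := (Subgroup.closure_le (G := Perm (S 0).carrier) W).2 hW
      rw [hT] at this
      exact this
  | succ k ih =>
    intro hk
    rw [bot_succ]
    exact Basic_step (hS (k + 1) hk) (ih (by omega))

theorem Gen_all (S : ℕ → PermGroup) {ι : Type} (α : ∀ k, ι → (S k).grp) (n : ℕ)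
    (hS : ∀ k, k ≤ n → Good (S k) (α k)) (T : Set (Perm (S 0).carrier))
    (hT : Subgroup.closure T = (S 0).grp) :
    ∀ k, k + 1 ≤ n → Gen (S (k + 1)) (iterExpP S k) (botMap S k '' T) (α (k + 1)) := by
  intro k
  induction k with
  | zero =>
    intro hk
    apply Gen_base (hS 1 hk) (Basic_all S α n hS T hT 0 (by omega))
    have e : botMap S 0 '' T = T := Set.image_id T
    rw [e]; exact hT
  | succ k ih =>
    intro hk
    rw [bot_succ]
    exact Gen_step (hS (k + 2) hk) (hS (k + 1) (by omega))
      (Basic_all S α n hS T hT k (by omega)) (ih (by omega))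

theorem final (S : ℕ → PermGroup) {ι : Type} (α : ∀ k, ι → (S k).grp) (n : ℕ)
    (hS : ∀ k, k ≤ n → Good (S k) (α k)) (T : Set (Perm (S 0).carrier))
    (hT : Subgroup.closure T = (S 0).grp) :
    ∃ g : ι → Perm (iterExpP S n).carrier, (∀ i, g i ∈ (iterExpP S n).grp) ∧
      Subgroup.closure (botMap S n '' T ∪ Set.range g) = (iterExpP S n).grp := by
  classical
  cases n with
  | zero =>
    refine ⟨fun _ => 1, fun _ => Subgroup.one_mem _, ?_⟩
    have e : botMap S 0 '' T = T := Set.image_id T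
    rw [e]
    apply le_antisymm
    · rw [Subgroup.closure_le]
      rintro _ (h | ⟨i, rfl⟩)
      · show _ ∈ (S 0).grp
        rw [← hT]; exact Subgroup.subset_closure h
      · exact Subgroup.one_mem _
    · show (S 0).grp ≤ _
      rw [← hT]
      exact Subgroup.closure_mono Set.subset_union_left
  | succ k =>
    obtain ⟨g', z, hg', -, hcl⟩ := Gen_all S α (k + 1) hS T hT k le_rfl
    refine ⟨fun i => prodPerm (Pi.mulSingle (z i) (α (k + 1) i : Perm (S (k + 1)).carrier)) (g' i),
      fun i => ⟨_, _, mulSingle_mem (z i) (α (k + 1) i), hg' i, rfl⟩, ?_⟩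
    rw [bot_succ]
    exact hcl

end iterate

theorem choose_gen {G : Type} [Group G] (d : ℕ) (hG : ∃ b : G, b ≠ 1) (T : Finset G)
    (hc : T.card ≤ d) (hT : Subgroup.closure (T : Set G) = ⊤) :
    ∃ α : Fin d → G, Subgroup.closure (Set.range α) = ⊤ ∧ ∀ i, α i ≠ 1 := by
  classical
  have h1 : Subgroup.closure ((T.erase 1 : Finset G) : Set G) = ⊤ := by
    rw [eq_top_iff, ← hT, Subgroup.closure_le]
    intro t ht
    by_cases h : t = 1
    · rw [h]; exact Subgroup.one_mem _
    · exact Subgroup.subset_closure (by simpa [h] using ht)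
  have hne : Nonempty (T.erase 1 : Finset G) := by
    by_contra h
    rw [nonempty_subtype] at h
    push Not at h
    obtain ⟨b, hb⟩ := hG
    have hb' : b ∈ Subgroup.closure ((T.erase 1 : Finset G) : Set G) := by rw [h1]; trivial
    have : T.erase 1 = ∅ := Finset.eq_empty_of_forall_notMem h
    rw [this] at hb'
    simp at hb'
    exact hb hb'
  obtain ⟨f⟩ : Nonempty ((T.erase 1 : Finset G) ↪ Fin d) := by
    apply Function.Embedding.nonempty_of_card_le
    simp only [Fintype.card_coe, Fintype.card_fin]
    exact (Finset.card_erase_le).trans hc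
  obtain ⟨F, hs⟩ : ∃ F : Fin d → (T.erase 1 : Finset G), Function.Surjective F :=
    ⟨Function.invFun f, Function.invFun_surjective f.injective⟩
  refine ⟨fun i => (F i : G), ?_, ?_⟩
  · convert h1
    ext t
    constructor
    · rintro ⟨i, rfl⟩; exact (F i).2
    · intro ht
      obtain ⟨i, hi⟩ := hs ⟨t, ht⟩
      exact ⟨i, by simp only [hi]⟩
  · intro i
    exact (Finset.mem_erase.1 (F i).2).1

/-- **Lemma (d + d(S₁) generators for the finite iterated exponentiation).** -/
theorem iter_dgen (d n : ℕ) (hd : 0 < d) (m : ℕ → ℕ)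
    (S : ∀ k, Subgroup (Perm (Fin (m k))))
    (htrans : ∀ k, k ≤ n → ∀ x y : Fin (m k), ∃ σ ∈ S k, σ x = y)
    (hperf : ∀ k, k ≤ n → commutator (S k) = ⊤)
    (hgen : ∀ k, k ≤ n → ∃ T : Finset (S k), T.card ≤ d ∧
      Subgroup.closure (T : Set (S k)) = ⊤)
    (hstab : ∀ k, k ≤ n → ∃ i j : Fin (m k),
      {σ : Perm (Fin (m k)) | σ ∈ S k ∧ σ i = i} ≠
        {σ : Perm (Fin (m k)) | σ ∈ S k ∧ σ j = j}) :
    (∃ T : Finset ((iterExpP (fun k => ⟨Fin (m k), S k⟩) n).grp),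
      T.card ≤ d + minGens (S 0) ∧
      Subgroup.closure (T : Set ((iterExpP (fun k => ⟨Fin (m k), S k⟩) n).grp)) = ⊤) ∧
    ∀ T : Finset (S 0), Subgroup.closure (T : Set (S 0)) = ⊤ →
      ∃ g : Fin d → Perm ((iterExpP (fun k => ⟨Fin (m k), S k⟩) n).carrier),
        (∀ i, g i ∈ (iterExpP (fun k => ⟨Fin (m k), S k⟩) n).grp) ∧
        Subgroup.closure
          ((fun σ : (S 0) => botMap (fun k => ⟨Fin (m k), S k⟩) n (σ : Perm (Fin (m 0)))) '' T
            ∪ Set.range g) = (iterExpP (fun k => ⟨Fin (m k), S k⟩) n).grp := by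
  classical
  have hα : ∀ k, ∃ α : Fin d → S k, k ≤ n → Good ⟨Fin (m k), S k⟩ α := by
    intro k
    by_cases hk : k ≤ n
    · obtain ⟨T, hc, hT⟩ := hgen k hk
      obtain ⟨i, j, hij⟩ := hstab k hk
      have hst : ∃ (u y0 : Fin (m k)) (b0 : Perm (Fin (m k))), b0 ∈ S k ∧ b0 u = u ∧
          b0 y0 ≠ y0 := by
        by_contra! hc
        apply hij
        ext σ
        constructor
        · rintro ⟨h1, h2⟩; exact ⟨h1, hc i j σ h1 h2⟩
        · rintro ⟨h1, h2⟩; exact ⟨h1, hc j i σ h1 h2⟩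
      obtain ⟨α, h1, h2⟩ := choose_gen d (by
        obtain ⟨u, y0, b0, hb, -, hy⟩ := hst
        refine ⟨⟨b0, hb⟩, fun h => hy ?_⟩
        have : b0 = 1 := congrArg Subtype.val h
        rw [this]; rfl) T hc hT
      refine ⟨α, fun _ => ⟨?_, htrans k hk, hperf k hk, h1, h2, hst⟩⟩
      show Finite (Fin (m k))
      infer_instance
    · exact ⟨fun _ => 1, fun h => absurd h hk⟩
  choose α hα using hα
  have key : ∀ T : Finset (S 0), Subgroup.closure (T : Set (S 0)) = ⊤ →
      ∃ g : Fin d → Perm ((iterExpP (fun k => ⟨Fin (m k), S k⟩) n).carrier),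
        (∀ i, g i ∈ (iterExpP (fun k => ⟨Fin (m k), S k⟩) n).grp) ∧
        Subgroup.closure
          ((fun σ : (S 0) => botMap (fun k => ⟨Fin (m k), S k⟩) n (σ : Perm (Fin (m 0)))) '' T
            ∪ Set.range g) = (iterExpP (fun k => ⟨Fin (m k), S k⟩) n).grp := by
    intro T hT
    have hT' : Subgroup.closure ((S 0).subtype '' (T : Set (S 0))) = S 0 := by
      rw [← MonoidHom.map_closure, hT, ← MonoidHom.range_eq_map, Subgroup.range_subtype]
    obtain ⟨g, h1, h2⟩ := final (fun k => ⟨Fin (m k), S k⟩) α n hα _ hT'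
    refine ⟨g, h1, ?_⟩
    rw [Set.image_image] at h2
    exact h2
  refine ⟨?_, key⟩
  have hmem : minGens (S 0) ∈ {r | ∃ T : Finset (S 0), T.card = r ∧
      Subgroup.closure (T : Set (S 0)) = ⊤} := by
    apply Nat.sInf_mem
    obtain ⟨T, -, hT⟩ := hgen 0 (Nat.zero_le n)
    exact ⟨_, T, rfl, hT⟩
  obtain ⟨T0, hc0, hT0⟩ := hmem
  obtain ⟨g, h1, h2⟩ := key T0 hT0
  have hbm : ∀ σ ∈ T0, botMap (fun k => ⟨Fin (m k), S k⟩) n ((σ : S 0) : Perm (Fin (m 0))) ∈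
      (iterExpP (fun k => ⟨Fin (m k), S k⟩) n).grp := by
    intro σ hσ
    rw [← h2]
    exact Subgroup.subset_closure (Or.inl ⟨σ, hσ, rfl⟩)
  refine ⟨T0.attach.image (fun σ => ⟨_, hbm σ.1 σ.2⟩) ∪
    Finset.univ.image (fun i => ⟨g i, h1 i⟩), ?_, ?_⟩
  · refine (Finset.card_union_le _ _).trans ?_
    have a1 := Finset.card_image_le (s := T0.attach) (f := fun σ =>
      (⟨_, hbm σ.1 σ.2⟩ : (iterExpP (fun k => ⟨Fin (m k), S k⟩) n).grp))
    have a2 := Finset.card_image_le (s := (Finset.univ : Finset (Fin d))) (f := fun i =>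
      (⟨g i, h1 i⟩ : (iterExpP (fun k => ⟨Fin (m k), S k⟩) n).grp))
    rw [Finset.card_attach, hc0] at a1
    rw [Finset.card_univ, Fintype.card_fin] at a2
    omega
  · apply Subgroup.map_injective (Subgroup.subtype_injective
      (iterExpP (fun k => ⟨Fin (m k), S k⟩) n).grp)
    rw [MonoidHom.map_closure, ← MonoidHom.range_eq_map, Subgroup.range_subtype]
    refine Eq.trans ?_ h2
    congr 1
    ext p
    constructor
    · rintro ⟨q, hq, rfl⟩
      rw [Finset.mem_coe, Finset.mem_union, Finset.mem_image, Finset.mem_image] at hq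
      rcases hq with ⟨σ, -, rfl⟩ | ⟨i, -, rfl⟩
      · exact Or.inl ⟨σ.1, σ.2, rfl⟩
      · exact Or.inr ⟨i, rfl⟩
    · rintro (⟨σ, hσ, rfl⟩ | ⟨i, rfl⟩)
      · exact ⟨⟨_, hbm σ hσ⟩, Finset.mem_coe.2 (Finset.mem_union_left _
          (Finset.mem_image.2 ⟨⟨σ, hσ⟩, Finset.mem_attach _ _, rfl⟩)), rfl⟩
      · exact ⟨⟨g i, h1 i⟩, Finset.mem_coe.2 (Finset.mem_union_right _
          (Finset.mem_image.2 ⟨i, Finset.mem_univ _, rfl⟩)), rfl⟩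
end
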